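/- arXiv:1004.4093 — 6 statements merged into one kernel-verified Lean document; each statement's English description precedes it below -/
import Mathlib

section
/- Let φ, ψ : (ℝⁿ,0) → (ℝᵐ,0) be Nash map germs, and suppose there exists a map τ defined near 0 in ℝⁿ, real analytic at 0, with τ(0)=0 and invertible derivative at 0, such that φ∘τ = ψ on a neighborhood of 0. Then for every c ∈ ℕ there exists a Nash diffeomorphism germ τ̃ of (ℝⁿ,0) such that φ∘τ̃ = ψ on a neighborhood of 0 and all partial derivatives at 0 of τ̃ and of τ of order less than c coincide. -/
open scoped Topology

/-- A Nash map germ `f : (ℝⁿ,0) → (ℝᵐ,0)`: real analytic at `0`, `f 0 = 0`, and each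
component satisfies a nontrivial polynomial equation near `0`. -/
def NashGerm {n m : ℕ} (f : (Fin n → ℝ) → (Fin m → ℝ)) : Prop :=
  AnalyticAt ℝ f 0 ∧ f 0 = 0 ∧
    ∀ j : Fin m, ∃ P : MvPolynomial (Fin (n + 1)) ℝ, P ≠ 0 ∧
      ∀ᶠ x : Fin n → ℝ in 𝓝 0, MvPolynomial.eval (Fin.snoc x (f x j)) P = 0

/-- A Nash diffeomorphism germ of `(ℝⁿ,0)`: a Nash map germ whose derivative at `0` is a
linear isomorphism. -/
def NashDiffeoGerm {n : ℕ} (τ : (Fin n → ℝ) → (Fin n → ℝ)) : Prop :=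
  NashGerm τ ∧ ∃ D : (Fin n → ℝ) ≃L[ℝ] (Fin n → ℝ),
    HasFDerivAt τ (D : (Fin n → ℝ) →L[ℝ] (Fin n → ℝ)) 0

namespace NashArtin
open Polynomial

theorem eval₂_sub_mem {R S σ : Type*} [CommRing R] [CommRing S] (φ : R →+* S) (I : Ideal S)
    (x y : σ → S) (h : ∀ i, x i - y i ∈ I) (F : MvPolynomial σ R) :
    MvPolynomial.eval₂ φ x F - MvPolynomial.eval₂ φ y F ∈ I := by
  rw [← Ideal.Quotient.eq]
  have key : ∀ z : σ → S, Ideal.Quotient.mk I (MvPolynomial.eval₂ φ z F) =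
      MvPolynomial.eval₂ ((Ideal.Quotient.mk I).comp φ) (fun i => Ideal.Quotient.mk I (z i)) F := by
    intro z
    exact MvPolynomial.hom_eval₂ _ _ _ _
  rw [key, key]
  congr 1
  funext i
  exact Ideal.Quotient.eq.mpr (h i)

theorem peval₂_sub_mem {R S : Type*} [CommRing R] [CommRing S] (φ ψ : R →+* S) (I : Ideal S)
    (x y : S) (h : x - y ∈ I) (F : R[X]) (hφ : ∀ a, φ a - ψ a ∈ I) :
    eval₂ φ x F - eval₂ ψ y F ∈ I := by
  rw [← Ideal.Quotient.eq, hom_eval₂, hom_eval₂, Ideal.Quotient.eq.mpr h]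
  congr 1
  ext a
  exact Ideal.Quotient.eq.mpr (hφ a)

theorem pseudo {R : Type*} [CommRing R] (f : R[X]) (hf : 0 < f.natDegree) (F : R[X]) :
    ∃ (e : ℕ) (q r : R[X]), C (f.leadingCoeff) ^ e * F = q * f + r ∧
      r.natDegree < f.natDegree := by
  induction' hn : F.natDegree using Nat.strong_induction_on with n ih generalizing F
  by_cases h : F.natDegree < f.natDegree
  · exact ⟨0, 0, F, by simp, h⟩
  push Not at h
  set G := C f.leadingCoeff * F - C F.leadingCoeff * X ^ (F.natDegree - f.natDegree) * f with hG
  have hGd : G.natDegree < n := by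
    have hFn : 0 < F.natDegree := lt_of_lt_of_le hf h
    rw [← hn]
    have h1 : G.natDegree ≤ F.natDegree := by
      refine (natDegree_sub_le _ _).trans (max_le (natDegree_C_mul_le _ _) ?_)
      refine natDegree_mul_le.trans ?_
      have := natDegree_C_mul_X_pow_le F.leadingCoeff (F.natDegree - f.natDegree)
      omega
    refine lt_of_le_of_ne h1 fun heq => ?_
    have h2 : G.coeff F.natDegree = 0 := by
      rw [hG, coeff_sub, coeff_C_mul, mul_assoc, coeff_C_mul, coeff_X_pow_mul', if_pos (by omega)]
      have : F.natDegree - (F.natDegree - f.natDegree) = f.natDegree := by omega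
      rw [this]
      simp only [leadingCoeff]; ring
    have h3 : G = 0 := by
      rw [← leadingCoeff_eq_zero, leadingCoeff, heq, h2]
    rw [h3] at heq; simp at heq; omega
  obtain ⟨e, q, r, h1, h2⟩ := ih _ hGd G rfl
  refine ⟨e + 1, q + C f.leadingCoeff ^ e * (C F.leadingCoeff * X ^ (F.natDegree - f.natDegree)),
    r, ?_, h2⟩
  have : C f.leadingCoeff * F = G + C F.leadingCoeff * X ^ (F.natDegree - f.natDegree) * f := by
    rw [hG]; ring
  rw [pow_succ, mul_assoc, this, mul_add, h1]; ring

theorem min_rel {Q B : Type*} [CommRing Q] [CommRing B] [IsDomain B] [CharZero B] (β : Q →+* B)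
    (b : B) : (∀ F : Q[X], eval₂ β b F = 0 → ∀ k, β (F.coeff k) = 0) ∨
    ∃ f : Q[X], 0 < f.natDegree ∧ eval₂ β b f = 0 ∧ β f.leadingCoeff ≠ 0 ∧
      eval₂ β b (derivative f) ≠ 0 ∧
      ∀ F : Q[X], eval₂ β b F = 0 → ∃ (e : ℕ) (q r : Q[X]),
        C (f.leadingCoeff) ^ e * F = q * f + r ∧ ∀ k, β (r.coeff k) = 0 := by
  classical
  by_cases h : ∀ F : Q[X], eval₂ β b F = 0 → ∀ k, β (F.coeff k) = 0
  · exact Or.inl h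
  right
  have star : ∀ (n : ℕ) (F : Q[X]), F.natDegree = n → eval₂ β b F = 0 →
      (∃ k, β (F.coeff k) ≠ 0) →
      ∃ f : Q[X], eval₂ β b f = 0 ∧ β f.leadingCoeff ≠ 0 ∧ f.natDegree ≤ n := by
    intro n
    induction' n using Nat.strong_induction_on with n ih
    rintro F hn h0 ⟨k, hk⟩
    by_cases hl : β F.leadingCoeff = 0
    · have hF := F.eraseLead_add_C_mul_X_pow
      have h0' : eval₂ β b F.eraseLead = 0 := by
        rw [← hF, eval₂_add] at h0
        simpa [hl] using h0
      have hk' : k ≠ F.natDegree := by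
        rintro rfl; exact hk hl
      have hkn : F.natDegree ≠ 0 := by
        intro h; apply hk
        rw [coeff_eq_zero_of_natDegree_lt (by omega), map_zero]
      obtain ⟨f, h1, h2, h3⟩ := ih _ (by have := eraseLead_natDegree_le F; omega) F.eraseLead rfl
        h0' ⟨k, by rwa [eraseLead_coeff_of_ne _ hk']⟩
      exact ⟨f, h1, h2, h3.trans (by have := eraseLead_natDegree_le F; omega)⟩
    · exact ⟨F, h0, hl, hn.le⟩
  push Not at h
  obtain ⟨F0, hF0, k0, hk0⟩ := h
  have hex : ∃ d, ∃ f : Q[X], eval₂ β b f = 0 ∧ β f.leadingCoeff ≠ 0 ∧ f.natDegree ≤ d := by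
    obtain ⟨f, h1⟩ := star _ F0 rfl hF0 ⟨k0, hk0⟩
    exact ⟨_, f, h1⟩
  obtain ⟨f, hf0, hfl, hfd⟩ := Nat.find_spec hex
  have hmin : ∀ r : Q[X], eval₂ β b r = 0 → r.natDegree < f.natDegree → ∀ k, β (r.coeff k) = 0 := by
    intro r hr hd
    by_contra! hcon
    obtain ⟨g, h1, h2, h3⟩ := star _ r rfl hr hcon
    exact Nat.find_min hex (lt_of_lt_of_le (lt_of_le_of_lt h3 hd) hfd) ⟨g, h1, h2, le_rfl⟩
  have hpos : 0 < f.natDegree := by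
    rcases Nat.eq_zero_or_pos f.natDegree with h | h
    · exfalso
      rw [eq_C_of_natDegree_eq_zero h, eval₂_C] at hf0
      rw [leadingCoeff, h] at hfl
      exact hfl hf0
    · exact h
  refine ⟨f, hpos, hf0, hfl, ?_, ?_⟩
  · intro hd
    have := hmin _ hd (natDegree_derivative_lt hpos.ne') (f.natDegree - 1)
    rw [coeff_derivative, Nat.sub_add_cancel hpos, map_mul] at this
    rcases mul_eq_zero.mp this with h | h
    · exact hfl h
    · have : β (((f.natDegree - 1 : ℕ) : Q) + 1) = (((f.natDegree - 1 + 1 : ℕ)) : B) := by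
        simp
      rw [this, Nat.cast_eq_zero] at h
      omega
  · intro F hF
    obtain ⟨e, q, r, h1, h2⟩ := pseudo f hpos F
    refine ⟨e, q, r, h1, hmin r ?_ h2⟩
    have := congrArg (eval₂ β b) h1
    simpa [eval₂_mul, hF, hf0] using this.symm

/-- A ring with a Hensel-type property with respect to an ideal. -/
structure Hens {H : Type*} [CommRing H] (m : Ideal H) : Prop where
  unit : ∀ x ∈ m, IsUnit (1 + x)
  root : ∀ h ∈ m, ∀ q : H[X], ∃ z ∈ m, h + z + z ^ 2 * q.eval z = 0

theorem Hens.newton {H : Type*} [CommRing H] {m : Ideal H} (hm : Hens m) (J : Ideal H)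
    (hJ : J ≤ m) (g : H[X]) (x0 j : H) (hj : j ∈ J)
    (h : g.eval x0 = (derivative g).eval x0 ^ 2 * j) :
    ∃ x, x - x0 ∈ J ∧ g.eval x = 0 := by
  set u := (derivative g).eval x0
  set k := (divX (divX (taylor x0 g)))
  obtain ⟨z, hz, hz0⟩ := hm.root j (hJ hj) (k.comp (C u * X))
  have hzJ : z ∈ J := by
    obtain ⟨v, hv⟩ := hm.unit (z * (k.comp (C u * X)).eval z) (m.mul_mem_right _ hz)
    have : z * v = -j := by rw [hv]; linear_combination hz0
    have h2 : z = -j * ((v⁻¹ : Hˣ) : H) := by rw [← this, mul_assoc, Units.mul_inv, mul_one]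
    rw [h2]; exact J.mul_mem_right _ (J.neg_mem hj)
  refine ⟨x0 + u * z, by simpa using J.mul_mem_left u hzJ, ?_⟩
  have e1 : g.eval (x0 + u * z) = (taylor x0 g).eval (u * z) := by
    rw [taylor_eval, add_comm]
  have e2 := divX_mul_X_add (taylor x0 g)
  have e3 := divX_mul_X_add (divX (taylor x0 g))
  rw [e1, ← e2, ← e3]
  simp only [coeff_divX, eval_add, eval_mul, eval_X, eval_C, taylor_coeff_zero, zero_add,
    taylor_coeff_one, h]
  simp only [eval_comp, eval_mul, eval_C, eval_X] at hz0
  change (eval (u * z) k * (u * z) + u) * (u * z) + _ = 0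
  linear_combination u ^ 2 * hz0

theorem eval₂_finSucc {R S : Type*} [CommRing R] [CommRing S] (φ : R →+* S) {N : ℕ}
    (y : Fin (N + 1) → S) (F : MvPolynomial (Fin (N + 1)) R) :
    MvPolynomial.eval₂ φ y F = eval₂ (MvPolynomial.eval₂Hom φ (Fin.tail y)) (y 0)
      (MvPolynomial.finSuccEquiv R N F) := by
  have : MvPolynomial.eval₂Hom φ y = (eval₂RingHom (MvPolynomial.eval₂Hom φ (Fin.tail y)) (y 0)).comp
      (MvPolynomial.finSuccEquiv R N : MvPolynomial (Fin (N + 1)) R →+* _) := by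
    apply MvPolynomial.ringHom_ext
    · intro r
      simp [MvPolynomial.finSuccEquiv_apply]
    · intro i
      refine Fin.cases ?_ (fun i => ?_) i
      · simp [MvPolynomial.finSuccEquiv_X_zero]
      · simp [MvPolynomial.finSuccEquiv_X_succ, Fin.tail]
  exact DFunLike.congr_fun this F

theorem eval₂_zero_of_coeff {Q H : Type*} [CommRing Q] [CommRing H] (κ : Q →+* H) (x : H)
    (F : Q[X]) (h : ∀ k, κ (F.coeff k) = 0) : eval₂ κ x F = 0 := by
  rw [eval₂_eq_eval_map, show F.map κ = 0 from by ext k; simp [h], eval_zero]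

theorem tougeron {P B H : Type*} [CommRing P] [CommRing B] [IsDomain B] [CharZero B]
    [CommRing H] [IsDomain H] (φB : P →+* B) (φH : P →+* H) (m : Ideal H) (hm : Hens m)
    (hker : ∀ p, φB p = 0 → φH p = 0) :
    ∀ (N : ℕ) (y : Fin N → B), ∃ (E : Finset (MvPolynomial (Fin N) P))
      (δ : MvPolynomial (Fin N) P), (∀ f ∈ E, MvPolynomial.eval₂ φB y f = 0) ∧
      MvPolynomial.eval₂ φB y δ ≠ 0 ∧
      ∀ (J : Ideal H) (_ : J ≤ m) (w : Fin N → H), MvPolynomial.eval₂ φH w δ ≠ 0 →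
        (∀ f ∈ E, ∃ j ∈ J, MvPolynomial.eval₂ φH w f =
          (MvPolynomial.eval₂ φH w δ) ^ (2 * N) * j) →
        ∃ w' : Fin N → H, (∀ i, w' i - w i ∈ J) ∧
          ∀ F, MvPolynomial.eval₂ φB y F = 0 → MvPolynomial.eval₂ φH w' F = 0 := by
  classical
  intro N
  induction N with
  | zero =>
    intro y
    refine ⟨{}, 1, by simp, by simp, ?_⟩
    intro J hJ w h1 h2
    refine ⟨w, by simp, fun F hF => ?_⟩
    obtain ⟨p, rfl⟩ := MvPolynomial.C_surjective (Fin 0) F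
    simp only [MvPolynomial.eval₂_C] at hF ⊢
    exact hker p hF
  | succ N ih =>
    intro y
    obtain ⟨E0, δ0, hE0, hδ0, hI⟩ := ih (Fin.tail y)
    rcases min_rel (MvPolynomial.eval₂Hom φB (Fin.tail y)) (y 0) with htr | ⟨f, hfd, hf0, hfl, hf', hfm⟩
    · refine ⟨E0.image (MvPolynomial.rename Fin.succ), MvPolynomial.rename Fin.succ δ0, ?_, ?_, ?_⟩
      · simp only [Finset.mem_image]
        rintro _ ⟨f, hf, rfl⟩
        rw [MvPolynomial.eval₂_rename]; exact hE0 f hf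
      · rw [MvPolynomial.eval₂_rename]; exact hδ0
      · intro J hJ w hw hE
        rw [MvPolynomial.eval₂_rename] at hw
        obtain ⟨w1, hw1, hw2⟩ := hI J hJ (Fin.tail w) hw (by
          intro f hf
          obtain ⟨j, hj, hj'⟩ := hE _ (Finset.mem_image_of_mem _ hf)
          rw [MvPolynomial.eval₂_rename, MvPolynomial.eval₂_rename] at hj'
          refine ⟨_, J.mul_mem_left (MvPolynomial.eval₂ φH (Fin.tail w) δ0 ^ 2) hj, ?_⟩
          refine hj'.trans ?_
          change MvPolynomial.eval₂ φH (Fin.tail w) δ0 ^ _ * j = _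
          ring)
        refine ⟨Fin.cons (w 0) w1, ?_, ?_⟩
        · intro i
          refine Fin.cases (by simp) (fun i => ?_) i
          simpa [Fin.tail] using hw1 i
        · intro F hF
          rw [eval₂_finSucc] at hF ⊢
          rw [Fin.tail_cons]
          exact eval₂_zero_of_coeff _ _ _ fun k => hw2 _ (htr _ hF k)
    · set e := MvPolynomial.finSuccEquiv P N
      refine ⟨insert (e.symm f) (E0.image (MvPolynomial.rename Fin.succ)),
        MvPolynomial.rename Fin.succ (δ0 * f.leadingCoeff) * e.symm (derivative f), ?_, ?_, ?_⟩
      · simp only [Finset.mem_insert, Finset.mem_image]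
        rintro _ (rfl | ⟨f, hf, rfl⟩)
        · rw [eval₂_finSucc]; simpa [e] using hf0
        · rw [MvPolynomial.eval₂_rename]; exact hE0 f hf
      · rw [MvPolynomial.eval₂_mul, MvPolynomial.eval₂_rename, MvPolynomial.eval₂_mul,
          eval₂_finSucc]
        simp only [e, AlgEquiv.apply_symm_apply]
        exact mul_ne_zero (mul_ne_zero hδ0 hfl) hf'
      · intro J hJ w hw hE
        set d := MvPolynomial.eval₂ φH w
          (MvPolynomial.rename Fin.succ (δ0 * f.leadingCoeff) * e.symm (derivative f)) with hd
        rw [MvPolynomial.eval₂_mul, MvPolynomial.eval₂_rename, MvPolynomial.eval₂_mul,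
          eval₂_finSucc] at hd
        simp only [e, AlgEquiv.apply_symm_apply] at hd
        change d = MvPolynomial.eval₂ φH (Fin.tail w) δ0 *
          MvPolynomial.eval₂ φH (Fin.tail w) f.leadingCoeff * _ at hd
        set κ0 := MvPolynomial.eval₂Hom φH (Fin.tail w) with hκ0
        set D0 := MvPolynomial.eval₂ φH (Fin.tail w) δ0
        set l0 := MvPolynomial.eval₂ φH (Fin.tail w) f.leadingCoeff with hl0
        set u0 := eval₂ κ0 (w 0) (derivative f)
        have hD0 : D0 ≠ 0 := fun h => hw (by rw [hd, h]; ring)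
        have hl0' : l0 ≠ 0 := fun h => hw (by rw [hd, h]; ring)
        obtain ⟨w1, hw1, hw2⟩ := hI (Ideal.span {d ^ 2} * J) (Ideal.mul_le_right.trans hJ)
          (Fin.tail w) hD0 (by
          intro g hg
          obtain ⟨j, hj, hj'⟩ := hE _ (Finset.mem_insert_of_mem (Finset.mem_image_of_mem _ hg))
          rw [MvPolynomial.eval₂_rename] at hj'
          refine ⟨d ^ 2 * ((l0 * u0) ^ (2 * N) * j), Ideal.mem_span_singleton_mul.mpr
            ⟨_, J.mul_mem_left _ hj, rfl⟩, ?_⟩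
          refine hj'.trans ?_
          calc d ^ (2 * (N + 1)) * j = d ^ (2 * N) * d ^ 2 * j := by ring
            _ = (D0 * l0 * u0) ^ (2 * N) * d ^ 2 * j := by rw [← hd]
            _ = _ := by ring)
        set κ1 := MvPolynomial.eval₂Hom φH w1 with hκ1
        have hκ : ∀ a, κ1 a - κ0 a ∈ Ideal.span {d ^ 2} * J := fun a =>
          eval₂_sub_mem φH _ _ _ hw1 a
        have hJ'J : Ideal.span {d ^ 2} * J ≤ J := Ideal.mul_le_right
        obtain ⟨j3, hj3, hg0⟩ : ∃ j ∈ J, eval₂ κ1 (w 0) f = d ^ 2 * j := by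
          obtain ⟨j, hj, hj'⟩ := hE _ (Finset.mem_insert_self _ _)
          rw [eval₂_finSucc] at hj'
          simp only [e, AlgEquiv.apply_symm_apply] at hj'
          obtain ⟨j2, hj2, h2⟩ := Ideal.mem_span_singleton_mul.mp
            (peval₂_sub_mem κ1 κ0 _ (w 0) (w 0) (by simp) f hκ)
          refine ⟨j2 + d ^ (2 * N) * j, J.add_mem hj2 (J.mul_mem_left _ hj), ?_⟩
          have h3 : eval₂ κ0 (w 0) f = d ^ (2 * (N + 1)) * j := hj'
          rw [h3] at h2
          linear_combination -h2
        obtain ⟨j4, hj4, hu⟩ := Ideal.mem_span_singleton_mul.mp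
            (peval₂_sub_mem κ1 κ0 _ (w 0) (w 0) (by simp) (derivative f) hκ)
        obtain ⟨j5, hj5, hl⟩ := Ideal.mem_span_singleton_mul.mp (hκ f.leadingCoeff)
        obtain ⟨v, hv⟩ := hm.unit (D0 * l0 * d * j4) (m.mul_mem_left _ (hJ hj4))
        obtain ⟨v', hv'⟩ := hm.unit (D0 * u0 * d * j5) (m.mul_mem_left _ (hJ hj5))
        have hu' : eval₂ κ1 (w 0) (derivative f) = u0 * v := by
          rw [hv]
          have : eval₂ κ0 (w 0) (derivative f) = u0 := rfl
          rw [this] at hu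
          linear_combination -hu + d * j4 * hd
        have hl' : κ1 f.leadingCoeff = l0 * v' := by
          rw [hv']
          have : κ0 f.leadingCoeff = l0 := rfl
          rw [this] at hl
          linear_combination -hl + d * j5 * hd
        obtain ⟨x, hx, hx0⟩ := hm.newton J hJ (f.map κ1) (w 0)
          ((((v⁻¹ : Hˣ) : H)) ^ 2 * (D0 * l0) ^ 2 * j3) (J.mul_mem_left _ hj3) (by
            rw [derivative_map, eval_map, eval_map, hu', hg0, hd]
            have : (v : H) * ((v⁻¹ : Hˣ) : H) = 1 := v.mul_inv
            linear_combination
              (-(D0 * l0 * u0) ^ 2 * j3 * ((v : H) * ((v⁻¹ : Hˣ) : H) + 1)) * this)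
        refine ⟨Fin.cons x w1, ?_, ?_⟩
        · intro i
          refine Fin.cases (by simpa using hx) (fun i => ?_) i
          simpa [Fin.tail] using hJ'J (hw1 i)
        · intro F hF
          rw [eval₂_finSucc] at hF ⊢
          rw [Fin.tail_cons, Fin.cons_zero]
          obtain ⟨k, q, r, h1, h2⟩ := hfm _ hF
          have h3 := congrArg (eval₂ κ1 x) h1
          rw [eval_map] at hx0
          rw [eval₂_mul, eval₂_add, eval₂_mul, hx0, eval₂_pow, eval₂_C, hl',
            eval₂_zero_of_coeff κ1 x r (fun k => hw2 _ (h2 k)), mul_zero, add_zero] at h3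
          exact (mul_eq_zero.mp h3).resolve_left (pow_ne_zero _ (mul_ne_zero hl0' v'.ne_zero))

end NashArtin

namespace NashArtin
open Polynomial

theorem ap_fintype {P A : Type*} [CommRing P] [CommRing A] (j : P →+* A) (m : Ideal A)
    (Hs : Subring A)
    (AP : ∀ (N : ℕ) (a : Fin N → A) (c : ℕ), ∃ b : Fin N → A, (∀ i, b i ∈ Hs) ∧
      (∀ i, b i - a i ∈ m ^ c) ∧
      ∀ F : MvPolynomial (Fin N) P, MvPolynomial.eval₂ j a F = 0 → MvPolynomial.eval₂ j b F = 0)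
    {ι : Type} [Fintype ι] (a : ι → A) (c : ℕ) : ∃ b : ι → A, (∀ i, b i ∈ Hs) ∧
      (∀ i, b i - a i ∈ m ^ c) ∧
      ∀ F : MvPolynomial ι P, MvPolynomial.eval₂ j a F = 0 → MvPolynomial.eval₂ j b F = 0 := by
  classical
  let e := Fintype.equivFin ι
  obtain ⟨b, h1, h2, h3⟩ := AP _ (a ∘ e.symm) c
  refine ⟨b ∘ e, fun i => h1 _, fun i => by simpa using h2 (e i), fun F hF => ?_⟩
  have := h3 (MvPolynomial.rename e F) (by
    rw [MvPolynomial.eval₂_rename]; simpa [Function.comp_assoc] using hF)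
  rwa [MvPolynomial.eval₂_rename] at this

noncomputable def gen (P : Type*) [CommRing P] {κ : Type} (p : ℕ) (x : κ) :
    (MvPolynomial (κ × Fin p) P)[X] :=
  ∑ k : Fin p, C (MvPolynomial.X (x, k)) * X ^ (k : ℕ)

theorem gen_degree {P : Type*} [CommRing P] {κ : Type} (p : ℕ) (x : κ) :
    (gen P p x).degree < p := by
  exact degree_sum_fin_lt _

theorem gen_map {P A : Type*} [CommRing P] [CommRing A] (j : P →+* A) {κ : Type} (p : ℕ)
    (r : κ → A[X]) (x : κ) (hr : (r x).degree < p) :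
    (gen P p x).map (MvPolynomial.eval₂Hom j (fun i : κ × Fin p => (r i.1).coeff i.2)) = r x := by
  unfold gen
  rw [Polynomial.map_sum]
  simp only [Polynomial.map_mul, map_C, Polynomial.map_pow, map_X, MvPolynomial.coe_eval₂Hom,
    MvPolynomial.eval₂_X]
  rw [Fin.sum_univ_eq_sum_range (fun k => C ((r x).coeff k) * X ^ k) p]
  rcases Nat.eq_zero_or_pos p with rfl | hp
  · have : r x = 0 := by
      rw [← degree_eq_bot]
      simpa [Nat.WithBot.lt_zero_iff] using hr
    simp [this]
  · rw [← as_sum_range_C_mul_X_pow' (r x) ]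
    by_cases h0 : r x = 0
    · simpa [h0] using hp
    · rwa [natDegree_lt_iff_degree_lt h0]

theorem coe_mem_pow {A : Type*} [CommRing A] (mA : Ideal A) (mB : Ideal (PowerSeries A))
    (hC : ∀ a ∈ mA, PowerSeries.C a ∈ mB) (c : ℕ) (q : A[X]) (hq : ∀ k, q.coeff k ∈ mA ^ c) :
    (q : PowerSeries A) ∈ mB ^ c := by
  have key : ∀ a ∈ mA ^ c, PowerSeries.C a ∈ mB ^ c := by
    intro a ha
    have := Ideal.mem_map_of_mem (PowerSeries.C : A →+* PowerSeries A) ha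
    rw [Ideal.map_pow] at this
    refine Ideal.pow_right_mono ?_ c this
    rw [Ideal.map_le_iff_le_comap]
    exact fun a ha => hC a ha
  rw [q.as_sum_range_C_mul_X_pow]
  rw [← coeToPowerSeries.ringHom_apply, map_sum]
  refine Ideal.sum_mem _ fun k _ => ?_
  rw [map_mul]
  refine Ideal.mul_mem_right _ _ ?_
  rw [coeToPowerSeries.ringHom_apply, coe_C]
  exact key _ (hq k)

theorem map_sub_coeff_mem {Q A : Type*} [CommRing Q] [CommRing A] (I : Ideal A) (θ θ' : Q →+* A)
    (h : ∀ x, θ' x - θ x ∈ I) (q : Q[X]) (k : ℕ) : (q.map θ' - q.map θ).coeff k ∈ I := by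
  simpa using h _

theorem eval₂_mem_subring {P A ι : Type*} [CommRing P] [CommRing A] (j : P →+* A)
    (Hs : Subring A) (hj : ∀ p, j p ∈ Hs) (b : ι → A) (hb : ∀ i, b i ∈ Hs)
    (F : MvPolynomial ι P) : MvPolynomial.eval₂ j b F ∈ Hs := by
  induction F using MvPolynomial.induction_on with
  | C a => simpa using hj a
  | add p q hp hq => rw [MvPolynomial.eval₂_add]; exact Hs.add_mem hp hq
  | mul_X p i hp => rw [MvPolynomial.eval₂_mul, MvPolynomial.eval₂_X]; exact Hs.mul_mem hp (hb i)

theorem lemS {P P' A : Type*} [CommRing P] [CommRing P'] [CommRing A] [IsDomain A] [IsLocalRing A]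
    [IsAdicComplete (IsLocalRing.maximalIdeal A) A] (j : P →+* A)
    (Hs : Subring A) (hj : ∀ p, j p ∈ Hs)
    (AP : ∀ (N : ℕ) (a : Fin N → A) (c : ℕ), ∃ b : Fin N → A, (∀ i, b i ∈ Hs) ∧
      (∀ i, b i - a i ∈ IsLocalRing.maximalIdeal A ^ c) ∧
      ∀ F : MvPolynomial (Fin N) P, MvPolynomial.eval₂ j a F = 0 → MvPolynomial.eval₂ j b F = 0)
    (mB : Ideal (PowerSeries A))
    (hC : ∀ a ∈ IsLocalRing.maximalIdeal A, PowerSeries.C a ∈ mB)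
    (hU : ∀ u x, IsUnit u → x ∈ mB → IsUnit (u + x))
    (dens : ∀ (s : PowerSeries A) (c : ℕ), ∃ p : P[X], s - (p.map j : A[X]) ∈ mB ^ c)
    (π : P' →+* P[X]) {N : ℕ} (y : Fin N → PowerSeries A)
    (Φ : P' →+* PowerSeries A) (hΦ : ∀ x, Φ x = ((π x).map j : A[X]))
    (E : Finset (MvPolynomial (Fin N) P')) (hE : ∀ f ∈ E, MvPolynomial.eval₂ Φ y f = 0)
    (δ : MvPolynomial (Fin N) P')
    (hδ : (MvPolynomial.eval₂ Φ y δ).map (IsLocalRing.residue A) ≠ 0) (c : ℕ) (hc : 1 ≤ c) :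
    ∃ (w : Fin N → A[X]) (α v : A[X]) (h : MvPolynomial (Fin N) P' → A[X]),
      (∀ i k, (w i).coeff k ∈ Hs) ∧ (∀ k, α.coeff k ∈ Hs) ∧ (∀ k, v.coeff k ∈ Hs) ∧
      (∀ f k, (h f).coeff k ∈ Hs) ∧ α.Monic ∧ IsUnit (v : PowerSeries A) ∧
      (∀ f ∈ E, (h f : PowerSeries A) ∈ mB ^ c) ∧ (∀ i, (w i : PowerSeries A) - y i ∈ mB ^ c) ∧
      MvPolynomial.eval₂ Φ (fun i => (w i : PowerSeries A)) δ = (α : PowerSeries A) * v ∧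
      ∀ f ∈ E, MvPolynomial.eval₂ Φ (fun i => (w i : PowerSeries A)) f =
        (α : PowerSeries A) * h f := by
  classical
  set g := MvPolynomial.eval₂ Φ y δ with hg
  obtain ⟨a, u, hau⟩ := PowerSeries.exists_isWeierstrassFactorization hδ
  have hne : IsLocalRing.maximalIdeal A ≠ ⊤ := Ideal.IsPrime.ne_top'
  have hdist := hau.isDistinguishedAt
  set p := a.natDegree with hp
  have hdiv : PowerSeries.IsWeierstrassDivisorAt (a : PowerSeries A) (IsLocalRing.maximalIdeal A) :=
    hdist.isWeierstrassDivisorAt hne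
  have hord : p = (PowerSeries.map (Ideal.Quotient.mk (IsLocalRing.maximalIdeal A))
      (a : PowerSeries A)).order.toNat :=
    congr(ENat.toNat $(hdist.coe_natDegree_eq_order_map (a : PowerSeries A) 1
    (by rwa [PowerSeries.constantCoeff_one, ← Ideal.ne_top_iff_one]) (by simp)))
  have hdivision : ∀ i, ∃ (q : PowerSeries A) (r : A[X]), r.degree < p ∧ y i = a * q + r := by
    intro i
    have := hdiv.isWeierstrassDivisionAt_div_mod (y i)
    exact ⟨_, _, by rw [hord]; exact this.degree_lt, this.eq_mul_add⟩
  choose q r hr hqr using hdivision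
  choose q0 hq0 using fun i => dens (q i) c
  -- data
  let R : Option (Fin N) → A[X] := fun o => o.elim (a - X ^ p) r
  have hmon : a.Monic := hdist.monic
  have hRdeg : ∀ o, (R o).degree < p := by
    intro o
    cases o with
    | none =>
      show (a - X ^ p).degree < (p : WithBot ℕ)
      have : a.degree = p := degree_eq_natDegree hmon.ne_zero
      rw [← this]
      refine degree_sub_lt_left ?_ hmon.ne_zero ?_
      · rw [degree_X_pow, this]
      · rw [hmon.leadingCoeff, (monic_X_pow p).leadingCoeff]
    | some i => exact hr i
  let Q := MvPolynomial (Option (Fin N) × Fin p) P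
  let GA : Q[X] := X ^ p + gen P p none
  have hGA : GA.Monic := monic_X_pow_add (gen_degree p none)
  let GY : Fin N → Q[X] := fun i => GA * (q0 i).map MvPolynomial.C + gen P p (some i)
  let β : Option (Fin N) × Fin p → A := fun i => (R i.1).coeff i.2
  let θ : Q →+* A := MvPolynomial.eval₂Hom j β
  have hθA : GA.map θ = a := by
    show (X ^ p + gen P p none).map θ = a
    rw [Polynomial.map_add, gen_map j p R none (hRdeg none)]
    simp [R]
  have hθY : ∀ i, (GY i).map θ = a * (q0 i).map j + r i := by
    intro i
    show (GA * (q0 i).map MvPolynomial.C + gen P p (some i)).map θ = _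
    rw [Polynomial.map_add, gen_map j p R (some i) (hRdeg _), Polynomial.map_mul, hθA,
      Polynomial.map_map]
    congr 3
    ext x; exact MvPolynomial.eval₂_C _ _ _
  let ev : MvPolynomial (Fin N) P' → Q[X] := fun f =>
    MvPolynomial.eval₂ ((mapRingHom MvPolynomial.C).comp π) GY f
  have hev : ∀ (b : Option (Fin N) × Fin p → A) (f : MvPolynomial (Fin N) P'),
      (((ev f).map (MvPolynomial.eval₂Hom j b) : A[X]) : PowerSeries A) =
      MvPolynomial.eval₂ Φ (fun i => (((GY i).map (MvPolynomial.eval₂Hom j b) : A[X]) :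
        PowerSeries A)) f := by
    intro b f
    have h1 := MvPolynomial.eval₂_comp_left ((coeToPowerSeries.ringHom (R := A)).comp
      (mapRingHom (MvPolynomial.eval₂Hom j b))) ((mapRingHom MvPolynomial.C).comp π) GY f
    simp only [RingHom.comp_apply, coe_mapRingHom, coeToPowerSeries.ringHom_apply] at h1
    rw [h1]
    congr 1
    ext1 x
    simp only [RingHom.comp_apply, coe_mapRingHom, coeToPowerSeries.ringHom_apply, hΦ,
      Polynomial.map_map]
    congr 2
    ext x; simp
  -- approximate values at θ
  have hclose : ∀ f : MvPolynomial (Fin N) P', ∃ z ∈ mB ^ c,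
      (((ev f).map θ : A[X]) : PowerSeries A) = MvPolynomial.eval₂ Φ y f + a * z := by
    intro f
    have := eval₂_sub_mem Φ (Ideal.span {(a : PowerSeries A)} * mB ^ c)
      (fun i => (((GY i).map θ : A[X]) : PowerSeries A)) y (by
        intro i
        rw [hθY, hqr i]
        have : ((a * (q0 i).map j + r i : A[X]) : PowerSeries A) - (a * q i + r i) =
          a * (-(q i - ((q0 i).map j : A[X]))) := by
          push_cast; ring
        rw [this]
        exact Ideal.mul_mem_mul (Ideal.mem_span_singleton_self _) ((mB ^ c).neg_mem (hq0 i))) f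
    rw [Ideal.mem_span_singleton_mul] at this
    obtain ⟨z, hz, hz2⟩ := this
    refine ⟨z, hz, ?_⟩
    rw [hev, hz2]; ring
  -- division
  let dq : MvPolynomial (Fin N) P' → Q[X] := fun f => ev f /ₘ GA
  let dr : MvPolynomial (Fin N) P' → Q[X] := fun f => ev f %ₘ GA
  have hdd : ∀ f (θ' : Q →+* A), (ev f).map θ' = (GA.map θ') * (dq f).map θ' + (dr f).map θ' := by
    intro f θ'
    have := congrArg (Polynomial.map θ') (modByMonic_add_div (ev f) GA)
    rw [← this, Polynomial.map_add, Polynomial.map_mul]; ring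
  have hGAdeg : GA.degree = p ∨ Subsingleton Q := by
    rcases subsingleton_or_nontrivial Q with h | h
    · exact Or.inr h
    · left
      rw [degree_add_eq_left_of_degree_lt] <;> rw [degree_X_pow]
      exact gen_degree p none
  have hkey : ∀ f z, MvPolynomial.eval₂ Φ y f = a * z → ∃ z' ∈ mB ^ c,
      (dr f).map θ = 0 ∧ (((dq f).map θ : A[X]) : PowerSeries A) = z + z' := by
    intro f z hz
    obtain ⟨z', hz', h⟩ := hclose f
    refine ⟨z', hz', ?_⟩
    rw [hz, hdd f θ, hθA] at h
    have h2 : (a : PowerSeries A) * (z + z' - ((dq f).map θ : A[X])) = ((dr f).map θ : A[X]) := by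
      rw [Polynomial.coe_add, Polynomial.coe_mul] at h
      linear_combination -h
    have := hdiv.eq_zero_of_mul_eq (by
      rw [← hord]
      refine (degree_map_le).trans_lt ?_
      rcases hGAdeg with h | h
      · rw [← h]
        have : Nontrivial Q := by
          by_contra hn
          rw [not_nontrivial_iff_subsingleton] at hn
          rw [Subsingleton.elim GA 0] at h
          simp at h
        exact degree_modByMonic_lt _ hGA
      · rw [Subsingleton.elim (dr f) 0, degree_zero]
        exact WithBot.bot_lt_coe p) h2
    exact ⟨this.2, by linear_combination -this.1⟩
  have hkE : ∀ f ∈ E, (dr f).map θ = 0 ∧ (((dq f).map θ : A[X]) : PowerSeries A) ∈ mB ^ c := by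
    intro f hf
    obtain ⟨z', hz', h1, h2⟩ := hkey f 0 (by rw [hE f hf]; simp)
    exact ⟨h1, by rw [h2, zero_add]; exact hz'⟩
  obtain ⟨zδ, hzδ, hδr, hδq⟩ := hkey δ u hau.eq_mul
  obtain ⟨b, hbH, hbc, hbF⟩ := ap_fintype j (IsLocalRing.maximalIdeal A) Hs AP β c
  let θ' : Q →+* A := MvPolynomial.eval₂Hom j b
  have hθ' : ∀ x, θ' x - θ x ∈ IsLocalRing.maximalIdeal A ^ c := fun x =>
    eval₂_sub_mem j _ b β hbc x
  have hH : ∀ (s : Q[X]) k, (s.map θ').coeff k ∈ Hs := by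
    intro s k
    rw [coeff_map]
    exact eval₂_mem_subring j Hs hj b hbH _
  have hz : ∀ s : Q[X], s.map θ = 0 → s.map θ' = 0 := by
    intro s hs
    ext k
    have := congrArg (fun t => t.coeff k) hs
    simp only [coeff_map, coeff_zero] at this ⊢
    exact hbF _ this
  have hd : ∀ s : Q[X], ((s.map θ' : A[X]) : PowerSeries A) - (s.map θ : A[X]) ∈ mB ^ c := by
    intro s
    have := coe_mem_pow _ mB hC c (s.map θ' - s.map θ) (map_sub_coeff_mem _ θ θ' hθ' s)
    rwa [Polynomial.coe_sub] at this
  have hmul : ∀ f, (dr f).map θ = 0 → MvPolynomial.eval₂ Φ (fun i => (((GY i).map θ' : A[X]) :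
        PowerSeries A)) f = ((GA.map θ' : A[X]) : PowerSeries A) * ((dq f).map θ' : A[X]) := by
    intro f hf
    rw [← hev b f]
    show (((ev f).map θ' : A[X]) : PowerSeries A) = _
    rw [hdd f θ', hz _ hf, add_zero, Polynomial.coe_mul]
  refine ⟨fun i => (GY i).map θ', GA.map θ', (dq δ).map θ', fun f => (dq f).map θ',
    fun i k => hH _ k, fun k => hH _ k, fun k => hH _ k, fun f k => hH _ k, hGA.map _, ?_, ?_, ?_,
    hmul δ hδr, fun f hf => hmul f (hkE f hf).1⟩
  · have h1 := hd (dq δ)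
    rw [hδq] at h1
    have h2 := (mB ^ c).add_mem h1 hzδ
    have h3 := hU u _ hau.isUnit (Ideal.pow_le_self (by omega) h2)
    convert h3 using 1
    ring
  · intro f hf
    have := (mB ^ c).add_mem (hd (dq f)) (hkE f hf).2
    simpa using this
  · intro i
    have h1 := hd (GY i)
    have h2 : ((((GY i).map θ : A[X]) : PowerSeries A)) - y i ∈ mB ^ c := by
      rw [hθY, hqr i]
      have : ((a * (q0 i).map j + r i : A[X]) : PowerSeries A) - (a * q i + r i) =
          a * (-(q i - ((q0 i).map j : A[X]))) := by
          push_cast; ring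
      rw [this]
      exact Ideal.mul_mem_left _ _ ((mB ^ c).neg_mem (hq0 i))
    have := (mB ^ c).add_mem h1 h2
    simpa using this

end NashArtin

namespace NashArtin
open Polynomial Asymptotics
open scoped Topology

abbrev Sr (n : ℕ) := MvPowerSeries (Fin n) ℝ
abbrev Pr (n : ℕ) := MvPolynomial (Fin n) ℝ

instance (n : ℕ) : IsDomain (Sr n) := NoZeroDivisors.to_isDomain _

instance (n : ℕ) : CharZero (Sr n) :=
  ⟨fun a b h => by
    have := congrArg (MvPowerSeries.constantCoeff (σ := Fin n) (R := ℝ)) h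
    simpa using this⟩

noncomputable abbrev mI (n : ℕ) : Ideal (Sr n) := Ideal.span (Set.range MvPowerSeries.X)

noncomputable abbrev jc (n : ℕ) : Pr n →+* Sr n := MvPolynomial.coeToMvPowerSeries.ringHom

theorem coeff_of_mem_pow {n : ℕ} (k : ℕ) (s : Sr n) (hs : s ∈ mI n ^ k) (d : Fin n →₀ ℕ)
    (hd : d.degree < k) : MvPowerSeries.coeff d s = 0 := by
  classical
  induction k generalizing s d with
  | zero => omega
  | succ k ih =>
    rw [pow_succ] at hs
    induction hs using Submodule.mul_induction_on' with
    | mem_mul_mem a ha b hb =>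
      rw [MvPowerSeries.coeff_mul]
      refine Finset.sum_eq_zero fun x hx => ?_
      rw [Finset.HasAntidiagonal.mem_antidiagonal] at hx
      have hdeg : x.1.degree + x.2.degree = d.degree := by
        rw [← map_add, hx]
      by_cases h1 : x.1.degree < k
      · rw [ih a ha _ h1, zero_mul]
      · have h2 : x.2 = 0 := by
          rw [← Finsupp.degree_eq_zero_iff]; omega
        have h3 : MvPowerSeries.constantCoeff b = 0 := by
          have : mI n ≤ RingHom.ker (MvPowerSeries.constantCoeff (σ := Fin n) (R := ℝ)) := by
            rw [Ideal.span_le]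
            rintro _ ⟨i, rfl⟩
            simp [RingHom.mem_ker]
          exact this hb
        rw [h2, MvPowerSeries.coeff_zero_eq_constantCoeff_apply, h3, mul_zero]
    | add a _ b _ ha hb => rw [map_add, ha, hb, add_zero]

theorem coe_mem_mI_pow {n : ℕ} (k : ℕ) (p : Pr n) (hp : p ∈ MvPolynomial.idealOfVars (Fin n) ℝ ^ k) :
    jc n p ∈ mI n ^ k := by
  have := Ideal.mem_map_of_mem (jc n) hp
  rw [Ideal.map_pow] at this
  refine Ideal.pow_right_mono ?_ k this
  rw [MvPolynomial.idealOfVars, Ideal.map_span, Ideal.span_le]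
  rintro _ ⟨_, ⟨i, rfl⟩, rfl⟩
  refine Ideal.subset_span ⟨i, ?_⟩
  simp

theorem mI_pow_mono {n : ℕ} {k l : ℕ} (h : k ≤ l) : mI n ^ l ≤ mI n ^ k := Ideal.pow_le_pow_right h

theorem mI_limit {n : ℕ} (f : ℕ → Sr n) (hf : ∀ k l, k ≤ l → f k - f l ∈ mI n ^ k) :
    ∃ L, ∀ k, f k - L ∈ mI n ^ k := by
  obtain ⟨L, hL⟩ := IsPrecomplete.prec' (I := mI n) f (by
    intro k l h
    rw [SModEq.sub_mem]
    simpa using hf k l h)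
  refine ⟨L, fun k => ?_⟩
  have := hL k
  rw [SModEq.sub_mem] at this
  simpa using this

theorem sub_trunc_mem {n : ℕ} (s : Sr n) (k : ℕ) :
    s - jc n (MvPowerSeries.truncTotal k s) ∈ mI n ^ k := by
  obtain ⟨L, hL⟩ := mI_limit (fun k => jc n (MvPowerSeries.truncTotal k s)) (by
    intro k l h
    rw [← map_sub]
    refine coe_mem_mI_pow k _ ?_
    rw [MvPolynomial.mem_pow_idealOfVars_iff']
    intro d hd
    rw [MvPolynomial.coeff_sub, MvPowerSeries.coeff_truncTotal _ hd,
      MvPowerSeries.coeff_truncTotal _ (hd.trans_le h), sub_self])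
  have : L = s := by
    ext d
    have := coeff_of_mem_pow _ _ (hL (d.degree + 1)) d (by omega)
    rw [map_sub, MvPolynomial.coeToMvPowerSeries.ringHom_apply, MvPolynomial.coeff_coe,
      MvPowerSeries.coeff_truncTotal _ (by omega)] at this
    linarith
  have h := hL k
  rw [this] at h
  have := neg_mem h
  simpa using this

theorem mem_mI_pow_iff {n : ℕ} (s : Sr n) (k : ℕ) :
    s ∈ mI n ^ k ↔ ∀ d : Fin n →₀ ℕ, d.degree < k → MvPowerSeries.coeff d s = 0 := by
  refine ⟨fun h d => coeff_of_mem_pow k s h d, fun h => ?_⟩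
  have h1 := sub_trunc_mem s k
  have h2 : MvPowerSeries.truncTotal k s = 0 := by
    ext d
    by_cases hd : d.degree < k
    · rw [MvPowerSeries.coeff_truncTotal _ hd, h d hd]; simp
    · rw [MvPowerSeries.coeff_truncTotal_eq_zero _ (by omega)]; simp
  simpa [h2] using h1

theorem coe_mem_iff {n : ℕ} (p : Pr n) (k : ℕ) :
    jc n p ∈ mI n ^ k ↔ p ∈ MvPolynomial.idealOfVars (Fin n) ℝ ^ k := by
  rw [mem_mI_pow_iff, MvPolynomial.mem_pow_idealOfVars_iff']
  simp

theorem eq_zero_of_mem {n : ℕ} (s : Sr n) (h : ∀ k, s ∈ mI n ^ k) : s = 0 := by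
  ext d
  simpa using coeff_of_mem_pow _ s (h (d.degree + 1)) d (by omega)

theorem mem_mI_iff {n : ℕ} (s : Sr n) : s ∈ mI n ↔ MvPowerSeries.constantCoeff s = 0 := by
  have := mem_mI_pow_iff s 1
  rw [pow_one] at this
  rw [this]
  constructor
  · intro h
    simpa using h 0 (by simp)
  · intro h d hd
    have : d = 0 := by rw [← Finsupp.degree_eq_zero_iff]; omega
    subst this; simpa using h

theorem maximalIdeal_eq (n : ℕ) : IsLocalRing.maximalIdeal (Sr n) = mI n := by
  ext s
  rw [mem_mI_iff, IsLocalRing.mem_maximalIdeal, mem_nonunits_iff,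
    MvPowerSeries.isUnit_iff_constantCoeff, isUnit_iff_ne_zero, not_not]

/-- polynomials: restriction to lines -/
noncomputable def lineP {n : ℕ} (x : Fin n → ℝ) : Pr n →ₐ[ℝ] ℝ[X] :=
  MvPolynomial.aeval (fun i => C (x i) * X)

theorem lineP_eval {n : ℕ} (x : Fin n → ℝ) (t : ℝ) (p : Pr n) :
    (lineP x p).eval t = MvPolynomial.eval (t • x) p := by
  have h : ((Polynomial.aeval t).comp (lineP x)) = MvPolynomial.aeval (t • x) := by
    apply MvPolynomial.algHom_ext
    intro i
    rw [AlgHom.comp_apply, lineP, MvPolynomial.aeval_X, MvPolynomial.aeval_X, Pi.smul_apply,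
      map_mul, Polynomial.aeval_C, Polynomial.aeval_X, smul_eq_mul]
    exact mul_comm _ _
  have h2 := DFunLike.congr_fun h p
  rw [AlgHom.comp_apply, Polynomial.coe_aeval_eq_eval, MvPolynomial.aeval_eq_eval] at h2
  exact h2

theorem lineP_coeff {n : ℕ} (x : Fin n → ℝ) (k : ℕ) (p : Pr n) :
    (lineP x p).coeff k = MvPolynomial.eval x (MvPolynomial.homogeneousComponent k p) := by
  induction p using MvPolynomial.monomial_add_induction_on with
  | C a =>
    rw [← MvPolynomial.algebraMap_eq, AlgHom.commutes]
    rw [Polynomial.algebraMap_apply, coeff_C]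
    rcases Nat.eq_zero_or_pos k with rfl | hk
    · simp
    · rw [MvPolynomial.algebraMap_eq, ← MvPolynomial.monomial_zero',
       MvPolynomial.homogeneousComponent_of_mem (n := 0) (by
         rw [MvPolynomial.mem_homogeneousSubmodule]
         exact MvPolynomial.isHomogeneous_monomial _ (by simp))]
      simp [hk.ne']
  | monomial_add d a p _ _ ih =>
    rw [map_add, map_add, coeff_add, ih, map_add]
    congr 1
    rw [MvPolynomial.homogeneousComponent_of_mem (n := d.degree) (by
         rw [MvPolynomial.mem_homogeneousSubmodule]
         exact MvPolynomial.isHomogeneous_monomial _ rfl)]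
    have : lineP x (MvPolynomial.monomial d a) =
        C (MvPolynomial.eval x (MvPolynomial.monomial d a)) * X ^ d.degree := by
      rw [lineP, MvPolynomial.aeval_monomial, MvPolynomial.eval_monomial]
      simp only [mul_pow, Finsupp.prod_mul, C_mul, Polynomial.algebraMap_apply]
      rw [mul_assoc]
      congr 2
      · simp [Finsupp.prod, map_prod]
      · rw [Finsupp.prod, Finset.prod_pow_eq_pow_sum]; rfl
    rw [this, coeff_C_mul_X_pow]
    split_ifs <;> simp

theorem bigO_mono {n : ℕ} {k l : ℕ} (h : k ≤ l) :
    (fun x : Fin n → ℝ => ‖x‖ ^ l) =O[𝓝 0] (fun x => ‖x‖ ^ k) := by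
  refine IsBigO.of_bound 1 ?_
  have : ∀ᶠ x : Fin n → ℝ in 𝓝 0, ‖x‖ < 1 := by
    have := Metric.ball_mem_nhds (0 : Fin n → ℝ) one_pos
    filter_upwards [this] with x hx
    simpa using hx
  filter_upwards [this] with x hx
  rw [norm_pow, norm_pow, norm_norm, one_mul]
  exact pow_le_pow_of_le_one (norm_nonneg _) hx.le h

theorem eval_continuous {n : ℕ} (p : Pr n) : Continuous (fun x => MvPolynomial.eval x p) :=
  MvPolynomial.continuous_eval p

theorem cont_bigO_one {n : ℕ} {f : (Fin n → ℝ) → ℝ} (hf : ContinuousAt f 0) :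
    f =O[𝓝 0] (fun x => ‖x‖ ^ 0) := by
  simpa using hf.norm.isBoundedUnder_le.isBigO_one ℝ

theorem eval_bigO {n : ℕ} (k : ℕ) (p : Pr n) (hp : p ∈ MvPolynomial.idealOfVars (Fin n) ℝ ^ k) :
    (fun x => MvPolynomial.eval x p) =O[𝓝 0] (fun x => ‖x‖ ^ k) := by
  induction k generalizing p with
  | zero => exact cont_bigO_one (eval_continuous p).continuousAt
  | succ k ih =>
    rw [pow_succ] at hp
    induction hp using Submodule.mul_induction_on' with
    | mem_mul_mem a ha b hb =>
      have hb' : (fun x => MvPolynomial.eval x b) =O[𝓝 0] (fun x : Fin n → ℝ => ‖x‖) := by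
        rw [MvPolynomial.idealOfVars] at hb
        induction hb using Submodule.span_induction with
        | mem x h =>
          obtain ⟨i, rfl⟩ := h
          refine IsBigO.of_bound 1 (Filter.Eventually.of_forall fun x => ?_)
          simpa using norm_le_pi_norm x i
        | zero => simpa using isBigO_zero _ _
        | add x y _ _ hx hy => simpa using hx.add hy
        | smul a x _ hx =>
          have := (cont_bigO_one (eval_continuous a).continuousAt).mul hx
          simpa using this
      simpa [pow_succ] using (ih a ha).mul hb'
    | add a _ b _ ha hb => simpa using ha.add hb

theorem poly_coeff_of_bigO (q : ℝ[X]) (k : ℕ) (h : (fun t : ℝ => q.eval t) =O[𝓝 0] (fun t => t ^ k))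
    (i : ℕ) (hi : i < k) : q.coeff i = 0 := by
  by_cases hq : q = 0
  · simp [hq]
  suffices X ^ k ∣ q from X_pow_dvd_iff.mp this i hi
  obtain ⟨r, hr, hr0⟩ := exists_eq_pow_rootMultiplicity_mul_and_not_dvd q hq 0
  set e := rootMultiplicity 0 q
  simp only [C_0, sub_zero] at hr hr0
  by_cases hk : k ≤ e
  · exact (pow_dvd_pow X hk).trans (hr ▸ dvd_mul_right _ _)
  exfalso
  apply hr0
  rw [X_dvd_iff, coeff_zero_eq_eval_zero]
  have h1 : (fun t : ℝ => r.eval t) =O[𝓝[≠] 0] (fun t => t ^ (k - e)) := by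
    have h2 := (h.mono (nhdsWithin_le_nhds (s := {0}ᶜ))).mul
      (isBigO_refl (fun t : ℝ => (t ^ e)⁻¹) _)
    refine (h2.congr' ?_ ?_)
    · filter_upwards [self_mem_nhdsWithin] with t ht
      have : t ≠ 0 := ht
      have := congrArg (Polynomial.eval t) hr
      rw [this]; simp; field_simp
    · filter_upwards [self_mem_nhdsWithin] with t ht
      have : t ≠ 0 := ht
      have h3 : k = (k - e) + e := by omega
      conv_lhs => rw [h3, pow_add]
      field_simp
  have h3 : Filter.Tendsto (fun t : ℝ => t ^ (k - e)) (𝓝[≠] 0) (𝓝 0) := by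
    have : Filter.Tendsto (fun t : ℝ => t ^ (k - e)) (𝓝 0) (𝓝 (0 ^ (k - e))) :=
      (continuous_pow (k - e)).tendsto 0
    rw [zero_pow (by omega)] at this
    exact this.mono_left nhdsWithin_le_nhds
  have h4 := h1.trans_tendsto h3
  have h5 : Filter.Tendsto (fun t : ℝ => r.eval t) (𝓝[≠] 0) (𝓝 (r.eval 0)) :=
    (r.continuous.tendsto 0).mono_left nhdsWithin_le_nhds
  exact tendsto_nhds_unique h5 h4

theorem mem_of_bigO {n : ℕ} (k : ℕ) (p : Pr n)
    (h : (fun x => MvPolynomial.eval x p) =O[𝓝 0] (fun x => ‖x‖ ^ k)) :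
    p ∈ MvPolynomial.idealOfVars (Fin n) ℝ ^ k := by
  rw [MvPolynomial.mem_pow_idealOfVars_iff']
  intro d hd
  have key : MvPolynomial.homogeneousComponent d.degree p = 0 := by
    refine MvPolynomial.funext fun x => ?_
    rw [map_zero, ← lineP_coeff]
    refine poly_coeff_of_bigO _ k ?_ _ hd
    have ht : Filter.Tendsto (fun t : ℝ => t • x) (𝓝 0) (𝓝 0) := by
      have : Continuous (fun t : ℝ => t • x) := by fun_prop
      simpa using this.tendsto 0
    have h1 := h.comp_tendsto ht
    have h2 : (fun t : ℝ => ‖t • x‖ ^ k) =O[𝓝 0] (fun t => t ^ k) := by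
      refine IsBigO.of_bound (‖x‖ ^ k) (Filter.Eventually.of_forall fun t => ?_)
      rw [norm_smul, mul_pow, norm_mul]
      simp [mul_comm]
    refine (h1.trans h2).congr_left fun t => ?_
    rw [lineP_eval]; rfl
  have := congrArg (MvPolynomial.coeff d) key
  rwa [MvPolynomial.coeff_homogeneousComponent, if_pos rfl, MvPolynomial.coeff_zero] at this

end NashArtin

namespace NashArtin
open Polynomial Asymptotics
open scoped Topology

theorem diag_zero {n : ℕ} {F : Type*} [NormedAddCommGroup F] [NormedSpace ℝ F]
    {f : (Fin n → ℝ) → F} {p : FormalMultilinearSeries ℝ (Fin n → ℝ) F}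
    (hp : HasFPowerSeriesAt f p 0) (c : ℕ) (hf : f =O[𝓝 0] (fun x => ‖x‖ ^ c)) :
    ∀ k, k < c → ∀ y, p k (fun _ => y) = 0 := by
  intro k
  induction k using Nat.strong_induction_on with
  | _ k ih =>
    intro hk y
    have h1 := hp.isBigO_sub_partialSum_pow (k + 1)
    simp only [zero_add] at h1
    have h2 : (fun x => p.partialSum (k + 1) x) =O[𝓝 0] (fun x : Fin n → ℝ => ‖x‖ ^ (k + 1)) := by
      have := (hf.trans (bigO_mono (n := n) (show k + 1 ≤ c by omega))).sub h1
      simpa using this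
    have h3 : ∀ x, p.partialSum (k + 1) x = p k (fun _ => x) := by
      intro x
      rw [FormalMultilinearSeries.partialSum, Finset.sum_range_succ, Finset.sum_eq_zero, zero_add]
      intro j hj
      rw [Finset.mem_range] at hj
      exact ih j hj (by omega) x
    simp only [h3] at h2
    exact h2.continuousMultilinearMap_apply_eq_zero y

theorem eventually_zero {n : ℕ} {f : (Fin n → ℝ) → ℝ} (hf : AnalyticAt ℝ f 0)
    (h : ∀ c, f =O[𝓝 0] (fun x => ‖x‖ ^ c)) : ∀ᶠ x in 𝓝 0, f x = 0 := by
  obtain ⟨p, hp⟩ := hf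
  have h1 : ∀ k y, p k (fun _ => y) = 0 := fun k y => diag_zero hp (k + 1) (h _) k (by omega) y
  filter_upwards [hp.eventually_hasSum] with y hy
  simp only [h1, zero_add] at hy
  exact hy.unique hasSum_zero

/-- polynomial representing a multilinear map on the diagonal -/
theorem exists_poly_diag {n k : ℕ} (p : ContinuousMultilinearMap ℝ (fun _ : Fin k => Fin n → ℝ) ℝ) :
    ∃ q : Pr n, ∀ x, MvPolynomial.eval x q = p (fun _ => x) := by
  classical
  refine ⟨∑ r : Fin k → Fin n, MvPolynomial.C (p (fun i => Pi.single (r i) 1)) *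
    ∏ i, MvPolynomial.X (r i), fun x => ?_⟩
  have hx : x = ∑ i, x i • (Pi.single i 1 : Fin n → ℝ) := by
    ext j
    simp [Finset.sum_apply, Pi.single_apply]
  conv_rhs => rw [hx]
  rw [p.map_sum]
  simp only [map_sum, map_mul, MvPolynomial.eval_C, map_prod, MvPolynomial.eval_X]
  refine Finset.sum_congr rfl fun r _ => ?_
  rw [p.map_smul_univ (fun i => x (r i)) (fun i => Pi.single (r i) 1), smul_eq_mul, mul_comm]

def Rep {n : ℕ} (f : (Fin n → ℝ) → ℝ) (s : Sr n) : Prop :=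
  AnalyticAt ℝ f 0 ∧ ∀ k, ∃ p : Pr n, s - jc n p ∈ mI n ^ k ∧
    (fun x => f x - MvPolynomial.eval x p) =O[𝓝 0] (fun x => ‖x‖ ^ k)

theorem rep_poly {n : ℕ} (p : Pr n) : Rep (fun x => MvPolynomial.eval x p) (jc n p) := by
  refine ⟨?_, fun k => ⟨p, by simp, by simpa using isBigO_zero _ _⟩⟩
  have := AnalyticAt.aeval_mvPolynomial (𝕜 := ℝ) (f := fun (x : Fin n → ℝ) i => x i) (z := 0)
    (fun i => (ContinuousLinearMap.proj (R := ℝ) (φ := fun _ : Fin n => ℝ) i).analyticAt 0) p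
  simpa [MvPolynomial.aeval_eq_eval] using this

theorem Rep.congr {n : ℕ} {f g : (Fin n → ℝ) → ℝ} {s : Sr n} (h : Rep f s) (hfg : f =ᶠ[𝓝 0] g) :
    Rep g s := by
  refine ⟨h.1.congr hfg, fun k => ?_⟩
  obtain ⟨p, h1, h2⟩ := h.2 k
  refine ⟨p, h1, h2.congr' ?_ (Filter.EventuallyEq.refl _ _)⟩
  filter_upwards [hfg] with x hx
  rw [hx]

theorem Rep.mem_of_bigO {n : ℕ} {f : (Fin n → ℝ) → ℝ} {s : Sr n} (h : Rep f s) {k : ℕ}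
    (hf : f =O[𝓝 0] (fun x => ‖x‖ ^ k)) : s ∈ mI n ^ k := by
  obtain ⟨p, h1, h2⟩ := h.2 k
  have h3 : (fun x => MvPolynomial.eval x p) =O[𝓝 0] (fun x => ‖x‖ ^ k) := by
    simpa using hf.sub h2
  have h4 := coe_mem_mI_pow k p (NashArtin.mem_of_bigO k p h3)
  simpa using (mI n ^ k).add_mem h1 h4

theorem Rep.bigO {n : ℕ} {f : (Fin n → ℝ) → ℝ} {s : Sr n} (h : Rep f s) {k : ℕ}
    (hs : s ∈ mI n ^ k) : f =O[𝓝 0] (fun x => ‖x‖ ^ k) := by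
  obtain ⟨p, h1, h2⟩ := h.2 k
  have h3 : jc n p ∈ mI n ^ k := by
    simpa using (mI n ^ k).sub_mem hs h1
  have h4 := eval_bigO k p ((coe_mem_iff p k).mp h3)
  simpa using h2.add h4

theorem Rep.eq_zero {n : ℕ} {f : (Fin n → ℝ) → ℝ} {s : Sr n} (h : Rep f s)
    (hf : ∀ᶠ x in 𝓝 0, f x = 0) : s = 0 :=
  eq_zero_of_mem s fun k => h.mem_of_bigO (by
    have : f =ᶠ[𝓝 0] fun _ => (0 : ℝ) := hf
    exact this.trans_isBigO (isBigO_zero _ _))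

theorem Rep.eventually {n : ℕ} {f : (Fin n → ℝ) → ℝ} (h : Rep f 0) :
    ∀ᶠ x in 𝓝 0, f x = 0 :=
  eventually_zero h.1 fun _ => h.bigO (Submodule.zero_mem _)

theorem Rep.add {n : ℕ} {f g : (Fin n → ℝ) → ℝ} {s t : Sr n} (h : Rep f s) (h' : Rep g t) :
    Rep (f + g) (s + t) := by
  refine ⟨h.1.add h'.1, fun k => ?_⟩
  obtain ⟨p, h1, h2⟩ := h.2 k
  obtain ⟨q, h3, h4⟩ := h'.2 k
  refine ⟨p + q, ?_, ?_⟩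
  · convert (mI n ^ k).add_mem h1 h3 using 1
    rw [map_add]; ring
  · refine (h2.add h4).congr_left fun x => ?_
    simp; ring

theorem Rep.mul {n : ℕ} {f g : (Fin n → ℝ) → ℝ} {s t : Sr n} (h : Rep f s) (h' : Rep g t) :
    Rep (f * g) (s * t) := by
  refine ⟨h.1.mul h'.1, fun k => ?_⟩
  obtain ⟨p, h1, h2⟩ := h.2 k
  obtain ⟨q, h3, h4⟩ := h'.2 k
  refine ⟨p * q, ?_, ?_⟩
  · convert (mI n ^ k).add_mem (Ideal.mul_mem_right t _ h1) (Ideal.mul_mem_left _ (jc n p) h3)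
      using 1
    rw [map_mul]; ring
  · have h5 := h2.mul (cont_bigO_one h'.1.continuousAt)
    have h6 := (cont_bigO_one (eval_continuous p).continuousAt).mul h4
    simp only [pow_zero, mul_one, one_mul] at h5 h6
    refine (h5.add h6).congr_left fun x => ?_
    simp; ring

noncomputable def RepRing (n : ℕ) : Subring (((Fin n → ℝ) → ℝ) × Sr n) where
  carrier := {z | Rep z.1 z.2}
  mul_mem' := fun h h' => Rep.mul h h'
  add_mem' := fun h h' => Rep.add h h'
  one_mem' := by
    have := rep_poly (1 : Pr n)
    simp only [map_one] at this
    exact this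
  zero_mem' := by
    have := rep_poly (0 : Pr n)
    simp only [map_zero] at this
    exact this
  neg_mem' := by
    intro z hz
    have h := (rep_poly (-1 : Pr n)).mul hz
    simp only [map_neg, map_one] at h
    have h1 : ((fun _ : Fin n → ℝ => (-1 : ℝ)) * z.1) = -z.1 := by
      ext x; simp
    rw [h1, neg_one_mul] at h
    exact h

theorem Rep.sub {n : ℕ} {f g : (Fin n → ℝ) → ℝ} {s t : Sr n} (h : Rep f s) (h' : Rep g t) :
    Rep (f - g) (s - t) :=
  (RepRing n).sub_mem (x := (f, s)) (y := (g, t)) h h'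

theorem Rep.unique {n : ℕ} {f g : (Fin n → ℝ) → ℝ} {s t : Sr n} (h : Rep f s) (h' : Rep g t)
    (hfg : ∀ᶠ x in 𝓝 0, f x = g x) : s = t := by
  have := (h.sub h').eq_zero (by filter_upwards [hfg] with x hx; simp [hx])
  exact sub_eq_zero.mp this

theorem Rep.unique' {n : ℕ} {f g : (Fin n → ℝ) → ℝ} {s : Sr n} (h : Rep f s) (h' : Rep g s) :
    ∀ᶠ x in 𝓝 0, f x = g x := by
  have h1 := h.sub h'
  rw [sub_self] at h1
  filter_upwards [h1.eventually] with x hx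
  exact sub_eq_zero.mp hx

theorem rep_exists {n : ℕ} {f : (Fin n → ℝ) → ℝ} (hf : AnalyticAt ℝ f 0) : ∃ s, Rep f s := by
  have hf' := hf
  obtain ⟨p, hp⟩ := hf'
  choose π hπ using fun k => exists_poly_diag (p k)
  let q : ℕ → Pr n := fun k => ∑ j ∈ Finset.range k, π j
  have hq : ∀ k, (fun x => f x - MvPolynomial.eval x (q k)) =O[𝓝 0] (fun x => ‖x‖ ^ k) := by
    intro k
    have := hp.isBigO_sub_partialSum_pow k
    refine this.congr_left fun x => ?_
    simp [q, FormalMultilinearSeries.partialSum, hπ]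
  obtain ⟨L, hL⟩ := mI_limit (fun k => jc n (q k)) (by
    intro k l hkl
    rw [← map_sub]
    refine coe_mem_mI_pow k _ (NashArtin.mem_of_bigO k _ ?_)
    have := ((hq l).trans (bigO_mono hkl)).sub (hq k)
    refine this.congr_left fun x => ?_
    simp)
  refine ⟨L, hf, fun k => ⟨q k, ?_, hq k⟩⟩
  have := neg_mem (hL k)
  simpa using this

theorem hom_mem_pow {n : ℕ} {B : Type*} [CommRing B] [Algebra ℝ B] (Φ : Sr n →ₐ[ℝ] B) (I : Ideal B)
    (h : ∀ i, Φ (MvPowerSeries.X i) ∈ I) (k : ℕ) (s : Sr n) (hs : s ∈ mI n ^ k) : Φ s ∈ I ^ k := by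
  have := Ideal.mem_map_of_mem Φ hs
  rw [Ideal.map_pow] at this
  refine Ideal.pow_right_mono ?_ k this
  rw [Ideal.map_span, Ideal.span_le]
  rintro _ ⟨_, ⟨i, rfl⟩, rfl⟩
  exact h i

theorem hom_jc {n : ℕ} {B : Type*} [CommRing B] [Algebra ℝ B] (Φ : Sr n →ₐ[ℝ] B) (p : Pr n) :
    Φ (jc n p) = MvPolynomial.aeval (fun i => Φ (MvPowerSeries.X i)) p := by
  have : Φ.comp (MvPolynomial.coeToMvPowerSeries.algHom ℝ) =
      MvPolynomial.aeval (fun i => Φ (MvPowerSeries.X i)) := by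
    apply MvPolynomial.algHom_ext
    intro i
    simp
  have := DFunLike.congr_fun this p
  simpa using this

theorem Rep.comp {n n' : ℕ} (Φ : Sr n →ₐ[ℝ] Sr n') (ℓ : Fin n → Pr n')
    (hℓ : ∀ i, ℓ i ∈ MvPolynomial.idealOfVars (Fin n') ℝ)
    (hΦ : ∀ i, Φ (MvPowerSeries.X i) = jc n' (ℓ i)) {f : (Fin n → ℝ) → ℝ} {s : Sr n} (h : Rep f s) :
    Rep (fun x => f (fun i => MvPolynomial.eval x (ℓ i))) (Φ s) := by
  have hO : (fun x : Fin n' → ℝ => (fun i => MvPolynomial.eval x (ℓ i))) =O[𝓝 0]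
      (fun x => ‖x‖ ^ 1) := by
    rw [isBigO_pi]
    exact fun i => eval_bigO 1 _ (by simpa using hℓ i)
  have h0 : (fun i => MvPolynomial.eval (0 : Fin n' → ℝ) (ℓ i)) = 0 := by
    have := hO.eq_zero_imp
    have := this.self_of_nhds
    exact this (by simp)
  have ht : Filter.Tendsto (fun x : Fin n' → ℝ => (fun i => MvPolynomial.eval x (ℓ i)))
      (𝓝 0) (𝓝 0) := by
    have : Continuous (fun x : Fin n' → ℝ => (fun i => MvPolynomial.eval x (ℓ i))) :=
      continuous_pi fun i => eval_continuous _
    have := this.tendsto 0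
    rwa [h0] at this
  refine ⟨?_, fun k => ?_⟩
  · refine AnalyticAt.fun_comp ?_ ?_
    · rw [h0]; exact h.1
    · rw [analyticAt_pi_iff]
      exact fun i => (rep_poly (ℓ i)).1
  · obtain ⟨p, h1, h2⟩ := h.2 k
    refine ⟨MvPolynomial.aeval ℓ p, ?_, ?_⟩
    · have := hom_mem_pow Φ (mI n') (fun i => by
        rw [hΦ]; simpa using coe_mem_mI_pow 1 (ℓ i) (by simpa using hℓ i)) k _ h1
      rw [map_sub, hom_jc] at this
      convert this using 2
      have h5 : ((MvPolynomial.coeToMvPowerSeries.algHom ℝ (σ := Fin n') (R := ℝ))).comp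
          (MvPolynomial.aeval ℓ) = MvPolynomial.aeval (fun i => Φ (MvPowerSeries.X i)) := by
        apply MvPolynomial.algHom_ext
        intro i
        simp [hΦ]
      have := DFunLike.congr_fun h5 p
      simpa using this
    · have h3 := h2.comp_tendsto ht
      have h4 := h3.trans (hO.norm_left.pow k)
      simp only [pow_one] at h4
      refine h4.congr_left fun x => ?_
      simp only [Function.comp]
      congr 1
      rw [← MvPolynomial.aeval_eq_eval, ← MvPolynomial.aeval_eq_eval]
      have h5 : ((MvPolynomial.aeval x : Pr n' →ₐ[ℝ] ℝ)).comp (MvPolynomial.aeval ℓ) =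
        MvPolynomial.aeval (fun i => MvPolynomial.eval x (ℓ i)) := by
        apply MvPolynomial.algHom_ext
        intro i
        simp [MvPolynomial.aeval_eq_eval]
      exact (DFunLike.congr_fun h5 p).symm

end NashArtin

namespace NashArtin
open Polynomial Asymptotics
open scoped Topology

theorem algMap_eq (n : ℕ) : algebraMap (Pr n) (Sr n) = jc n := by
  refine RingHom.ext fun p => ?_
  rw [MvPowerSeries.algebraMap_apply']
  simp

noncomputable def Hr (n : ℕ) : Subring (Sr n) :=
  (RepRing n).map (RingHom.snd _ _) ⊓ (Subalgebra.algebraicClosure (Pr n) (Sr n)).toSubring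

theorem mem_Hr {n : ℕ} {s : Sr n} : s ∈ Hr n ↔ (∃ f, Rep f s) ∧ IsAlgebraic (Pr n) s := by
  unfold Hr
  rw [Subring.mem_inf]
  refine and_congr ?_ Iff.rfl
  constructor
  · rintro ⟨z, hz, rfl⟩
    exact ⟨z.1, hz⟩
  · rintro ⟨f, hf⟩
    exact ⟨(f, s), hf, rfl⟩

theorem jc_mem_Hr {n : ℕ} (p : Pr n) : jc n p ∈ Hr n := by
  rw [mem_Hr]
  refine ⟨⟨_, rep_poly p⟩, ?_⟩
  rw [← algMap_eq]
  exact isAlgebraic_algebraMap p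

theorem alg_trans {n : ℕ} (F : (Sr n)[X]) (hF : F ≠ 0) (hc : ∀ k, F.coeff k ∈ Hr n) (z : Sr n)
    (hz : F.eval z = 0) : IsAlgebraic (Pr n) z := by
  let K := Subalgebra.algebraicClosure (Pr n) (Sr n)
  have : F ∈ lifts (algebraMap K (Sr n)) := by
    rw [lifts_iff_coeff_lifts]
    intro k
    exact ⟨⟨F.coeff k, (mem_Hr.mp (hc k)).2⟩, rfl⟩
  rw [mem_lifts] at this
  obtain ⟨G, hG⟩ := this
  have hz' : IsAlgebraic K z := by
    refine ⟨G, ?_, ?_⟩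
    · rintro rfl
      exact hF (by rw [← hG]; simp)
    · rw [aeval_def, eval₂_eq_eval_map, hG, hz]
  exact IsAlgebraic.restrictScalars (Pr n) hz'

noncomputable def mH (n : ℕ) : Ideal (Hr n) := (mI n).comap (Hr n).subtype

theorem mem_mH {n : ℕ} (x : Hr n) : x ∈ mH n ↔ (x : Sr n) ∈ mI n := Iff.rfl

theorem unit_Hr {n : ℕ} (s : Sr n) (hs : s ∈ Hr n) (hu : IsUnit s) : ∃ t ∈ Hr n, s * t = 1 := by
  obtain ⟨⟨f, hf⟩, ha⟩ := mem_Hr.mp hs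
  have hf0 : f 0 ≠ 0 := by
    intro h0
    have h1 : f =O[𝓝 0] (fun x => ‖x‖ ^ 1) := by
      have h2 := hf.1.differentiableAt.hasFDerivAt.isBigO_sub
      simpa [h0] using h2.norm_right
    have := hf.mem_of_bigO h1
    rw [pow_one, ← maximalIdeal_eq] at this
    exact this hu
  obtain ⟨t, ht⟩ := rep_exists (hf.1.inv hf0)
  have h1 : s * t = 1 := by
    refine (hf.mul ht).unique (g := fun x => 1) (t := 1) (by simpa using rep_poly (1 : Pr n)) ?_
    filter_upwards [hf.1.continuousAt.eventually_ne hf0] with x hx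
    simp [hx]
  refine ⟨t, mem_Hr.mpr ⟨⟨_, ht⟩, ?_⟩, h1⟩
  refine alg_trans (C s * X - 1) ?_ ?_ t (by simp [h1])
  · intro h
    have := congrArg (Polynomial.eval 0) h
    simp at this
  · intro k
    rw [coeff_sub, coeff_C_mul, coeff_X, coeff_one]
    refine (Hr n).sub_mem ((Hr n).mul_mem hs ?_) ?_
    · split_ifs; exacts [one_mem _, zero_mem _]
    · split_ifs; exacts [one_mem _, zero_mem _]

theorem implicit_root {n : ℕ} (h : (Fin n → ℝ) → ℝ) (hh : AnalyticAt ℝ h 0) (h0 : h 0 = 0) (d : ℕ)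
    (g : ℕ → (Fin n → ℝ) → ℝ) (hg : ∀ i, AnalyticAt ℝ (g i) 0) :
    ∃ z : (Fin n → ℝ) → ℝ, AnalyticAt ℝ z 0 ∧ z 0 = 0 ∧
      ∀ᶠ x in 𝓝 0, h x + z x + z x ^ 2 * ∑ i ∈ Finset.range d, g i x * z x ^ i = 0 := by
  let F : (Fin n → ℝ) × ℝ → ℝ := fun u =>
    h u.1 + u.2 + u.2 ^ 2 * ∑ i ∈ Finset.range d, g i u.1 * u.2 ^ i
  have hF : AnalyticAt ℝ F 0 := by
    have h1 : AnalyticAt ℝ (fun u : (Fin n → ℝ) × ℝ => u.1) 0 := analyticAt_fst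
    have h2 : AnalyticAt ℝ (fun u : (Fin n → ℝ) × ℝ => u.2) 0 := analyticAt_snd
    refine ((AnalyticAt.fun_comp (f := fun u : (Fin n → ℝ) × ℝ => u.1) hh h1).fun_add h2).fun_add ((h2.fun_pow 2).fun_mul ?_)
    refine Finset.analyticAt_fun_sum _ fun i _ => ?_
    exact (AnalyticAt.fun_comp (f := fun u : (Fin n → ℝ) × ℝ => u.1) (hg i) h1).fun_mul (h2.fun_pow i)
  have cdf : ContDiffAt ℝ ⊤ F 0 := hF.contDiffAt
  have if₂ : (fderiv ℝ F 0 ∘L .inr ℝ (Fin n → ℝ) ℝ) = ContinuousLinearMap.id ℝ ℝ := by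
    have h1 : HasFDerivAt (fun z : ℝ => F (0, z)) (fderiv ℝ F 0 ∘L .inr ℝ (Fin n → ℝ) ℝ) 0 := by
      have h2 : HasFDerivAt (ContinuousLinearMap.inr ℝ (Fin n → ℝ) ℝ)
        (ContinuousLinearMap.inr ℝ (Fin n → ℝ) ℝ) 0 := ContinuousLinearMap.hasFDerivAt _
      have h3 : HasFDerivAt F (fderiv ℝ F 0) (ContinuousLinearMap.inr ℝ (Fin n → ℝ) ℝ 0) := by
        rw [map_zero]
        exact hF.differentiableAt.hasFDerivAt
      exact h3.comp 0 h2
    have h4 : HasFDerivAt (fun z : ℝ => F (0, z)) (ContinuousLinearMap.id ℝ ℝ) 0 := by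
      have h5 : HasDerivAt (fun z : ℝ => ∑ i ∈ Finset.range d, g i 0 * z ^ i)
          (deriv (fun z : ℝ => ∑ i ∈ Finset.range d, g i 0 * z ^ i) 0) 0 := by
        apply DifferentiableAt.hasDerivAt
        fun_prop
      have h6 := (((hasDerivAt_id (0 : ℝ)).const_add (h 0))).add
        (((hasDerivAt_id (0 : ℝ)).pow 2).mul h5)
      rw [hasFDerivAt_iff_hasDerivAt]
      convert! h6 using 1
      simp
    exact h1.unique h4
  have inv : (fderiv ℝ F 0 ∘L .inr ℝ (Fin n → ℝ) ℝ).IsInvertible := by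
    rw [if₂]; exact ⟨ContinuousLinearEquiv.refl ℝ ℝ, rfl⟩
  have ne : (⊤ : WithTop ℕ∞) ≠ 0 := by simp
  refine ⟨cdf.implicitFunction ne inv, ?_, cdf.implicitFunction_apply_self ne inv, ?_⟩
  · have := cdf.contDiffAt_implicitFunction ne inv
    exact ContDiffAt.analyticAt this
  · have := cdf.eventually_apply_implicitFunction ne inv
    filter_upwards [this] with x hx
    have hF0 : F 0 = 0 := by simp [F, h0]
    rw [hF0] at hx
    exact hx

theorem rep_zero_of_mem {n : ℕ} {f : (Fin n → ℝ) → ℝ} {s : Sr n} (hf : Rep f s) (hs : s ∈ mI n) :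
    f 0 = 0 := by
  have h1 := hf.bigO (k := 1) (by simpa using hs)
  exact h1.eq_zero_imp.self_of_nhds (by simp)

theorem mem_of_rep_zero {n : ℕ} {f : (Fin n → ℝ) → ℝ} {s : Sr n} (hf : Rep f s) (h0 : f 0 = 0) :
    s ∈ mI n := by
  have h1 : f =O[𝓝 0] (fun x => ‖x‖ ^ 1) := by
    have h2 := hf.1.differentiableAt.hasFDerivAt.isBigO_sub
    simpa [h0] using h2.norm_right
  simpa using hf.mem_of_bigO h1

theorem hens_Hr (n : ℕ) : Hens (mH n) where
  unit := by
    intro x hx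
    have hx' : (x : Sr n) ∈ mI n := hx
    have hu : IsUnit (1 + (x : Sr n)) := by
      rw [← maximalIdeal_eq] at hx'
      by_contra hn
      have := (IsLocalRing.maximalIdeal (Sr n)).sub_mem ((IsLocalRing.mem_maximalIdeal _).mpr hn) hx'
      rw [add_sub_cancel_right] at this
      exact this isUnit_one
    obtain ⟨t, ht, h⟩ := unit_Hr _ ((Hr n).add_mem (one_mem _) x.2) hu
    exact IsUnit.of_mul_eq_one ⟨t, ht⟩ (Subtype.ext h)
  root := by
    intro h hh q
    have hh' : (h : Sr n) ∈ mI n := hh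
    obtain ⟨fh, hfh⟩ := (mem_Hr.mp h.2).1
    choose g hg using fun i => (mem_Hr.mp (q.coeff i).2).1
    obtain ⟨z, hz, hz0, hze⟩ := implicit_root fh hfh.1 (rep_zero_of_mem hfh hh') (q.natDegree + 1) g
      (fun i => (hg i).1)
    obtain ⟨s, hs⟩ := rep_exists hz
    let G : ℕ → ((Fin n → ℝ) → ℝ) × Sr n := fun i => (g i, (q.coeff i : Sr n))
    let b : ((Fin n → ℝ) → ℝ) × Sr n := (z, s)
    let Z : ((Fin n → ℝ) → ℝ) × Sr n := (fh, (h : Sr n)) + b + b ^ 2 *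
      ∑ i ∈ Finset.range (q.natDegree + 1), G i * b ^ i
    have hb : b ∈ RepRing n := hs
    have hZ : Z ∈ RepRing n := by
      refine add_mem (add_mem hfh hb) (mul_mem (pow_mem hb 2) (sum_mem fun i _ => ?_))
      exact mul_mem (hg i) (pow_mem hb i)
    have hZ2 : Z.2 = 0 := by
      refine Rep.eq_zero (f := Z.1) hZ ?_
      filter_upwards [hze] with x hx
      simpa [Z, G, b, Prod.fst_sum] using hx
    have hZ3 : Z.2 = (h : Sr n) + s + s ^ 2 * (q.map (Hr n).subtype).eval s := by
      rw [eval_map, eval₂_eq_sum_range]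
      simp [Z, G, b, Prod.snd_sum]
    rw [hZ3] at hZ2
    have hsm : s ∈ mI n := mem_of_rep_zero hs hz0
    have hsH : s ∈ Hr n := by
      refine mem_Hr.mpr ⟨⟨_, hs⟩, ?_⟩
      refine alg_trans ((C h + X + X ^ 2 * q : (Hr n)[X]).map (Hr n).subtype) ?_ ?_ s ?_
      · intro h0
        have := congrArg (fun p => Polynomial.coeff p 1) h0
        simp [coeff_X_pow_mul'] at this
      · intro k
        rw [coeff_map]
        exact Subtype.prop _
      · simpa using hZ2
    refine ⟨⟨s, hsH⟩, hsm, ?_⟩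
    apply Subtype.ext
    have : ((q.eval (⟨s, hsH⟩ : Hr n) : Hr n) : Sr n) = (q.map (Hr n).subtype).eval s := by
      rw [eval_map]
      exact (eval₂_at_apply (Hr n).subtype (⟨s, hsH⟩ : Hr n)).symm
    push_cast
    rw [this]
    exact hZ2

end NashArtin

namespace NashArtin
open Polynomial Asymptotics
open scoped Topology

theorem idealOfVars_const {n : ℕ} (p : Pr n) (hp : p ∈ MvPolynomial.idealOfVars (Fin n) ℝ) :
    jc n p ∈ mI n := by
  simpa using coe_mem_mI_pow 1 p (by simpa using hp)

theorem exists_hom {n n' : ℕ} (ℓ : Fin n → Pr n')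
    (hℓ : ∀ i, ℓ i ∈ MvPolynomial.idealOfVars (Fin n') ℝ) :
    ∃ Φ : Sr n →ₐ[ℝ] Sr n', ∀ i, Φ (MvPowerSeries.X i) = jc n' (ℓ i) := by
  have hs : MvPowerSeries.HasSubst (fun i => jc n' (ℓ i)) :=
    MvPowerSeries.hasSubst_of_constantCoeff_zero fun i =>
      (mem_mI_iff _).mp (idealOfVars_const _ (hℓ i))
  exact ⟨MvPowerSeries.substAlgHom hs, fun i => MvPowerSeries.substAlgHom_X hs i⟩

theorem hom_ext' {n n' : ℕ} (Φ Ψ : Sr n →ₐ[ℝ] Sr n')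
    (h : ∀ i, Φ (MvPowerSeries.X i) = Ψ (MvPowerSeries.X i))
    (hm : ∀ i, Φ (MvPowerSeries.X i) ∈ mI n') : Φ = Ψ := by
  ext1 s
  rw [← sub_eq_zero]
  refine eq_zero_of_mem _ fun k => ?_
  have h1 := hom_mem_pow Φ (mI n') hm k _ (sub_trunc_mem s k)
  have h2 := hom_mem_pow Ψ (mI n') (fun i => h i ▸ hm i) k _ (sub_trunc_mem s k)
  have h3 := (mI n' ^ k).sub_mem h1 h2
  rw [map_sub, map_sub, hom_jc, hom_jc, funext h] at h3
  simpa using h3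

theorem X_mem_vars {n : ℕ} (i : Fin n) : (MvPolynomial.X i : Pr n) ∈
    MvPolynomial.idealOfVars (Fin n) ℝ := Ideal.subset_span ⟨i, rfl⟩

theorem coord (n : ℕ) (p : Fin (n + 1) → ℝ) (hp : p 0 ≠ 0) :
    ∃ E : Sr (n + 1) ≃ₐ[ℝ] PowerSeries (Sr n),
      E (MvPowerSeries.X 0) = PowerSeries.C (MvPowerSeries.C (p 0)) * PowerSeries.X ∧
      (∀ j : Fin n, E (MvPowerSeries.X j.succ) = PowerSeries.C (MvPowerSeries.X j) +
        PowerSeries.C (MvPowerSeries.C (p j.succ)) * PowerSeries.X) ∧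
      E.symm PowerSeries.X = jc (n + 1) (MvPolynomial.C (p 0)⁻¹ * MvPolynomial.X 0) ∧
      ∀ j : Fin n, E.symm (PowerSeries.C (MvPowerSeries.X j)) =
        jc (n + 1) (MvPolynomial.X j.succ - MvPolynomial.C (p j.succ * (p 0)⁻¹) *
          MvPolynomial.X 0) := by
  have hl : ∀ i : Fin (n + 1), (Fin.cons (MvPolynomial.C (p 0) * MvPolynomial.X 0)
      (fun j : Fin n => MvPolynomial.X j.succ + MvPolynomial.C (p j.succ) * MvPolynomial.X 0) :
      Fin (n + 1) → Pr (n + 1)) i ∈ MvPolynomial.idealOfVars (Fin (n + 1)) ℝ := by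
    intro i
    refine Fin.cases ?_ (fun j => ?_) i
    · exact Ideal.mul_mem_left _ _ (X_mem_vars _)
    · exact add_mem (X_mem_vars _) (Ideal.mul_mem_left _ _ (X_mem_vars _))
  have hu : ∀ i : Fin (n + 1), (Fin.cons (MvPolynomial.C (p 0)⁻¹ * MvPolynomial.X 0)
      (fun j : Fin n => MvPolynomial.X j.succ - MvPolynomial.C (p j.succ * (p 0)⁻¹) *
        MvPolynomial.X 0) :
      Fin (n + 1) → Pr (n + 1)) i ∈ MvPolynomial.idealOfVars (Fin (n + 1)) ℝ := by
    intro i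
    refine Fin.cases ?_ (fun j => ?_) i
    · exact Ideal.mul_mem_left _ _ (X_mem_vars _)
    · exact sub_mem (X_mem_vars _) (Ideal.mul_mem_left _ _ (X_mem_vars _))
  obtain ⟨lam, hlam⟩ := exists_hom _ hl
  obtain ⟨mu, hmu⟩ := exists_hom _ hu
  have cC : ∀ r : ℝ, (MvPowerSeries.C r : Sr (n + 1)) = algebraMap ℝ _ r := fun r => by
    rw [MvPowerSeries.algebraMap_apply]; rfl
  have hlam0 : lam (MvPowerSeries.X 0) = MvPowerSeries.C (p 0) * MvPowerSeries.X 0 := by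
    rw [hlam]; simp
  have hlamS : ∀ j : Fin n, lam (MvPowerSeries.X j.succ) = MvPowerSeries.X j.succ +
      MvPowerSeries.C (p j.succ) * MvPowerSeries.X 0 := fun j => by
    rw [hlam]; simp
  have hmu0 : mu (MvPowerSeries.X 0) = MvPowerSeries.C (p 0)⁻¹ * MvPowerSeries.X 0 := by
    rw [hmu]; simp
  have hmuS : ∀ j : Fin n, mu (MvPowerSeries.X j.succ) = MvPowerSeries.X j.succ -
      MvPowerSeries.C (p j.succ * (p 0)⁻¹) * MvPowerSeries.X 0 := fun j => by
    rw [hmu, Fin.cons_succ, map_sub, map_mul]; simp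
  have hCC : (MvPowerSeries.C (p 0) * MvPowerSeries.C (p 0)⁻¹ : Sr (n + 1)) = 1 := by
    rw [← map_mul, mul_inv_cancel₀ hp, map_one]
  have Xm : ∀ i : Fin (n + 1), (MvPowerSeries.X i : Sr (n + 1)) ∈ mI (n + 1) := fun i =>
    Ideal.subset_span ⟨i, rfl⟩
  have h1 : lam.comp mu = AlgHom.id ℝ _ := by
    have : ∀ i, (lam.comp mu) (MvPowerSeries.X i) = MvPowerSeries.X i := by
      intro i
      refine Fin.cases ?_ (fun j => ?_) i
      · rw [AlgHom.comp_apply, hmu0, map_mul, hlam0, cC, AlgHom.commutes, ← cC]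
        linear_combination MvPowerSeries.X 0 * hCC
      · rw [AlgHom.comp_apply, hmuS, map_sub, map_mul, hlam0, cC, AlgHom.commutes, ← cC, hlamS,
          map_mul]
        linear_combination - MvPowerSeries.C (p j.succ) * MvPowerSeries.X 0 * hCC
    exact hom_ext' _ _ (fun i => by rw [this]; rfl) (fun i => by rw [this]; exact Xm i)
  have h2 : mu.comp lam = AlgHom.id ℝ _ := by
    have : ∀ i, (mu.comp lam) (MvPowerSeries.X i) = MvPowerSeries.X i := by
      intro i
      refine Fin.cases ?_ (fun j => ?_) i
      · rw [AlgHom.comp_apply, hlam0, map_mul, hmu0, cC, AlgHom.commutes, ← cC]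
        linear_combination MvPowerSeries.X 0 * hCC
      · rw [AlgHom.comp_apply, hlamS, map_add, map_mul, hmu0, cC, AlgHom.commutes, ← cC, hmuS,
          map_mul]
        ring
    exact hom_ext' _ _ (fun i => by rw [this]; rfl) (fun i => by rw [this]; exact Xm i)
  let L : Sr (n + 1) ≃ₐ[ℝ] Sr (n + 1) := AlgEquiv.ofAlgHom lam mu h1 h2
  let FS := MvPowerSeries.finSuccEquiv ℝ n
  have hFC : ∀ r : ℝ, FS (MvPowerSeries.C r) = PowerSeries.C (MvPowerSeries.C r) :=
    fun r => MvPowerSeries.finSuccEquiv_C r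
  refine ⟨L.trans FS, ?_, fun j => ?_, ?_, fun j => ?_⟩
  · show FS (lam _) = _
    rw [hlam0, map_mul, hFC, MvPowerSeries.finSuccEquiv_X_zero]
  · show FS (lam _) = _
    rw [hlamS, map_add, map_mul, hFC, MvPowerSeries.finSuccEquiv_X_zero,
      MvPowerSeries.finSuccEquiv_X_succ]
  · show mu (FS.symm _) = _
    rw [← MvPowerSeries.finSuccEquiv_X_zero (R := ℝ) (n := n), AlgEquiv.symm_apply_apply, hmu]
    rfl
  · show mu (FS.symm _) = _
    rw [← MvPowerSeries.finSuccEquiv_X_succ (R := ℝ) (n := n), AlgEquiv.symm_apply_apply, hmu]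
    rfl

theorem exists_dir {n : ℕ} (g : Sr (n + 1)) (hg : g ≠ 0) : ∃ p : Fin (n + 1) → ℝ, p 0 ≠ 0 ∧
    ∀ χ : Sr (n + 1) →ₐ[ℝ] PowerSeries ℝ,
      (∀ i, χ (MvPowerSeries.X i) = PowerSeries.C (p i) * PowerSeries.X) → χ g ≠ 0 := by
  obtain ⟨d, hd⟩ : ∃ d, MvPowerSeries.coeff d g ≠ 0 := by
    by_contra hn
    push Not at hn
    exact hg (MvPowerSeries.ext fun d => by rw [hn d]; simp)
  let q := MvPowerSeries.truncTotal (d.degree + 1) g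
  let hk := MvPolynomial.homogeneousComponent d.degree q
  have hk0 : hk ≠ 0 := by
    intro h
    have := congrArg (MvPolynomial.coeff d) h
    rw [MvPolynomial.coeff_homogeneousComponent, if_pos rfl,
      MvPowerSeries.coeff_truncTotal _ (by omega)] at this
    exact hd (by simpa using this)
  have h2 : MvPolynomial.X 0 * hk ≠ 0 := mul_ne_zero (MvPolynomial.X_ne_zero _) hk0
  obtain ⟨p, hp⟩ : ∃ p, MvPolynomial.eval p (MvPolynomial.X 0 * hk) ≠ 0 := by
    by_contra hn
    push Not at hn
    exact h2 (MvPolynomial.funext fun x => by rw [hn x]; simp)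
  rw [map_mul, MvPolynomial.eval_X] at hp
  refine ⟨p, left_ne_zero_of_mul hp, fun χ hχ h0 => right_ne_zero_of_mul hp ?_⟩
  have h3 := hom_mem_pow χ (Ideal.span {PowerSeries.X}) (fun i => by
    rw [hχ]; exact Ideal.mul_mem_left _ _ (Ideal.mem_span_singleton_self _)) (d.degree + 1) _
    (sub_trunc_mem g (d.degree + 1))
  rw [map_sub, h0, zero_sub, hom_jc, Ideal.span_singleton_pow, Ideal.mem_span_singleton, dvd_neg,
    PowerSeries.X_pow_dvd_iff] at h3
  have h4 := h3 d.degree (by omega)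
  have h5 : (coeToPowerSeries.algHom ℝ).comp (lineP p) =
      MvPolynomial.aeval (fun i => χ (MvPowerSeries.X i)) := by
    apply MvPolynomial.algHom_ext
    intro i
    rw [AlgHom.comp_apply, lineP, MvPolynomial.aeval_X, MvPolynomial.aeval_X, hχ]
    simp
  rw [← h5, AlgHom.comp_apply] at h4
  rw [← lineP_coeff]
  simpa using h4

end NashArtin

namespace NashArtin
open Polynomial Asymptotics
open scoped Topology

theorem jc_inj (n : ℕ) : Function.Injective (jc n) :=
  MvPolynomial.coe_injective _ _

theorem Psi_mem {n n' : ℕ} (Ψ : Sr n →ₐ[ℝ] Sr n') (ℓ : Fin n → Pr n')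
    (hℓ : ∀ i, ℓ i ∈ MvPolynomial.idealOfVars (Fin n') ℝ)
    (hΨ : ∀ i, Ψ (MvPowerSeries.X i) = jc n' (ℓ i)) (hinj : Function.Injective Ψ)
    (s : Sr n) (hs : s ∈ Hr n) : Ψ s ∈ Hr n' := by
  obtain ⟨⟨f, hf⟩, F, hF, hFs⟩ := mem_Hr.mp hs
  rw [mem_Hr]
  refine ⟨⟨_, hf.comp Ψ ℓ hℓ hΨ⟩, ?_⟩
  have hi : Function.Injective ((Ψ : Sr n →+* Sr n').comp (jc n)) := by
    rw [RingHom.coe_comp]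
    exact hinj.comp (jc_inj n)
  refine alg_trans (F.map ((Ψ : Sr n →+* Sr n').comp (jc n))) ?_ ?_ _ ?_
  · rwa [Ne, Polynomial.map_eq_zero_iff hi]
  · intro k
    rw [coeff_map, RingHom.comp_apply]
    have h5 : (Ψ : Sr n →+* Sr n') (jc n (F.coeff k)) =
        jc n' (MvPolynomial.aeval ℓ (F.coeff k)) := by
      have h5 : ((MvPolynomial.coeToMvPowerSeries.algHom ℝ (σ := Fin n') (R := ℝ))).comp
          (MvPolynomial.aeval ℓ) = MvPolynomial.aeval (fun i => Ψ (MvPowerSeries.X i)) := by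
        apply MvPolynomial.algHom_ext
        intro i
        simp [hΨ]
      have h6 := hom_jc Ψ (F.coeff k)
      rw [← h5] at h6
      simpa using h6
    rw [h5]
    exact jc_mem_Hr _
  · rw [eval_map]
    have := congrArg (Ψ : Sr n →+* Sr n') hFs
    rw [aeval_def, algMap_eq, hom_eval₂, map_zero] at this
    exact this

theorem AP_zero (N : ℕ) (a : Fin N → Sr 0) (c : ℕ) : ∃ b : Fin N → Sr 0, (∀ i, b i ∈ Hr 0) ∧
    (∀ i, b i - a i ∈ mI 0 ^ c) ∧ ∀ F : MvPolynomial (Fin N) (Pr 0),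
      MvPolynomial.eval₂ (jc 0) a F = 0 → MvPolynomial.eval₂ (jc 0) b F = 0 := by
  refine ⟨a, fun i => ?_, fun i => by simp, fun F h => h⟩
  have : a i = jc 0 (MvPolynomial.C (MvPowerSeries.constantCoeff (a i))) := by
    have h := (mem_mI_iff (n := 0) (a i - jc 0 (MvPolynomial.C
      (MvPowerSeries.constantCoeff (a i))))).mpr (by simp)
    have h0 : mI 0 = ⊥ := by simp [mI]
    rw [h0] at h
    exact sub_eq_zero.mp (by simpa using h)
  rw [this]
  exact jc_mem_Hr _

theorem AP_succ (n : ℕ)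
    (ih : ∀ (N : ℕ) (a : Fin N → Sr n) (c : ℕ), ∃ b : Fin N → Sr n, (∀ i, b i ∈ Hr n) ∧
    (∀ i, b i - a i ∈ mI n ^ c) ∧ ∀ F : MvPolynomial (Fin N) (Pr n),
      MvPolynomial.eval₂ (jc n) a F = 0 → MvPolynomial.eval₂ (jc n) b F = 0)
    (N : ℕ) (y : Fin N → Sr (n + 1)) (c : ℕ) :
    ∃ b : Fin N → Sr (n + 1), (∀ i, b i ∈ Hr (n + 1)) ∧
    (∀ i, b i - y i ∈ mI (n + 1) ^ c) ∧ ∀ F : MvPolynomial (Fin N) (Pr (n + 1)),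
      MvPolynomial.eval₂ (jc (n + 1)) y F = 0 → MvPolynomial.eval₂ (jc (n + 1)) b F = 0 := by
  let φH : Pr (n + 1) →+* Hr (n + 1) := (jc (n + 1)).codRestrict (Hr (n + 1)) jc_mem_Hr
  have hφH : (Hr (n + 1)).subtype.comp φH = jc (n + 1) := RingHom.ext fun _ => rfl
  obtain ⟨ES, δ, hE, hδ, hT⟩ := tougeron (jc (n + 1)) φH (mH (n + 1)) (hens_Hr (n + 1))
    (fun p hp => Subtype.ext hp) N y
  obtain ⟨p, hp0, hp⟩ := exists_dir (MvPolynomial.eval₂ (jc (n + 1)) y (δ ^ (2 * N + 1)))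
    (by rw [MvPolynomial.eval₂_pow]; exact pow_ne_zero _ hδ)
  obtain ⟨E, hE0, hES, hEX, hEC⟩ := coord n p hp0
  let ι : Sr n →ₐ[ℝ] PowerSeries (Sr n) := IsScalarTower.toAlgHom ℝ (Sr n) (PowerSeries (Sr n))
  have hι : ∀ s, ι s = PowerSeries.C s := fun s => rfl
  let Ψ : Sr n →ₐ[ℝ] Sr (n + 1) := (E.symm : PowerSeries (Sr n) →ₐ[ℝ] Sr (n + 1)).comp ι
  have hΨ : ∀ s, Ψ s = E.symm (PowerSeries.C s) := fun s => rfl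
  have hℓ : ∀ j : Fin n, (MvPolynomial.X j.succ - MvPolynomial.C (p j.succ * (p 0)⁻¹) *
          MvPolynomial.X 0 : Pr (n + 1)) ∈ MvPolynomial.idealOfVars (Fin (n + 1)) ℝ := fun j =>
    sub_mem (X_mem_vars _) (Ideal.mul_mem_left _ _ (X_mem_vars _))
  have hΨi : Function.Injective Ψ := fun a b h =>
    PowerSeries.C_injective (E.symm.injective h)
  have hΨH : ∀ s ∈ Hr n, Ψ s ∈ Hr (n + 1) := Psi_mem Ψ _ hℓ hEC hΨi
  have hEH : ∀ q : (Sr n)[X], (∀ k, q.coeff k ∈ Hr n) →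
      E.symm (q : PowerSeries (Sr n)) ∈ Hr (n + 1) := by
    intro q hq
    have : (q : PowerSeries (Sr n)) = ∑ k ∈ Finset.range (q.natDegree + 1),
        PowerSeries.C (q.coeff k) * PowerSeries.X ^ k := by
      conv_lhs => rw [q.as_sum_range_C_mul_X_pow]
      rw [← coeToPowerSeries.ringHom_apply, map_sum]
      simp
    rw [this, map_sum]
    refine (Hr (n + 1)).sum_mem fun k _ => ?_
    rw [map_mul, map_pow, hEX]
    exact (Hr (n + 1)).mul_mem (hΨH _ (hq k)) ((Hr (n + 1)).pow_mem (jc_mem_Hr _) k)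
  let mB : Ideal (PowerSeries (Sr n)) := (mI (n + 1)).map (E : Sr (n + 1) →+* PowerSeries (Sr n))
  have hmB : ∀ k s, s ∈ mB ^ k ↔ E.symm s ∈ mI (n + 1) ^ k := by
    intro k s
    have h1 : mB ^ k = (mI (n + 1) ^ k).map (E : Sr (n + 1) →+* PowerSeries (Sr n)) :=
      (Ideal.map_pow _ _ _).symm
    rw [h1]
    constructor
    · intro h
      obtain ⟨t, ht, rfl⟩ := (Ideal.mem_map_iff_of_surjective _ E.surjective).mp h
      simpa using ht
    · intro h
      have := Ideal.mem_map_of_mem (E : Sr (n + 1) →+* PowerSeries (Sr n)) h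
      simpa using this
  have hmB1 : ∀ s, s ∈ mB ↔ E.symm s ∈ mI (n + 1) := fun s => by simpa using hmB 1 s
  let P0 : Fin (n + 1) → (Pr n)[X] := Fin.cons (C (MvPolynomial.C (p 0)) * X)
    (fun j => C (MvPolynomial.X j) + C (MvPolynomial.C (p j.succ)) * X)
  let π : Pr (n + 1) →+* (Pr n)[X] := (MvPolynomial.aeval (R := ℝ) P0 : _ →ₐ[ℝ] _)
  let Φ : Pr (n + 1) →+* PowerSeries (Sr n) :=
    (E : Sr (n + 1) →+* PowerSeries (Sr n)).comp (jc (n + 1))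
  have hEA : ∀ r : ℝ, E (MvPowerSeries.C r) = PowerSeries.C (MvPowerSeries.C r) :=
    fun r => by
      have h := E.commutes r
      rw [MvPowerSeries.algebraMap_apply] at h
      have h2 : algebraMap ℝ (PowerSeries (Sr n)) r = PowerSeries.C (algebraMap ℝ (Sr n) r) :=
        PowerSeries.algebraMap_apply
      rw [h2, MvPowerSeries.algebraMap_apply] at h
      exact h
  have hΦ : ∀ x, Φ x = (((π x).map (jc n) : (Sr n)[X]) : PowerSeries (Sr n)) := by
    have : Φ = (coeToPowerSeries.ringHom.comp (mapRingHom (jc n))).comp π := by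
      apply MvPolynomial.ringHom_ext
      · intro r
        have : π (MvPolynomial.C r) = C (MvPolynomial.C r) :=
          (MvPolynomial.aeval (R := ℝ) P0).commutes r
        simp only [RingHom.comp_apply, Φ, this]
        simp [hEA]
      · intro i
        have : π (MvPolynomial.X i) = P0 i := MvPolynomial.aeval_X _ _
        simp only [RingHom.comp_apply, Φ, this]
        refine Fin.cases ?_ (fun j => ?_) i
        · simp [P0, hE0]
        · simp [P0, hES]
    intro x
    rw [this]
    rfl
  have hEv : ∀ (w : Fin N → Sr (n + 1)) F, MvPolynomial.eval₂ Φ (fun i => E (w i)) F =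
      E (MvPolynomial.eval₂ (jc (n + 1)) w F) := by
    intro w F
    exact (MvPolynomial.eval₂_comp_left (E : Sr (n + 1) →+* PowerSeries (Sr n)) (jc (n + 1)) w F).symm
  have : IsAdicComplete (IsLocalRing.maximalIdeal (Sr n)) (Sr n) := by
    rw [maximalIdeal_eq]
    exact IsAdicComplete.mk
  obtain ⟨w, α, v, h, hw, hα, hv, hh, hmon, hvu, hhE, hwy, hδw, hfw⟩ :=
    lemS (jc n) (Hr n) jc_mem_Hr (by rw [maximalIdeal_eq]; exact ih) mB
    (by
      intro a ha
      rw [maximalIdeal_eq] at ha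
      rw [hmB1]
      have := hom_mem_pow Ψ (mI (n + 1)) (fun i => by
        rw [hΨ, hEC]; exact idealOfVars_const _ (hℓ i)) 1 a (by simpa using ha)
      rw [pow_one] at this
      exact this)
    (by
      intro u x hu hx
      rw [hmB1, ← maximalIdeal_eq, IsLocalRing.mem_maximalIdeal] at hx
      by_contra hn
      have h1 : ¬ IsUnit (E.symm (u + x)) := fun h => hn (by simpa using h.map E)
      have h2 : E.symm u ∈ IsLocalRing.maximalIdeal (Sr (n + 1)) := by
        have := Ideal.sub_mem (IsLocalRing.maximalIdeal (Sr (n + 1)))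
          ((IsLocalRing.mem_maximalIdeal _).mpr h1) ((IsLocalRing.mem_maximalIdeal _).mpr hx)
        simpa using this
      exact h2 (hu.map E.symm))
    (by
      intro s k
      refine ⟨π (MvPowerSeries.truncTotal k (E.symm s)), ?_⟩
      rw [← hΦ, hmB, map_sub]
      simpa [Φ] using sub_trunc_mem (E.symm s) k)
    π (fun i => E (y i)) Φ hΦ ES (by
      intro f hf
      rw [hEv, hE f hf, map_zero]) (δ ^ (2 * N + 1)) (by
      rw [hEv]
      let χ : Sr (n + 1) →ₐ[ℝ] PowerSeries ℝ := AlgHom.mk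
        ((PowerSeries.map (MvPowerSeries.constantCoeff (σ := Fin n) (R := ℝ))).comp
          (E : Sr (n + 1) →+* PowerSeries (Sr n))) (by
          intro r
          have := hEA r
          have h3 : algebraMap ℝ (Sr (n + 1)) r = MvPowerSeries.C r := by
            rw [MvPowerSeries.algebraMap_apply]; rfl
          rw [h3]
          change (PowerSeries.map (MvPowerSeries.constantCoeff (σ := Fin n) (R := ℝ)))
            (E (MvPowerSeries.C r)) = _
          rw [this, PowerSeries.map_C, MvPowerSeries.constantCoeff_C]
          rfl)
      have hχ : ∀ s, χ s = PowerSeries.map (MvPowerSeries.constantCoeff (σ := Fin n) (R := ℝ))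
        (E s) := fun s => rfl
      intro h0
      refine hp χ ?_ ?_
      · intro i
        refine Fin.cases ?_ (fun j => ?_) i
        · rw [hχ, hE0]; simp
        · rw [hχ, hES]; simp
      · rw [hχ]
        ext k
        have := congrArg (PowerSeries.coeff k) h0
        rw [PowerSeries.coeff_map, map_zero, IsLocalRing.residue_eq_zero_iff, maximalIdeal_eq,
          mem_mI_iff] at this
        rw [PowerSeries.coeff_map, this, map_zero])
    (c + 1) (by omega)
  let W : Fin N → Hr (n + 1) := fun i => ⟨E.symm (w i), hEH _ (hw i)⟩
  have hEvH : ∀ (W : Fin N → Hr (n + 1)) F, ((MvPolynomial.eval₂ φH W F : Hr (n + 1)) : Sr (n + 1)) =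
      MvPolynomial.eval₂ (jc (n + 1)) (fun i => (W i : Sr (n + 1))) F := by
    intro W F
    have := MvPolynomial.eval₂_comp_left (Hr (n + 1)).subtype φH W F
    rw [hφH] at this
    exact this
  have hEW : ∀ F, ((MvPolynomial.eval₂ φH W F : Hr (n + 1)) : Sr (n + 1)) =
      E.symm (MvPolynomial.eval₂ Φ (fun i => (w i : PowerSeries (Sr n))) F) := by
    intro F
    rw [hEvH]
    apply E.injective
    rw [← hEv]
    simp [W]
  obtain ⟨vi, hvi, hvv⟩ := unit_Hr (E.symm (v : PowerSeries (Sr n))) (hEH v hv) (hvu.map E.symm)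
  let J : Ideal (Hr (n + 1)) := (mI (n + 1) ^ (c + 1)).comap (Hr (n + 1)).subtype
  have hδW : ((MvPolynomial.eval₂ φH W δ : Hr (n + 1)) : Sr (n + 1)) ^ (2 * N + 1) =
      E.symm (α : PowerSeries (Sr n)) * E.symm (v : PowerSeries (Sr n)) := by
    rw [← map_mul, ← hδw, ← hEW, MvPolynomial.eval₂_pow]
    rfl
  obtain ⟨W', hW', hF⟩ := hT J (by
      intro x hx
      have : (x : Sr (n + 1)) ∈ mI (n + 1) ^ (c + 1) := hx
      exact (mem_mH x).mpr (Ideal.pow_le_self (Nat.succ_ne_zero c) this)) W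
    (by
      intro h0
      rw [h0] at hδW
      have h1 : E.symm (α : PowerSeries (Sr n)) * E.symm (v : PowerSeries (Sr n)) = 0 := by
        rw [← hδW]; simp
      have h2 := (mul_eq_zero.mp h1).resolve_right (hvu.map E.symm).ne_zero
      have h3 : (α : PowerSeries (Sr n)) = 0 := by simpa using h2
      exact hmon.ne_zero (by simpa using h3))
    (by
      intro f hf
      have hhf := hEH (h f) (hh f)
      refine ⟨MvPolynomial.eval₂ φH W δ * ⟨vi, hvi⟩ * ⟨_, hhf⟩, ?_, ?_⟩
      · refine Ideal.mul_mem_left _ _ ?_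
        exact (hmB _ _).mp (hhE f hf)
      · apply Subtype.ext
        have h1 := hEW f
        rw [hfw f hf, map_mul] at h1
        rw [h1]
        push_cast
        linear_combination (-E.symm (α : PowerSeries (Sr n)) * E.symm (h f : PowerSeries (Sr n))) * hvv
          - vi * E.symm (h f : PowerSeries (Sr n)) * hδW)
  refine ⟨fun i => W' i, fun i => (W' i).2, fun i => ?_, fun F h => ?_⟩
  · have h1 : (W' i : Sr (n + 1)) - W i ∈ mI (n + 1) ^ (c + 1) := hW' i
    have h2 : (W i : Sr (n + 1)) - y i ∈ mI (n + 1) ^ (c + 1) := by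
      have := hwy i
      rw [hmB, map_sub] at this
      simpa using this
    have := Ideal.add_mem _ h1 h2
    rw [sub_add_sub_cancel] at this
    exact Ideal.pow_le_pow_right (by omega) this
  · have := hF F h
    rw [← hEvH, this]
    rfl

theorem AP (n : ℕ) : ∀ (N : ℕ) (a : Fin N → Sr n) (c : ℕ), ∃ b : Fin N → Sr n, (∀ i, b i ∈ Hr n) ∧
    (∀ i, b i - a i ∈ mI n ^ c) ∧ ∀ F : MvPolynomial (Fin N) (Pr n),
      MvPolynomial.eval₂ (jc n) a F = 0 → MvPolynomial.eval₂ (jc n) b F = 0 := by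
  induction n with
  | zero => exact AP_zero
  | succ n ih => exact AP_succ n ih

end NashArtin

namespace NashArtin
open Polynomial Asymptotics
open scoped Topology

theorem iter_zero {n : ℕ} {F : Type*} [NormedAddCommGroup F] [NormedSpace ℝ F] [CompleteSpace F]
    {f : (Fin n → ℝ) → F} (hf : AnalyticAt ℝ f 0) (c : ℕ)
    (hO : f =O[𝓝 0] (fun x => ‖x‖ ^ c)) (k : ℕ) (hk : k < c) : iteratedFDeriv ℝ k f 0 = 0 := by
  obtain ⟨p, r, hp⟩ := hf
  have hd := diag_zero ⟨r, hp⟩ c hO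
  let q : FormalMultilinearSeries ℝ (Fin n → ℝ) F := fun k => if k < c then 0 else p k
  have hq : HasFPowerSeriesOnBall f q 0 r := by
    refine ⟨hp.r_le.trans (FormalMultilinearSeries.radius_le_of_le fun k => ?_), hp.r_pos, ?_⟩
    · by_cases h : k < c
      · simp [q, h]
      · simp [q, h]
    · intro y hy
      have : (fun k => q k fun _ => y) = (fun k => p k fun _ => y) := by
        funext k
        by_cases h : k < c
        · simp [q, h, hd k h y]
        · simp [q, h]
      rw [this]
      exact hp.hasSum hy
  ext1 v
  rw [hq.iteratedFDeriv_eq_sum_of_completeSpace]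
  simp [q, hk]

theorem sep {R S : Type*} [CommRing R] [CommRing S] [IsDomain S] (θ : R →+* S) (p : R[X]) (u v : S)
    (I : Ideal S) (hu : eval₂ θ u p = 0) (hv : eval₂ θ v p = 0)
    (hd : eval₂ θ u (derivative p) ∉ I) (h : v - u ∈ I) : v = u := by
  obtain ⟨k, hk⟩ := binomExpansion (p.map θ) u (v - u)
  rw [add_sub_cancel, eval_map, eval_map, hu, hv, derivative_map, eval_map] at hk
  by_contra hne
  have hz : (v - u) * (eval₂ θ u (derivative p) + k * (v - u)) = 0 := by
    linear_combination -hk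
  have h2 := (mul_eq_zero.mp hz).resolve_left (sub_ne_zero.mpr hne)
  apply hd
  have h3 : eval₂ θ u (derivative p) = - k * (v - u) := by linear_combination h2
  rw [h3]
  exact I.mul_mem_left _ h

theorem rep_aeval {n : ℕ} {τ : (Fin n → ℝ) → (Fin n → ℝ)} {t : Fin n → Sr n}
    (h : ∀ i, Rep (fun x => τ x i) (t i)) (a : Pr n) :
    Rep (fun x => MvPolynomial.eval (τ x) a) (MvPolynomial.aeval t a) := by
  induction a using MvPolynomial.induction_on with
  | C r =>
    have := rep_poly (n := n) (MvPolynomial.C r)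
    convert this using 1
    · simp
    · rw [← MvPolynomial.algebraMap_eq, AlgHom.commutes, MvPowerSeries.algebraMap_apply]
      simp
  | add p q hp hq =>
    rw [map_add]
    convert hp.add hq using 1
    funext x
    simp
  | mul_X p i hp =>
    rw [map_mul, MvPolynomial.aeval_X]
    convert hp.mul (h i) using 1
    funext x
    simp

theorem rep_eval {n : ℕ} {τ : (Fin n → ℝ) → (Fin n → ℝ)} (θ : Pr n →+* Sr n)
    (h : ∀ a, Rep (fun x => MvPolynomial.eval (τ x) a) (θ a)) {f : (Fin n → ℝ) → ℝ} {s : Sr n}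
    (hf : Rep f s) (Q : (Pr n)[X]) :
    Rep (fun x => (Q.map (MvPolynomial.eval (τ x))).eval (f x)) (Q.eval₂ θ s) := by
  induction Q using Polynomial.induction_on' with
  | add p q hp hq =>
    rw [eval₂_add]
    convert hp.add hq using 1
    funext x
    simp
  | monomial k a =>
    rw [eval₂_monomial]
    have hpow : Rep (fun x => f x ^ k) (s ^ k) := by
      induction k with
      | zero =>
        have := rep_poly (n := n) 1
        simpa using this
      | succ k ih =>
        simp only [pow_succ]
        exact ih.mul hf
    convert (h a).mul hpow using 1
    funext x
    simp

theorem rep_eval_id {n : ℕ} {f : (Fin n → ℝ) → ℝ} {s : Sr n} (hf : Rep f s) (Q : (Pr n)[X]) :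
    Rep (fun x => (Q.map (MvPolynomial.eval x)).eval (f x)) (Q.eval₂ (jc n) s) :=
  rep_eval (τ := fun x => x) (jc n) (fun a => rep_poly a) hf Q

noncomputable def Tq (n : ℕ) : Pr (n + 1) ≃ₐ[ℝ] (Pr n)[X] :=
  (MvPolynomial.renameEquiv ℝ (finRotate (n + 1))).trans (MvPolynomial.finSuccEquiv ℝ n)

theorem Tq_eval {n : ℕ} (x : Fin n → ℝ) (z : ℝ) (P : Pr (n + 1)) :
    MvPolynomial.eval (Fin.snoc x z : Fin (n + 1) → ℝ) P =
      ((Tq n P).map (MvPolynomial.eval x)).eval z := by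
  rw [Tq, AlgEquiv.trans_apply, ← MvPolynomial.eval_eq_eval_mv_eval', Fin.snoc_eq_cons_rotate]
  exact (MvPolynomial.eval_rename _ _ _).symm

theorem rep_zero (n : ℕ) : Rep (fun _ : Fin n → ℝ => 0) 0 := by
  simpa using rep_poly (n := n) 0

theorem nash_min {n : ℕ} {f : (Fin n → ℝ) → ℝ} (hf : AnalyticAt ℝ f 0)
    (hP : ∃ P : Pr (n + 1), P ≠ 0 ∧
      ∀ᶠ x : Fin n → ℝ in 𝓝 0, MvPolynomial.eval (Fin.snoc x (f x) : Fin (n + 1) → ℝ) P = 0) :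
    ∃ u, Rep f u ∧ ∃ Q : (Pr n)[X], eval₂ (jc n) u Q = 0 ∧ eval₂ (jc n) u (derivative Q) ≠ 0 := by
  obtain ⟨u, hu⟩ := rep_exists hf
  obtain ⟨P, hP0, hP⟩ := hP
  refine ⟨u, hu, ?_⟩
  rcases min_rel (jc n) u with h | ⟨Q, -, h1, -, h2, -⟩
  · exfalso
    have h3 : eval₂ (jc n) u (Tq n P) = 0 := (rep_eval_id hu (Tq n P)).unique (rep_zero n) (by
      filter_upwards [hP] with x hx
      rw [← Tq_eval, hx])
    apply hP0
    have : Tq n P = 0 := by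
      ext1 k
      exact jc_inj n (by rw [h _ h3 k]; simp)
    simpa using this
  · exact ⟨Q, h1, h2⟩

theorem nash_of_Hr {n : ℕ} {f : (Fin n → ℝ) → ℝ} {s : Sr n} (hf : Rep f s) (hs : s ∈ Hr n) :
    ∃ P : Pr (n + 1), P ≠ 0 ∧
      ∀ᶠ x : Fin n → ℝ in 𝓝 0, MvPolynomial.eval (Fin.snoc x (f x) : Fin (n + 1) → ℝ) P = 0 := by
  obtain ⟨-, F, hF, hFs⟩ := mem_Hr.mp hs
  refine ⟨(Tq n).symm F, by simpa using hF, ?_⟩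
  rw [aeval_def, algMap_eq] at hFs
  have h := rep_eval_id hf F
  rw [hFs] at h
  filter_upwards [h.eventually] with x hx
  rw [Tq_eval, AlgEquiv.apply_symm_apply, hx]

theorem exists_not_mem {n m : ℕ} (d : Fin m → Sr n) (hd : ∀ j, d j ≠ 0) :
    ∃ k, ∀ l, k ≤ l → ∀ j, d j ∉ mI n ^ l := by
  have : ∀ j, ∃ k, d j ∉ mI n ^ k := by
    intro j
    by_contra hn
    push Not at hn
    exact hd j (eq_zero_of_mem _ hn)
  choose k hk using this
  refine ⟨Finset.univ.sup k, fun l hl j hj => hk j ?_⟩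
  exact Ideal.pow_le_pow_right ((Finset.le_sup (f := k) (Finset.mem_univ j)).trans hl) hj

theorem main {n m : ℕ} {φ ψ : (Fin n → ℝ) → (Fin m → ℝ)} (hφ : NashGerm φ) (hψ : NashGerm ψ)
    (τ : (Fin n → ℝ) → (Fin n → ℝ)) (hτ : AnalyticAt ℝ τ 0) (hτ0 : τ 0 = 0)
    (hτD : ∃ Dτ : (Fin n → ℝ) ≃L[ℝ] (Fin n → ℝ),
      HasFDerivAt τ (Dτ : (Fin n → ℝ) →L[ℝ] (Fin n → ℝ)) 0)
    (heq : ∀ᶠ x : Fin n → ℝ in 𝓝 0, φ (τ x) = ψ x) (c : ℕ) :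
    ∃ τ' : (Fin n → ℝ) → (Fin n → ℝ),
      NashDiffeoGerm τ' ∧
      (∀ᶠ x : Fin n → ℝ in 𝓝 0, φ (τ' x) = ψ x) ∧
      ∀ k : ℕ, k < c → iteratedFDeriv ℝ k τ' 0 = iteratedFDeriv ℝ k τ 0 := by
  obtain ⟨hφa, hφ0, hφP⟩ := hφ
  obtain ⟨hψa, hψ0, hψP⟩ := hψ
  obtain ⟨D, hD⟩ := hτD
  have hφj : ∀ j, AnalyticAt ℝ (fun x => φ x j) 0 := analyticAt_pi_iff.mp hφa
  have hψj : ∀ j, AnalyticAt ℝ (fun x => ψ x j) 0 := analyticAt_pi_iff.mp hψa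
  have hτi : ∀ i, AnalyticAt ℝ (fun x => τ x i) 0 := analyticAt_pi_iff.mp hτ
  choose u hu p hp hp' using fun j => nash_min (hφj j) (hφP j)
  choose s hs Q hQ hQ' using fun j => nash_min (hψj j) (hψP j)
  choose t ht using fun i => rep_exists (hτi i)
  have hmap : Filter.map τ (𝓝 0) = 𝓝 0 := by
    have h1 := hτ.hasStrictFDerivAt
    rw [hD.fderiv] at h1
    have := h1.map_nhds_eq_of_equiv
    rwa [hτ0] at this
  have htend : Filter.Tendsto τ (𝓝 0) (𝓝 0) := hmap.le
  have heqj : ∀ j, ∀ᶠ x : Fin n → ℝ in 𝓝 0, φ (τ x) j = ψ x j := fun j => by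
    filter_upwards [heq] with x hx
    rw [hx]
  let θ : (Fin n → Sr n) → Pr n →+* Sr n := fun t => (MvPolynomial.aeval (R := ℝ) t : _ →ₐ[ℝ] _)
  have hpφ : ∀ j, ∀ᶠ x : Fin n → ℝ in 𝓝 0,
      ((p j).map (MvPolynomial.eval x)).eval (φ x j) = 0 := fun j => by
    have h := rep_eval_id (hu j) (p j)
    rw [hp j] at h
    exact h.eventually
  have hpt : ∀ j, eval₂ (θ t) (s j) (p j) = 0 := fun j =>
    (rep_eval (θ t) (rep_aeval ht) (hs j) (p j)).unique (rep_zero n) (by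
      filter_upwards [heqj j, htend.eventually (hpφ j)] with x hx hx2
      rw [← hx, hx2])
  have hpt' : ∀ j, eval₂ (θ t) (s j) (derivative (p j)) ≠ 0 := fun j h0 => by
    apply hp' j
    refine (rep_eval_id (hu j) (derivative (p j))).unique (rep_zero n) ?_
    have h1 := rep_eval (θ t) (rep_aeval ht) (hs j) (derivative (p j))
    rw [h0] at h1
    rw [← hmap, Filter.eventually_map]
    filter_upwards [heqj j, h1.eventually] with x hx hx2
    rw [hx, hx2]
  obtain ⟨k1, hk1⟩ := exists_not_mem _ hpt'
  obtain ⟨k2, hk2⟩ := exists_not_mem _ hQ'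
  obtain ⟨b, hbH, hbm, hbF⟩ := AP n (n + m) (Fin.append t s) (c + 2 + k1 + k2)
  set e := c + 2 + k1 + k2 with he
  let t' : Fin n → Sr n := fun i => b (Fin.castAdd m i)
  let s' : Fin m → Sr n := fun j => b (Fin.natAdd n j)
  have ht'm : ∀ i, t' i - t i ∈ mI n ^ e := fun i => by simpa using hbm (Fin.castAdd m i)
  have hs'm : ∀ j, s' j - s j ∈ mI n ^ e := fun j => by simpa using hbm (Fin.natAdd n j)
  have hs' : ∀ j, s' j = s j := by
    intro j
    refine sep (jc n) (Q j) (s j) (s' j) (mI n ^ e) (hQ j) ?_ (hk2 e (by omega) j) (hs'm j)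
    have key : ∀ a : Fin (n + m) → Sr n, MvPolynomial.eval₂ (jc n) a
        (eval₂ (MvPolynomial.C) (MvPolynomial.X (Fin.natAdd n j)) (Q j)) =
        eval₂ (jc n) (a (Fin.natAdd n j)) (Q j) := by
      intro a
      rw [← MvPolynomial.coe_eval₂Hom, hom_eval₂]
      congr 1
      · refine RingHom.ext fun x => ?_
        simp
      · simp
    rw [← key]
    apply hbF
    rw [key]
    simpa using hQ j
  have hpt2 : ∀ j, eval₂ (θ t') (s j) (p j) = 0 := by
    intro j
    let ρ : Pr n →+* MvPolynomial (Fin (n + m)) (Pr n) := MvPolynomial.eval₂Hom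
      ((MvPolynomial.C).comp (MvPolynomial.C)) (fun i => MvPolynomial.X (Fin.castAdd m i))
    have key : ∀ a : Fin (n + m) → Sr n, MvPolynomial.eval₂ (jc n) a
        (eval₂ ρ (MvPolynomial.X (Fin.natAdd n j)) (p j)) =
        eval₂ (θ (fun i => a (Fin.castAdd m i))) (a (Fin.natAdd n j)) (p j) := by
      intro a
      rw [← MvPolynomial.coe_eval₂Hom, hom_eval₂]
      congr 1
      · apply MvPolynomial.ringHom_ext
        · intro r
          have : θ (fun i => a (Fin.castAdd m i)) (MvPolynomial.C r) = MvPowerSeries.C r := by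
            show MvPolynomial.aeval (R := ℝ) _ _ = _
            rw [← MvPolynomial.algebraMap_eq, AlgHom.commutes, MvPowerSeries.algebraMap_apply]
            rfl
          rw [this]
          simp [ρ]
        · intro i
          simp [ρ, θ]
      · simp
    have h1 := hbF _ (by
      rw [key]
      simpa using hpt j)
    rw [key] at h1
    rw [← hs' j]
    exact h1
  choose σ hσ using fun i => (mem_Hr.mp (hbH (Fin.castAdd m i))).1
  let τ' : (Fin n → ℝ) → (Fin n → ℝ) := fun x i => σ i x
  have hτ'r : ∀ i, Rep (fun x => τ' x i) (t' i) := hσ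
  have hτ'a : AnalyticAt ℝ τ' 0 := analyticAt_pi_iff.mpr fun i => (hτ'r i).1
  have hO : (fun x => τ' x - τ x) =O[𝓝 0] (fun x => ‖x‖ ^ e) := by
    rw [isBigO_pi]
    intro i
    exact ((hτ'r i).sub (ht i)).bigO (ht'm i)
  have hO' : (fun x => τ' x - τ x) =O[𝓝 0] (fun x => ‖x - 0‖ ^ e) := by simpa using hO
  have hτ'0 : τ' 0 = 0 := by
    have := hO'.eq_zero_of_norm_pow (by omega)
    rw [hτ0, sub_zero] at this
    exact this
  have hD' : HasFDerivAt τ' (D : (Fin n → ℝ) →L[ℝ] (Fin n → ℝ)) 0 := by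
    have h1 := (hO'.hasFDerivAt (𝕜 := ℝ) (by omega)).add hD
    rw [zero_add] at h1
    refine h1.congr_of_eventuallyEq (Filter.Eventually.of_forall fun x => ?_)
    simp
  have htend' : Filter.Tendsto τ' (𝓝 0) (𝓝 0) := by
    have := hτ'a.continuousAt.tendsto
    rwa [hτ'0] at this
  refine ⟨τ', ⟨⟨hτ'a, hτ'0, fun i => nash_of_Hr (hτ'r i) (hbH _)⟩, D, hD'⟩, ?_, ?_⟩
  · have hj : ∀ j, ∀ᶠ x : Fin n → ℝ in 𝓝 0, φ (τ' x) j = ψ x j := by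
      intro j
      have ha : AnalyticAt ℝ (fun x => φ (τ' x) j) 0 :=
        AnalyticAt.comp (g := fun x => φ x j) (f := τ') (by rw [hτ'0]; exact hφj j) hτ'a
      obtain ⟨r, hr⟩ := rep_exists ha
      have hrs : r - s j ∈ mI n ^ e := by
        refine (hr.sub (hs j)).mem_of_bigO ?_
        have hst := (hφj j).hasStrictFDerivAt.isBigO_sub
        have h1 : (fun x => φ (τ' x) j - φ (τ x) j) =O[𝓝 0] (fun x => τ' x - τ x) :=
          hst.comp_tendsto (htend'.prodMk_nhds htend)
        refine (h1.trans hO).congr' ?_ Filter.EventuallyEq.rfl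
        filter_upwards [heqj j] with x hx
        simp [hx]
      have hrp : eval₂ (θ t') r (p j) = 0 :=
        (rep_eval (θ t') (rep_aeval hτ'r) hr (p j)).unique (rep_zero n) (by
          filter_upwards [htend'.eventually (hpφ j)] with x hx
          exact hx)
      have hrs' : r = s j := by
        refine sep (θ t') (p j) (s j) r (mI n ^ e) (hpt2 j) hrp ?_ hrs
        intro hmem
        refine hk1 e (by omega) j ?_
        have h2 := peval₂_sub_mem (θ t') (θ t) (mI n ^ e) (s j) (s j) (by simp)
          (derivative (p j)) (fun a => by
            have := eval₂_sub_mem (MvPowerSeries.C (σ := Fin n) (R := ℝ)) (mI n ^ e) t' t ht'm a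
            exact this)
        have h3 := Ideal.sub_mem _ hmem h2
        rwa [sub_sub_cancel] at h3
      rw [hrs'] at hr
      exact hr.unique' (hs j)
    filter_upwards [Filter.eventually_all.mpr hj] with x hx
    exact funext hx
  · intro k hk
    have h1 := iter_zero (f := τ' - τ) (hτ'a.sub hτ) e hO k (by omega)
    rw [iteratedFDeriv_sub_apply hτ'a.contDiffAt hτ.contDiffAt, sub_eq_zero] at h1
    exact h1

end NashArtin

/-- Artin approximation for R equivalence of Nash map germs: an analytic solution $τ$ of
$φ ∘ τ = ψ$ can be approximated, to any prescribed order $c$, by a Nash diffeomorphism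
germ $τ'$ with $φ ∘ τ' = ψ$. -/
theorem analytic_R_equiv_implies_Nash_R_equiv_with_approx {n m : ℕ}
    {φ ψ : (Fin n → ℝ) → (Fin m → ℝ)}
    (hφ : NashGerm φ) (hψ : NashGerm ψ)
    (τ : (Fin n → ℝ) → (Fin n → ℝ))
    (hτ : AnalyticAt ℝ τ 0) (hτ0 : τ 0 = 0)
    (hτD : ∃ Dτ : (Fin n → ℝ) ≃L[ℝ] (Fin n → ℝ),
      HasFDerivAt τ (Dτ : (Fin n → ℝ) →L[ℝ] (Fin n → ℝ)) 0)
    (heq : ∀ᶠ x : Fin n → ℝ in 𝓝 0, φ (τ x) = ψ x) :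
    ∀ c : ℕ, ∃ τ' : (Fin n → ℝ) → (Fin n → ℝ),
      NashDiffeoGerm τ' ∧
      (∀ᶠ x : Fin n → ℝ in 𝓝 0, φ (τ' x) = ψ x) ∧
      ∀ k : ℕ, k < c → iteratedFDeriv ℝ k τ' 0 = iteratedFDeriv ℝ k τ 0 := by
  exact NashArtin.main hφ hψ τ hτ hτ0 hτD heq
end

section
/- Let f₁, …, fₘ be formal power series in ℝ[[x₁,…,xₙ]] with zero constant term, and let h be a formal power series in ℝ[[x₁,…,xₙ,y₁,…,yₘ]]. If the substitution yⱼ := fⱼ(x) (and xᵢ := xᵢ) sends h to the zero power series in ℝ[[x₁,…,xₙ]], then h belongs to the ideal of ℝ[[x₁,…,xₙ,y₁,…,yₘ]] generated by y₁ − f₁(x), …, yₘ − fₘ(x); that is, there exist β₁, …, βₘ ∈ ℝ[[x₁,…,xₙ,y₁,…,yₘ]] with h = Σ_{j=1}^{m} βⱼ·(yⱼ − fⱼ(x)). -/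
noncomputable section

/-- Substitution of power series (with zero constant term) into a multivariate formal
power series, defined coefficientwise: the coefficient of a monomial `d` of the result is
the (finite) sum, over monomials `e` of total degree at most that of `d`, of
`coeff e f * coeff d (∏ s, (a s) ^ (e s))`.  When every `a s` has zero constant
coefficient this is the usual substitution `f(a)`. -/
def psubst {σ τ : Type*} [Fintype σ] [DecidableEq σ]
    (a : σ → MvPowerSeries τ ℝ) (f : MvPowerSeries σ ℝ) : MvPowerSeries τ ℝ :=
  fun d =>
    ∑ e ∈ Finset.Iic (Finsupp.equivFunOnFinite.symm fun _ => d.sum fun _ k => k),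
      MvPowerSeries.coeff e f * MvPowerSeries.coeff d (e.prod fun s k => a s ^ k)

open MvPowerSeries

theorem psubst_eq_subst {σ τ : Type*} [Fintype σ] [DecidableEq σ]
    (a : σ → MvPowerSeries τ ℝ) (ha : ∀ s, constantCoeff (a s) = 0)
    (f : MvPowerSeries σ ℝ) : psubst a f = subst a f := by
  ext d
  rw [coeff_subst (hasSubst_of_constantCoeff_zero ha)]
  rw [finsum_eq_sum_of_support_subset (s := Finset.Iic
    (Finsupp.equivFunOnFinite.symm fun _ => d.sum fun _ k => k))]
  · rfl
  · intro e he
    rw [Function.mem_support] at he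
    simp only [Finset.coe_Iic, Set.mem_Iic]
    intro s
    simp only [Finsupp.equivFunOnFinite_symm_apply_apply]
    change e s ≤ d.degree
    by_contra hlt
    push Not at hlt
    apply he
    have hz : coeff d (e.prod fun s k => a s ^ k) = 0 := by
      apply coeff_of_lt_order
      have hs : s ∈ e.support := by
        rw [Finsupp.mem_support_iff]; omega
      have h1 : (e s : ℕ∞) ≤ (a s ^ e s).order :=
        le_order_pow_of_constantCoeff_eq_zero _ (ha s)
      have h2 : (a s ^ e s).order ≤ (e.prod fun s k => a s ^ k).order := by
        rw [Finsupp.prod, ← Finset.mul_prod_erase _ _ hs]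
        exact le_trans le_self_add le_order_mul
      exact lt_of_lt_of_le (by exact_mod_cast hlt) (h1.trans h2)
    rw [hz, smul_zero]

theorem coeff_eq_zero_of_subst_zero {n m : ℕ} (h : MvPowerSeries (Fin n ⊕ Fin m) ℝ)
    (h0 : subst (Sum.elim (fun i => X (Sum.inl i)) (fun _ => 0) :
      Fin n ⊕ Fin m → MvPowerSeries (Fin n ⊕ Fin m) ℝ) h = 0)
    (d : Fin n ⊕ Fin m →₀ ℕ) (hd : ∀ j, d (Sum.inr j) = 0) : coeff d h = 0 := by
  have key : ∀ e : Fin n ⊕ Fin m →₀ ℕ,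
      coeff d (e.prod fun s k => (Sum.elim (fun i => X (Sum.inl i)) (fun _ => 0) s :
        MvPowerSeries (Fin n ⊕ Fin m) ℝ) ^ k) = if e = d then 1 else 0 := by
    intro e
    by_cases he : ∀ j, e (Sum.inr j) = 0
    · have : (e.prod fun s k => (Sum.elim (fun i => X (Sum.inl i)) (fun _ => 0) s :
        MvPowerSeries (Fin n ⊕ Fin m) ℝ) ^ k) = monomial e 1 := by
        rw [monomial_eq', map_one, one_mul]
        apply Finsupp.prod_congr
        rintro (i | j) hs
        · rfl
        · exact absurd (he j) (Finsupp.mem_support_iff.1 hs)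
      rw [this, coeff_monomial]
      simp only [eq_comm]
    · push Not at he
      obtain ⟨j, hj⟩ := he
      rw [if_neg (by rintro rfl; exact hj (hd j)), Finsupp.prod,
        Finset.prod_eq_zero (Finsupp.mem_support_iff.2 hj) (by simp [hj]), map_zero]
  have hc := congrArg (coeff d) h0
  rw [coeff_subst (hasSubst_of_constantCoeff_zero (by rintro (i | j) <;> simp)),
    finsum_eq_single _ d (by intro e he; rw [key, if_neg he, smul_zero]), key, if_pos rfl] at hc
  simpa using hc

theorem exists_sum_of_coeff_eq_zero {n m : ℕ} (h : MvPowerSeries (Fin n ⊕ Fin m) ℝ)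
    (h0 : ∀ d : Fin n ⊕ Fin m →₀ ℕ, (∀ j, d (Sum.inr j) = 0) → coeff d h = 0) :
    ∃ β : Fin m → MvPowerSeries (Fin n ⊕ Fin m) ℝ, h = ∑ j, β j * X (Sum.inr j) := by
  classical
  refine ⟨fun j e => if ∀ i < j, e (Sum.inr i) = 0 then
    coeff (e + Finsupp.single (Sum.inr j) 1) h else 0, ?_⟩
  ext d
  rw [map_sum]
  have key : ∀ j : Fin m, coeff d ((show MvPowerSeries (Fin n ⊕ Fin m) ℝ from
      fun e => if ∀ i < j, e (Sum.inr i) = 0 then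
      coeff (e + Finsupp.single (Sum.inr j) 1) h else 0) * X (Sum.inr j)) =
      if d (Sum.inr j) ≠ 0 ∧ ∀ i < j, d (Sum.inr i) = 0 then coeff d h else 0 := by
    intro j
    rw [X, coeff_mul_monomial]
    by_cases hj : d (Sum.inr j) = 0
    · rw [if_neg, if_neg (by simp [hj])]
      intro hle
      have := hle (Sum.inr j)
      simp [hj] at this
    · have hle : Finsupp.single (Sum.inr j) 1 ≤ d := by
        rw [Finsupp.single_le_iff]; omega
      rw [if_pos hle, mul_one]
      change (if ∀ i < j, (d - Finsupp.single (Sum.inr j) 1 : Fin n ⊕ Fin m →₀ ℕ) (Sum.inr i) = 0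
        then coeff (d - Finsupp.single (Sum.inr j) 1 + Finsupp.single (Sum.inr j) 1) h else 0) = _
      rw [tsub_add_cancel_of_le hle]
      refine if_congr ?_ rfl rfl
      simp only [ne_eq, hj, not_false_eq_true, true_and]
      refine forall₂_congr fun i hi => ?_
      have hne : (Sum.inr j : Fin n ⊕ Fin m) ≠ Sum.inr i := by
        intro hh; exact hi.ne' (Sum.inr.inj hh)
      simp [hi.ne']
  refine Eq.trans ?_ (Finset.sum_congr rfl fun j _ => (key j).symm)
  by_cases hd : ∀ j, d (Sum.inr j) = 0
  · rw [h0 d hd]; simp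
  · push Not at hd
    obtain ⟨j, hj, hmin⟩ : ∃ j, d (Sum.inr j) ≠ 0 ∧ ∀ i < j, d (Sum.inr i) = 0 := by
      obtain ⟨j, hj⟩ := hd
      induction j using WellFoundedLT.induction with
      | ind j ih =>
        by_cases hex : ∀ i < j, d (Sum.inr i) = 0
        · exact ⟨j, hj, hex⟩
        · push Not at hex
          obtain ⟨i, hi, hi'⟩ := hex
          exact ih i hi hi'
    rw [Finset.sum_eq_single j, if_pos ⟨hj, hmin⟩]
    · rintro i - hi
      refine if_neg ?_
      rintro ⟨h1, h2⟩
      rcases lt_or_gt_of_ne hi with hlt | hlt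
      · exact h1 (hmin i hlt)
      · exact hj (h2 j hlt)
    · simp

/-- If a formal power series `h(x,y)` vanishes under the substitution `y := f(x)` (where
the `fⱼ` have zero constant term), then `h` lies in the ideal generated by the
`yⱼ - fⱼ(x)`. -/
theorem mem_ideal_of_subst_eq_zero (n m : ℕ)
    (f : Fin m → MvPowerSeries (Fin n) ℝ)
    (hf : ∀ j, MvPowerSeries.constantCoeff (f j) = 0)
    (h : MvPowerSeries (Fin n ⊕ Fin m) ℝ)
    (hsub : psubst (Sum.elim MvPowerSeries.X f) h = 0) :
    ∃ β : Fin m → MvPowerSeries (Fin n ⊕ Fin m) ℝ,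
      h = ∑ j : Fin m, β j *
        (MvPowerSeries.X (Sum.inr j) -
          psubst (fun i : Fin n => MvPowerSeries.X (Sum.inl i)) (f j)) := by
  rw [psubst_eq_subst _ (by rintro (i | j) <;> simp [hf])] at hsub
  simp_rw [fun j => psubst_eq_subst (fun i : Fin n => (X (Sum.inl i) :
    MvPowerSeries (Fin n ⊕ Fin m) ℝ)) (by simp) (f j)]
  set ι : Fin n → MvPowerSeries (Fin n ⊕ Fin m) ℝ := fun i => X (Sum.inl i) with hι
  have hι0 : ∀ i, constantCoeff (ι i) = 0 := by simp [hι]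
  have hιs : HasSubst ι := hasSubst_of_constantCoeff_zero hι0
  set g : Fin m → MvPowerSeries (Fin n ⊕ Fin m) ℝ := fun j => subst ι (f j) with hg
  have hg0 : ∀ j, constantCoeff (g j) = 0 := fun j =>
    constantCoeff_subst_eq_zero hιs hι0 (hf j)
  have hX : HasSubst (Sum.elim X f) :=
    hasSubst_of_constantCoeff_zero (by rintro (i | j) <;> simp [hf])
  have hA : HasSubst (Sum.elim ι fun j => X (Sum.inr j) + g j) :=
    hasSubst_of_constantCoeff_zero (by rintro (i | j) <;> simp [hι0, hg0])
  have hB : HasSubst (Sum.elim ι fun j => X (Sum.inr j) - g j) :=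
    hasSubst_of_constantCoeff_zero (by rintro (i | j) <;> simp [hι0, hg0])
  have hZ : HasSubst (Sum.elim ι fun _ : Fin m => (0 : MvPowerSeries (Fin n ⊕ Fin m) ℝ)) :=
    hasSubst_of_constantCoeff_zero (by rintro (i | j) <;> simp [hι0])
  -- any substitution fixing the `x` variables fixes `g j`
  have hfix : ∀ b : Fin m → MvPowerSeries (Fin n ⊕ Fin m) ℝ, HasSubst (Sum.elim ι b) →
      ∀ j, subst (Sum.elim ι b) (g j) = g j := by
    intro b hb j
    rw [hg]
    simp only
    rw [subst_comp_subst_apply hιs hb]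
    congr 1
    funext i
    rw [hι]
    simp only
    rw [subst_X hb]
    rfl
  have hzero : subst (Sum.elim ι fun _ => 0)
      (subst (Sum.elim ι fun j => X (Sum.inr j) + g j) h) = 0 := by
    rw [subst_comp_subst_apply hA hZ]
    have h1 := subst_comp_subst_apply hX hιs h
    rw [hsub, ← coe_substAlgHom hιs, map_zero, coe_substAlgHom hιs] at h1
    refine Eq.trans ?_ h1.symm
    congr 1
    funext s
    rcases s with i | j
    · simp only [Sum.elim_inl]
      rw [subst_X hιs]
      exact subst_X hZ _
    · simp only [Sum.elim_inr]
      rw [subst_add hZ, hfix _ hZ, subst_X hZ]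
      simp [hg]
  obtain ⟨β, hβ⟩ := exists_sum_of_coeff_eq_zero _ (coeff_eq_zero_of_subst_zero _ hzero)
  refine ⟨fun j => subst (Sum.elim ι fun j => X (Sum.inr j) - g j) (β j), ?_⟩
  have h2 := congrArg (substAlgHom (R := ℝ) hB) hβ
  rw [map_sum] at h2
  simp only [map_mul, substAlgHom_apply, subst_X hB, Sum.elim_inr] at h2
  refine Eq.trans ?_ h2
  rw [subst_comp_subst_apply hA hB]
  have hid : (fun s => subst (Sum.elim ι fun j => X (Sum.inr j) - g j)
      ((Sum.elim ι fun j => X (Sum.inr j) + g j : Fin n ⊕ Fin m → _) s)) =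
      (X : Fin n ⊕ Fin m → MvPowerSeries (Fin n ⊕ Fin m) ℝ) := by
    funext s
    rcases s with i | j
    · simp only [Sum.elim_inl, hι]
      exact subst_X hB _
    · simp only [Sum.elim_inr]
      rw [subst_add hB, hfix _ hB, subst_X hB]
      simp
  rw [hid, subst_self]
  rfl
end
end

section
/- For every natural number c there exists a constant B > 0 such that for all integers i, k with 1 ≤ i ≤ k, one has (k!/(i−1)!)·k^{i−k+c}·2^{−i} ≤ B. -/
open scoped Nat

lemma ffb_aux0 (k n : ℕ) (h : n ≤ k) : k ! ≤ n ! * k ^ (k - n) := by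
  have h1 := Nat.factorial_mul_descFactorial (n := k) (k := k - n) (by omega)
  rw [show k - (k - n) = n by omega] at h1
  rw [← h1]
  exact Nat.mul_le_mul_left _ (Nat.descFactorial_le_pow _ _)

lemma ffb_aux (k n : ℕ) (h : n ≤ k) :
    k ! * 2 ^ (k / 2) ≤ n ! * k ^ (k - n) * 2 ^ n := by
  induction h using Nat.decreasingInduction with
  | self =>
    simpa using Nat.mul_le_mul_left _ (Nat.pow_le_pow_right (by norm_num) (Nat.div_le_self k 2))
  | of_succ n hn ih =>
    by_cases h2 : 2 * (n + 1) ≤ k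
    · refine ih.trans ?_
      rw [Nat.factorial_succ, show k - n = (k - (n + 1)) + 1 by omega, pow_succ, pow_succ]
      calc (n + 1) * n ! * k ^ (k - (n + 1)) * (2 ^ n * 2)
          = (n ! * k ^ (k - (n + 1)) * 2 ^ n) * (2 * (n + 1)) := by ring
        _ ≤ (n ! * k ^ (k - (n + 1)) * 2 ^ n) * k := Nat.mul_le_mul_left _ h2
        _ = _ := by ring
    · exact Nat.mul_le_mul (ffb_aux0 k n (by omega))
        (Nat.pow_le_pow_right (by norm_num) (by omega))

/-- For every `c : ℕ` there is a bound `B > 0` such that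
`(k!/(i−1)!)·k^{i−k+c}·2^{−i} ≤ B` for all `1 ≤ i ≤ k`. -/
theorem falling_factorial_bound (c : ℕ) :
    ∃ B : ℝ, 0 < B ∧ ∀ i k : ℕ, 1 ≤ i → i ≤ k →
      ((k ! : ℝ) / ((i - 1)! : ℝ)) * (k : ℝ) ^ ((i : ℤ) - (k : ℤ) + (c : ℤ)) *
        (2 : ℝ) ^ (-(i : ℤ)) ≤ B := by
  have ht := tendsto_pow_const_mul_const_pow_of_abs_lt_one (c + 1) (r := (1 / 2 : ℝ))
    (by rw [abs_of_pos] <;> norm_num)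
  obtain ⟨M, hM⟩ := ht.bddAbove_range
  refine ⟨2 ^ (c + 1) * max M 1, by positivity, ?_⟩
  intro i k hi hik
  obtain ⟨n, rfl⟩ : ∃ n, i = n + 1 := ⟨i - 1, by omega⟩
  have hk : (0 : ℝ) < k := by exact_mod_cast (by omega : 0 < k)
  have hM1 : ((k / 2 + 1 : ℕ) : ℝ) ^ (c + 1) * (1 / 2) ^ (k / 2 + 1) ≤ max M 1 :=
    (hM ⟨k / 2 + 1, rfl⟩).trans (le_max_left _ _)
  have key : (k ! : ℝ) * 2 ^ (k / 2) ≤ n ! * k ^ (k - n) * 2 ^ n := by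
    exact_mod_cast ffb_aux k n (by omega)
  have hkk : (k : ℝ) ≤ 2 * ((k / 2 + 1 : ℕ) : ℝ) := by
    exact_mod_cast (by omega : k ≤ 2 * (k / 2 + 1))
  have hn : (0 : ℝ) < n ! := by exact_mod_cast Nat.factorial_pos n
  have e1 : (k : ℝ) ^ (((n + 1 : ℕ) : ℤ) - (k : ℤ) + (c : ℤ))
      = k ^ (c + 1) / k ^ (k - n) := by
    rw [eq_div_iff (by positivity), ← zpow_natCast, ← zpow_natCast, ← zpow_add₀ hk.ne']
    congr 1
    push_cast [Nat.cast_sub (show n ≤ k by omega)]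
    ring
  have e2 : (2 : ℝ) ^ (-((n + 1 : ℕ) : ℤ)) = 1 / (2 ^ n * 2) := by
    rw [zpow_neg, zpow_natCast, pow_succ, one_div]
  rw [e1, e2, Nat.add_sub_cancel]
  calc (k ! : ℝ) / n ! * (k ^ (c + 1) / k ^ (k - n)) * (1 / (2 ^ n * 2))
      = (k ! / (n ! * k ^ (k - n) * 2 ^ n)) * (k ^ (c + 1) / 2) := by
        field_simp
    _ ≤ (1 / 2 ^ (k / 2)) * (k ^ (c + 1) / 2) := by
        apply mul_le_mul_of_nonneg_right _ (by positivity)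
        rw [div_le_div_iff₀ (by positivity) (by positivity), one_mul]
        exact key
    _ = k ^ (c + 1) * (1 / 2) ^ (k / 2 + 1) := by
        rw [pow_succ (1 / 2 : ℝ), one_div_pow]; ring
    _ ≤ (2 * ((k / 2 + 1 : ℕ) : ℝ)) ^ (c + 1) * (1 / 2) ^ (k / 2 + 1) := by
        gcongr
    _ = 2 ^ (c + 1) * (((k / 2 + 1 : ℕ) : ℝ) ^ (c + 1) * (1 / 2) ^ (k / 2 + 1)) := by
        rw [mul_pow]; ring
    _ ≤ _ := by gcongr
end

section
/- For all natural numbers c and c′ there exists a constant b > 0 such that for all integers k ≥ 1 and i ≥ 0, one has k!·(2k)^{i+1+c} / ((k+i)!·2^{k+i+1−c′}) ≤ b / (k²·(i+1)²). In particular, for all natural numbers c and c′ the double series Σ_{k=1}^{∞} Σ_{i=0}^{∞} k!·(2k)^{i+1+c} / ((k+i)!·2^{k+i+1−c′}) converges. -/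
open scoped Nat

lemma aux_fact (k i : ℕ) :
    k ^ i * k ! * (2 * k + i * (i + 1)) ≤ 2 * k * (k + i)! := by
  induction i with
  | zero => simp; nlinarith
  | succ i ih =>
    have e : (k + (i + 1))! = (k + i + 1) * (k + i)! := by
      rw [← add_assoc, Nat.factorial_succ]
    rw [e]
    have h1 : k * (2 * k + (i + 1) * (i + 1 + 1)) ≤ (k + i + 1) * (2 * k + i * (i + 1)) := by
      have : 0 ≤ i * (i + 1) ^ 2 := Nat.zero_le _
      nlinarith
    calc k ^ (i + 1) * k ! * (2 * k + (i + 1) * (i + 1 + 1))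
        = k ^ i * k ! * (k * (2 * k + (i + 1) * (i + 1 + 1))) := by ring
      _ ≤ k ^ i * k ! * ((k + i + 1) * (2 * k + i * (i + 1))) := Nat.mul_le_mul_left _ h1
      _ = (k + i + 1) * (k ^ i * k ! * (2 * k + i * (i + 1))) := by ring
      _ ≤ (k + i + 1) * (2 * k * (k + i)!) := Nat.mul_le_mul_left _ ih
      _ = _ := by ring

lemma aux_fact2 (k i : ℕ) (hk : 1 ≤ k) :
    k ^ i * k ! * (i + 1) ^ 2 ≤ 4 * k * (k + i)! := by
  have h1 : (i + 1) ^ 2 ≤ 2 * (2 * k + i * (i + 1)) := by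
    nlinarith [Nat.zero_le (i ^ 2)]
  calc _ ≤ k ^ i * k ! * (2 * (2 * k + i * (i + 1))) := Nat.mul_le_mul_left _ h1
    _ = 2 * (k ^ i * k ! * (2 * k + i * (i + 1))) := by ring
    _ ≤ 2 * (2 * k * (k + i)!) := Nat.mul_le_mul_left _ (aux_fact k i)
    _ = _ := by ring

lemma aux_bound (c c' : ℕ) : ∃ b : ℝ, 0 < b ∧ ∀ k i : ℕ, 1 ≤ k →
      (k ! : ℝ) * (2 * (k : ℝ)) ^ (i + 1 + c) /
          (((k + i)! : ℝ) * (2 : ℝ) ^ ((k : ℤ) + (i : ℤ) + 1 - (c' : ℤ))) ≤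
        b / ((k : ℝ) ^ 2 * ((i : ℝ) + 1) ^ 2) := by
  obtain ⟨M, hM⟩ :=
    (tendsto_pow_const_div_const_pow_of_one_lt (c + 4) (one_lt_two : (1:ℝ) < 2)).bddAbove_range
  have hM' : ∀ k : ℕ, (k : ℝ) ^ (c + 4) ≤ M * 2 ^ k := fun k => by
    have := hM ⟨k, rfl⟩
    simp only at this
    rwa [div_le_iff₀ (by positivity)] at this
  have hMpos : 0 < M := by
    have := hM' 1
    norm_num at this
    linarith
  refine ⟨2 ^ c * 2 ^ c' * 4 * M, by positivity, fun k i hk => ?_⟩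
  have hk0 : (0:ℝ) < k := by exact_mod_cast hk
  have e : (2 : ℝ) ^ ((k : ℤ) + (i : ℤ) + 1 - (c' : ℤ)) = 2 ^ (k + i + 1) / 2 ^ c' := by
    rw [zpow_sub₀ (by norm_num)]
    norm_cast
  have hF : (k:ℝ) ^ i * k ! * ((i:ℝ) + 1) ^ 2 ≤ 4 * k * ((k + i)! : ℝ) := by
    exact_mod_cast aux_fact2 k i hk
  rw [e, div_le_div_iff₀ (by positivity) (by positivity), mul_div_assoc', mul_div_assoc',
    le_div_iff₀ (by positivity)]
  calc (k ! : ℝ) * (2 * (k : ℝ)) ^ (i + 1 + c) * ((k : ℝ) ^ 2 * ((i : ℝ) + 1) ^ 2) * 2 ^ c'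
      = 2 ^ (i + 1 + c) * 2 ^ c' * (k:ℝ) ^ (c + 3) * ((k:ℝ) ^ i * k ! * ((i:ℝ) + 1) ^ 2) := by
        rw [mul_pow]; ring
    _ ≤ 2 ^ (i + 1 + c) * 2 ^ c' * (k:ℝ) ^ (c + 3) * (4 * k * ((k + i)! : ℝ)) := by gcongr
    _ = 2 ^ (i + 1 + c) * 2 ^ c' * 4 * ((k + i)! : ℝ) * (k:ℝ) ^ (c + 4) := by ring
    _ ≤ 2 ^ (i + 1 + c) * 2 ^ c' * 4 * ((k + i)! : ℝ) * (M * 2 ^ k) := by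
        gcongr; exact hM' k
    _ = _ := by ring

/-- For all `c, c' : ℕ` there is `b > 0` with
`k!·(2k)^{i+1+c} / ((k+i)!·2^{k+i+1−c'}) ≤ b/(k²(i+1)²)` for all `k ≥ 1`, `i ≥ 0`;
in particular the corresponding double series converges. -/
theorem factorial_ratio_double_series_bound (c c' : ℕ) :
    (∃ b : ℝ, 0 < b ∧ ∀ k i : ℕ, 1 ≤ k →
      (k ! : ℝ) * (2 * (k : ℝ)) ^ (i + 1 + c) /
          (((k + i)! : ℝ) * (2 : ℝ) ^ ((k : ℤ) + (i : ℤ) + 1 - (c' : ℤ))) ≤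
        b / ((k : ℝ) ^ 2 * ((i : ℝ) + 1) ^ 2)) ∧
    Summable (fun p : ℕ × ℕ =>
      ((p.1 + 1)! : ℝ) * (2 * ((p.1 : ℝ) + 1)) ^ (p.2 + 1 + c) /
        (((p.1 + 1 + p.2)! : ℝ) * (2 : ℝ) ^ (((p.1 : ℤ) + 1) + (p.2 : ℤ) + 1 - (c' : ℤ)))) := by
  refine ⟨aux_bound c c', ?_⟩
  obtain ⟨b, hb, h⟩ := aux_bound c c'
  have hs : Summable (fun n : ℕ => 1 / ((n : ℝ) + 1) ^ 2) := by
    have := (summable_nat_add_iff 1).2 (Real.summable_one_div_nat_pow.2 (one_lt_two))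
    simpa using this
  have hp := (hs.mul_of_nonneg hs (fun n => by positivity) (fun n => by positivity)).mul_left b
  refine Summable.of_nonneg_of_le (fun p => by positivity) (fun p => ?_) hp
  have := h (p.1 + 1) p.2 (by omega)
  push_cast at this
  refine this.trans (le_of_eq ?_)
  field_simp
end

section
/- Let φ : ℝ → ℝ be a C^∞ function such that φ = 1 on [−1/2, 1/2] and φ = 0 outside [−1, 1]. Then for every (y₁, y₂, y₃) ∈ ℝ × (−1/2, 1/2) × ℝ the series S(y₁,y₂,y₃) = Σ_{k=1}^{∞} φ(k·y₁)·( k!·y₁^{k−1}·y₃ − Σ_{i=1}^{k} (k!/(i−1)!)·y₁^{k−i}·y₂^{i} ) converges, and the function S so defined is C^∞ on the open set ℝ × (−1/2, 1/2) × ℝ. Consequently, the function π̃₄(y₁,y₂,y₃,y₄) = y₄ − S(y₁,y₂,y₃) is C^∞ on ℝ × (−1/2, 1/2) × ℝ². -/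
open scoped Nat

noncomputable section

/-- The summand of index `k+1` (so `k+1` runs over `1, 2, …`) of the series defining the
smooth function `S` (the correction part of `π̃₄`). -/
def piTerm (phi : ℝ → ℝ) (k : ℕ) (y : ℝ × ℝ × ℝ) : ℝ :=
  phi (((k : ℝ) + 1) * y.1) *
    (((k + 1)! : ℝ) * y.1 ^ k * y.2.2 -
      ∑ i ∈ Finset.Icc 1 (k + 1),
        (((k + 1)! : ℝ) / ((i - 1)! : ℝ)) * y.1 ^ (k + 1 - i) * y.2.1 ^ i)


lemma pw1 (c : ℝ) (hc : 0 < c) (j : ℕ) : ∀ v : ℝ → ℝ, ContDiff ℝ (⊤ : ℕ∞) v →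
    (∀ t, c < |t| → v t = 0) → ∃ C : ℝ, 0 ≤ C ∧ ∀ (m : ℕ) (t : ℝ),
      |iteratedDeriv j (fun s => s ^ m * v s) t| ≤ C * ((m : ℝ) + 1) ^ j * c ^ m := by
  induction j with
  | zero =>
    intro v hv h0
    have hcs : HasCompactSupport v := by
      refine HasCompactSupport.intro (isCompact_Icc (a := -c) (b := c)) ?_
      intro t ht
      apply h0
      by_contra h
      exact ht (abs_le.1 (not_lt.1 h))
    obtain ⟨C, hC⟩ := hcs.exists_bound_of_continuous hv.continuous
    refine ⟨C, (norm_nonneg _).trans (hC 0), fun m t => ?_⟩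
    have hC0 : 0 ≤ C := (norm_nonneg _).trans (hC 0)
    simp only [iteratedDeriv_zero, pow_zero, mul_one, abs_mul, abs_pow]
    by_cases h : c < |t|
    · rw [h0 t h]; simp; positivity
    · rw [mul_comm]
      have := hC t
      rw [Real.norm_eq_abs] at this
      gcongr
      exact not_lt.1 h
  | succ j ih =>
    intro v hv h0
    have hv' : ContDiff ℝ (⊤ : ℕ∞) (deriv v) := (contDiff_infty_iff_deriv.1 hv).2
    have h0' : ∀ t, c < |t| → deriv v t = 0 := by
      intro t ht
      have : v =ᶠ[nhds t] fun _ => 0 := by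
        filter_upwards [(isOpen_lt continuous_const continuous_abs).mem_nhds ht] with s hs
        exact h0 s hs
      rw [this.deriv_eq]; simp
    obtain ⟨C1, hC1, H1⟩ := ih v hv h0
    obtain ⟨C2, hC2, H2⟩ := ih _ hv' h0'
    refine ⟨C1 / c + C2, by positivity, fun m t => ?_⟩
    have hd : deriv (fun s => s ^ m * v s) =
        fun s => (m : ℝ) * (s ^ (m - 1) * v s) + s ^ m * deriv v s := by
      ext s
      have := (hasDerivAt_pow m s).mul ((hv.differentiable (by simp)) s).hasDerivAt
      refine this.deriv.trans ?_
      ring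
    have hs : ∀ (m : ℕ) (w : ℝ → ℝ), ContDiff ℝ (⊤ : ℕ∞) w →
        ContDiffAt ℝ j (fun s => s ^ m * w s) t := by
      intro m w hw
      have : ContDiff ℝ (⊤ : ℕ∞) (fun s => s ^ m * w s) := by fun_prop
      exact (this.of_le (by exact_mod_cast le_top)).contDiffAt
    rw [iteratedDeriv_succ', hd, iteratedDeriv_fun_add (contDiffAt_const.mul (hs _ _ hv)) (hs _ _ hv'),
      iteratedDeriv_const_mul_field]
    refine (abs_add_le _ _).trans ?_
    have h2 := H2 m t
    have h1 : |(m : ℝ) * iteratedDeriv j (fun s => s ^ (m - 1) * v s) t| ≤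
        C1 / c * ((m : ℝ) + 1) ^ (j + 1) * c ^ m := by
      rcases m with _ | m
      · simp; positivity
      · have := H1 m t
        rw [abs_mul, Nat.abs_cast]
        simp only [Nat.add_sub_cancel]
        calc _ ≤ ((m + 1 : ℕ) : ℝ) * (C1 * ((m : ℝ) + 1) ^ j * c ^ m) := by gcongr
          _ = C1 / c * ((m : ℝ) + 1) ^ (j + 1) * c ^ (m + 1) := by
            push_cast; field_simp; ring
          _ ≤ _ := by gcongr; push_cast; linarith
    have h3 : C2 * ((m : ℝ) + 1) ^ j * c ^ m ≤ C2 * ((m : ℝ) + 1) ^ (j + 1) * c ^ m := by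
      gcongr
      · linarith [(Nat.cast_nonneg m : (0:ℝ) ≤ m)]
      · omega
    calc _ ≤ _ := add_le_add h1 (h2.trans h3)
      _ = _ := by ring

lemma pw2 {E : Type*} [NormedAddCommGroup E] [NormedSpace ℝ E] (L : E →L[ℝ] ℝ) (hL : ‖L‖ ≤ 1)
    (f : ℝ → ℝ) (hf : ContDiff ℝ (⊤ : ℕ∞) f) (j : ℕ) (x : E) :
    ‖iteratedFDeriv ℝ j (fun y => f (L y)) x‖ ≤ |iteratedDeriv j f (L x)| := by
  have := L.iteratedFDeriv_comp_right hf x (i := j) (by exact_mod_cast le_top)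
  change iteratedFDeriv ℝ j (fun y => f (L y)) x = _ at this
  rw [this]
  refine (ContinuousMultilinearMap.norm_compContinuousLinearMap_le _ _).trans ?_
  rw [norm_iteratedFDeriv_eq_norm_iteratedDeriv, Real.norm_eq_abs]
  refine mul_le_of_le_one_right (abs_nonneg _) ?_
  exact Finset.prod_le_one (fun _ _ => norm_nonneg _) (fun _ _ => hL)

lemma pw3 (n : ℕ) : (((n + 1)! : ℕ) : ℝ) ≤ ((n : ℝ) + 1) ^ (n + 2) * Real.exp (-(n : ℝ)) := by
  induction n with
  | zero => simp
  | succ n ih =>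
    rw [Nat.factorial_succ]
    push_cast
    have key : ((n : ℝ) + 1) ^ (n + 2) ≤ ((n : ℝ) + 1 + 1) ^ (n + 2) * Real.exp (-1) := by
      have h := Real.add_one_le_exp (-(1 / ((n : ℝ) + 2)))
      have h' : ((n : ℝ) + 1) ≤ ((n : ℝ) + 2) * Real.exp (-(1 / ((n : ℝ) + 2))) := by
        calc ((n : ℝ) + 1) = ((n : ℝ) + 2) * (-(1 / ((n : ℝ) + 2)) + 1) := by field_simp; ring
          _ ≤ _ := by gcongr
      calc ((n : ℝ) + 1) ^ (n + 2) ≤ (((n : ℝ) + 2) * Real.exp (-(1 / ((n : ℝ) + 2)))) ^ (n + 2) := by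
            gcongr
        _ = _ := by
            rw [mul_pow, ← Real.exp_nat_mul]
            congr 2
            · ring
            · push_cast; field_simp
    calc ((n : ℝ) + 1 + 1) * ((n + 1)! : ℕ) ≤
        ((n : ℝ) + 1 + 1) * (((n : ℝ) + 1 + 1) ^ (n + 2) * Real.exp (-1) * Real.exp (-(n : ℝ))) := by
          gcongr
          exact ih.trans (by gcongr)
      _ = _ := by
          rw [show (-((n : ℝ) + 1)) = -1 + -(n : ℝ) by ring, Real.exp_add]; ring

/-- localized monomial -/
def pG (phi psi : ℝ → ℝ) (n m i : ℕ) (y : ℝ × ℝ × ℝ) : ℝ :=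
  (((n : ℝ) * y.1) ^ m * phi ((n : ℝ) * y.1)) * (y.2.1 ^ i * psi y.2.1)

lemma pG_smooth (phi psi : ℝ → ℝ) (hphi : ContDiff ℝ (⊤ : ℕ∞) phi) (hpsi : ContDiff ℝ (⊤ : ℕ∞) psi)
    (n m i : ℕ) : ContDiff ℝ (⊤ : ℕ∞) (pG phi psi n m i) := by
  unfold pG; fun_prop

lemma pG_bound (phi psi : ℝ → ℝ) (hphi : ContDiff ℝ (⊤ : ℕ∞) phi) (hpsi : ContDiff ℝ (⊤ : ℕ∞) psi)
    (c : ℝ) (hc : 0 < c) (h1 : ∀ t, 1 < |t| → phi t = 0) (h2 : ∀ t, c < |t| → psi t = 0) (j : ℕ) :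
    ∃ C : ℝ, 0 ≤ C ∧ ∀ (n m i : ℕ) (y : ℝ × ℝ × ℝ), m ≤ n → i ≤ n →
      ‖iteratedFDeriv ℝ j (pG phi psi n m i) y‖ ≤ C * ((n : ℝ) + 1) ^ (2 * j) * c ^ i := by
  choose A hA0 hA using fun l => pw1 1 one_pos l phi hphi h1
  choose B hB0 hB using fun l => pw1 c hc l psi hpsi h2
  refine ⟨∑ l ∈ Finset.range (j + 1), (j.choose l : ℝ) * A l * B (j - l),
    Finset.sum_nonneg fun l _ => mul_nonneg (mul_nonneg (by positivity) (hA0 l)) (hB0 _), ?_⟩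
  intro n m i y hm hi
  have s1 : ContDiff ℝ (⊤ : ℕ∞) (fun s : ℝ => s ^ m * phi s) := by fun_prop
  have s1' : ContDiff ℝ (⊤ : ℕ∞) (fun s : ℝ => ((n : ℝ) * s) ^ m * phi ((n : ℝ) * s)) := by fun_prop
  have s2 : ContDiff ℝ (⊤ : ℕ∞) (fun s : ℝ => s ^ i * psi s) := by fun_prop
  have t1 : ContDiff ℝ (⊤ : ℕ∞) (fun y : ℝ × ℝ × ℝ => ((n : ℝ) * y.1) ^ m * phi ((n : ℝ) * y.1)) := by
    fun_prop
  have t2 : ContDiff ℝ (⊤ : ℕ∞) (fun y : ℝ × ℝ × ℝ => y.2.1 ^ i * psi y.2.1) := by fun_prop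
  refine (norm_iteratedFDeriv_mul_le t1 t2 y (n := j) (by exact_mod_cast le_top)).trans ?_
  rw [Finset.sum_mul, Finset.sum_mul]
  refine Finset.sum_le_sum fun l hl => ?_
  have hl' : l ≤ j := by simpa [Nat.lt_succ_iff] using hl
  have L2 : ‖(ContinuousLinearMap.fst ℝ ℝ ℝ).comp (ContinuousLinearMap.snd ℝ ℝ (ℝ × ℝ))‖ ≤ 1 := by
    refine (ContinuousLinearMap.opNorm_comp_le _ _).trans ?_
    exact mul_le_one₀ (ContinuousLinearMap.norm_fst_le ..) (norm_nonneg _)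
      (ContinuousLinearMap.norm_snd_le ..)
  have b1 := pw2 (ContinuousLinearMap.fst ℝ ℝ (ℝ × ℝ)) (ContinuousLinearMap.norm_fst_le ..) _ s1' l y
  have b2 := pw2 _ L2 _ s2 (j - l) y
  have e := congrFun (iteratedDeriv_comp_const_smul (n := l)
    (s1.of_le (by exact_mod_cast le_top)) (n : ℝ)) y.1
  have b1' : ‖iteratedFDeriv ℝ l
      (fun y : ℝ × ℝ × ℝ => ((n : ℝ) * y.1) ^ m * phi ((n : ℝ) * y.1)) y‖ ≤
      A l * ((n : ℝ) + 1) ^ (2 * l) := by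
    refine b1.trans ?_
    change |iteratedDeriv l _ y.1| ≤ _
    rw [e, smul_eq_mul, abs_mul, abs_pow, Nat.abs_cast]
    have := hA l m ((n : ℝ) * y.1)
    rw [one_pow, mul_one] at this
    have hA0 := hA0 l
    calc _ ≤ ((n : ℝ) + 1) ^ l * (A l * ((n : ℝ) + 1) ^ l) := by
          gcongr
          · linarith
          · refine this.trans ?_
            gcongr
      _ = _ := by ring
  have b2' : ‖iteratedFDeriv ℝ (j - l) (fun y : ℝ × ℝ × ℝ => y.2.1 ^ i * psi y.2.1) y‖ ≤
      B (j - l) * ((n : ℝ) + 1) ^ (2 * (j - l)) * c ^ i := by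
    refine b2.trans ((hB _ _ _).trans ?_)
    have := hB0 (j - l)
    gcongr ?_ * ?_ * _
    calc ((i : ℝ) + 1) ^ (j - l) ≤ ((n : ℝ) + 1) ^ (j - l) := by gcongr
      _ ≤ _ := by
        apply pow_le_pow_right₀
        · linarith [(Nat.cast_nonneg n : (0:ℝ) ≤ n)]
        · omega
  have := hA0 l
  have := hB0 (j - l)
  calc _ ≤ (j.choose l : ℝ) * (A l * ((n : ℝ) + 1) ^ (2 * l)) *
        (B (j - l) * ((n : ℝ) + 1) ^ (2 * (j - l)) * c ^ i) := by gcongr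
    _ = _ := by
      rw [show 2 * j = 2 * l + 2 * (j - l) by omega, pow_add]; ring

lemma pw4 {E : Type*} [NormedAddCommGroup E] [NormedSpace ℝ E] (f : ℕ → E → ℝ)
    (hf : ∀ k, ContDiff ℝ (⊤ : ℕ∞) (f k))
    (hb : ∀ j : ℕ, ∃ C : ℝ, ∀ k y, ‖iteratedFDeriv ℝ j (f k) y‖ ≤
      C * (((k + 2 : ℕ) : ℝ) ^ (2 * j + 2) * Real.exp (-(1 / 4) * ((k + 2 : ℕ) : ℝ)))) :
    ContDiff ℝ (⊤ : ℕ∞) (fun y => ∑' k, f k y) ∧ ∀ y, Summable (fun k => f k y) := by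
  choose C hC using hb
  have hs : ∀ j : ℕ, Summable (fun k : ℕ => C j * (((k + 2 : ℕ) : ℝ) ^ (2 * j + 2) *
      Real.exp (-(1 / 4) * ((k + 2 : ℕ) : ℝ)))) := by
    intro j
    have h := Real.summable_pow_mul_exp_neg_nat_mul (2 * j + 2) (r := 1 / 4) (by norm_num)
    exact ((summable_nat_add_iff 2).2 h).mul_left _
  refine ⟨contDiff_tsum hf (fun j _ => hs j) (fun j k y _ => hC j k y), fun y => ?_⟩
  refine Summable.of_norm_bounded (hs 0) fun k => ?_
  have := hC 0 k y
  rwa [norm_iteratedFDeriv_zero] at this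

lemma pw5 (k : ℕ) : (((k + 1)! : ℕ) : ℝ) / ((k : ℝ) + 1) ^ (k + 1) ≤
    ((k : ℝ) + 1) * Real.exp (-(k : ℝ)) := by
  rw [div_le_iff₀ (by positivity)]
  refine (pw3 k).trans (le_of_eq ?_)
  ring

lemma pw6 (k : ℕ) : ∑ i ∈ Finset.Icc 1 (k + 1),
    (((k + 1)! : ℝ) / ((i - 1)! : ℝ)) / ((k : ℝ) + 1) ^ (k + 1 - i) * (3 / 4) ^ i ≤
    Real.exp 2 * ((k : ℝ) + 2) ^ 2 * Real.exp (-(1 / 4) * ((k : ℝ) + 2)) := by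
  have h : ∀ i ∈ Finset.Icc 1 (k + 1),
      (((k + 1)! : ℝ) / ((i - 1)! : ℝ)) / ((k : ℝ) + 1) ^ (k + 1 - i) * (3 / 4) ^ i ≤
      (((k + 1)! : ℕ) : ℝ) / ((k : ℝ) + 1) ^ (k + 1) * ((k : ℝ) + 1) *
        ((((k : ℝ) + 1) * (3 / 4)) ^ i / (i ! : ℝ)) := by
    intro i hi
    obtain ⟨hi1, hi2⟩ := Finset.mem_Icc.1 hi
    obtain ⟨i, rfl⟩ : ∃ i', i = i' + 1 := ⟨i - 1, by omega⟩
    obtain ⟨m, hm⟩ : ∃ m, k + 1 = m + (i + 1) := ⟨k + 1 - (i + 1), by omega⟩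
    have hx : ((i : ℝ) + 1) ≤ (k : ℝ) + 1 := by exact_mod_cast hi2
    have e : (((k + 1)! : ℝ) / ((i + 1 - 1)! : ℝ)) / ((k : ℝ) + 1) ^ (k + 1 - (i + 1)) *
        (3 / 4) ^ (i + 1) = (((k + 1)! : ℕ) : ℝ) / ((k : ℝ) + 1) ^ (k + 1) * ((i : ℝ) + 1) *
        ((((k : ℝ) + 1) * (3 / 4)) ^ (i + 1) / ((i + 1)! : ℝ)) := by
      rw [show k + 1 - (i + 1) = m by omega, Nat.factorial_succ i, Nat.add_sub_cancel, mul_pow]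
      generalize ((k + 1)! : ℕ) = F
      rw [hm, pow_add]
      push_cast
      field_simp
      ring
    rw [e]
    gcongr
  have hsum : ∑ i ∈ Finset.Icc 1 (k + 1), ((((k : ℝ) + 1) * (3 / 4)) ^ i / (i ! : ℝ)) ≤
      Real.exp (((k : ℝ) + 1) * (3 / 4)) := by
    refine le_trans ?_ (Real.sum_le_exp_of_nonneg (by positivity) (k + 2))
    refine Finset.sum_le_sum_of_subset_of_nonneg ?_ (fun _ _ _ => by positivity)
    intro i hi
    simp only [Finset.mem_Icc, Finset.mem_range] at *
    omega
  refine (Finset.sum_le_sum h).trans ?_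
  rw [← Finset.mul_sum]
  calc _ ≤ (((k : ℝ) + 1) * Real.exp (-(k : ℝ))) * ((k : ℝ) + 1) *
        Real.exp (((k : ℝ) + 1) * (3 / 4)) := by
        gcongr
        exact pw5 k
    _ = ((k : ℝ) + 1) ^ 2 * Real.exp (-(k : ℝ) + ((k : ℝ) + 1) * (3 / 4)) := by
        rw [Real.exp_add]; ring
    _ ≤ ((k : ℝ) + 2) ^ 2 * Real.exp (2 + -(1 / 4) * ((k : ℝ) + 2)) := by
        refine mul_le_mul ?_ (Real.exp_le_exp.2 ?_) (by positivity) (by positivity)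
        · gcongr; linarith
        · linarith
    _ = _ := by rw [Real.exp_add]; ring

lemma pw7 (k : ℕ) : (((k + 1)! : ℕ) : ℝ) / ((k : ℝ) + 1) ^ k ≤
    Real.exp 2 * ((k : ℝ) + 2) ^ 2 * Real.exp (-(1 / 4) * ((k : ℝ) + 2)) := by
  have h := pw5 k
  calc (((k + 1)! : ℕ) : ℝ) / ((k : ℝ) + 1) ^ k =
      (((k + 1)! : ℕ) : ℝ) / ((k : ℝ) + 1) ^ (k + 1) * ((k : ℝ) + 1) := by
        rw [pow_succ]; field_simp
    _ ≤ ((k : ℝ) + 1) * Real.exp (-(k : ℝ)) * ((k : ℝ) + 1) := by gcongr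
    _ = ((k : ℝ) + 1) ^ 2 * Real.exp (-(k : ℝ)) := by ring
    _ ≤ ((k : ℝ) + 2) ^ 2 * Real.exp (2 + -(1 / 4) * ((k : ℝ) + 2)) := by
        refine mul_le_mul ?_ (Real.exp_le_exp.2 ?_) (by positivity) (by positivity)
        · gcongr; linarith
        · linarith [(Nat.cast_nonneg k : (0:ℝ) ≤ k)]
    _ = _ := by rw [Real.exp_add]; ring

/-- Let `phi` be `C^∞`, `phi = 1` on `[−1/2, 1/2]` and `phi = 0` outside `[−1, 1]`.  Then the
series `S(y) = Σ_{k=1}^∞ phi(k y₁)(k! y₁^{k−1} y₃ − Σ_{i=1}^k (k!/(i−1)!) y₁^{k−i} y₂^i)`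
converges for `|y₂| < 1/2`, the function `S` is `C^∞` there, and consequently
`π̃₄(y) = y₄ − S(y₁,y₂,y₃)` is `C^∞` on `ℝ × (−1/2, 1/2) × ℝ²`. -/
theorem pi4_smooth (phi : ℝ → ℝ) (hphi : ContDiff ℝ (⊤ : ℕ∞) phi)
    (hphi1 : ∀ t ∈ Set.Icc (-(1 / 2) : ℝ) (1 / 2), phi t = 1)
    (hphi0 : ∀ t : ℝ, t ∉ Set.Icc (-1 : ℝ) 1 → phi t = 0) :
    (∀ y : ℝ × ℝ × ℝ, |y.2.1| < 1 / 2 → Summable (fun k : ℕ => piTerm phi k y)) ∧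
    ContDiffOn ℝ (⊤ : ℕ∞) (fun y => ∑' k : ℕ, piTerm phi k y)
      {y : ℝ × ℝ × ℝ | |y.2.1| < 1 / 2} ∧
    ContDiffOn ℝ (⊤ : ℕ∞)
      (fun z : ℝ × ℝ × ℝ × ℝ => z.2.2.2 - ∑' k : ℕ, piTerm phi k (z.1, z.2.1, z.2.2.1))
      {z : ℝ × ℝ × ℝ × ℝ | |z.2.1| < 1 / 2} := by
  have hphi0' : ∀ t : ℝ, 1 < |t| → phi t = 0 := fun t ht =>
    hphi0 t fun h => absurd (abs_le.2 h) (not_le.2 ht)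
  obtain ⟨psi, hpsi, hpsi1, hpsi0⟩ : ∃ psi : ℝ → ℝ, ContDiff ℝ (⊤ : ℕ∞) psi ∧
      (∀ t, |t| < 1 / 2 → psi t = 1) ∧ ∀ t, 3 / 4 < |t| → psi t = 0 := by
    let b : ContDiffBump (0 : ℝ) := ⟨1 / 2, 3 / 4, by norm_num, by norm_num⟩
    refine ⟨b, b.contDiff, fun t ht => b.one_of_mem_closedBall ?_, fun t ht => b.zero_of_le_dist ?_⟩
    · simpa [Metric.mem_closedBall, Real.dist_eq, b] using ht.le
    · simpa [Real.dist_eq, b] using ht.le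
  have hG := pG_smooth phi psi hphi hpsi
  have hGb := pG_bound phi psi hphi hpsi (3 / 4) (by norm_num) hphi0' hpsi0
  let A : ℕ → ℝ × ℝ × ℝ → ℝ := fun k =>
    ((((k + 1)! : ℕ) : ℝ) / ((k : ℝ) + 1) ^ k) • pG phi psi (k + 1) k 0
  let B : ℕ → ℝ × ℝ × ℝ → ℝ := fun k y => ∑ i ∈ Finset.Icc 1 (k + 1),
    (((((k + 1)! : ℝ) / ((i - 1)! : ℝ)) / ((k : ℝ) + 1) ^ (k + 1 - i)) •
      pG phi psi (k + 1) (k + 1 - i) i) y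
  have hjle : ∀ j : ℕ, ((j : ℕ∞) : WithTop ℕ∞) ≤ ((⊤ : ℕ∞) : WithTop ℕ∞) := fun j => by
    exact_mod_cast le_top
  have hGs : ∀ n m i (a : ℝ) (j : ℕ) (y), ‖iteratedFDeriv ℝ j (a • pG phi psi n m i) y‖ =
      |a| * ‖iteratedFDeriv ℝ j (pG phi psi n m i) y‖ := by
    intro n m i a j y
    rw [iteratedFDeriv_const_smul_apply ((hG n m i).of_le (hjle j)).contDiffAt, norm_smul,
      Real.norm_eq_abs]
  have hAc : ∀ k, ContDiff ℝ (⊤ : ℕ∞) (A k) := fun k => contDiff_const.smul (hG _ _ _)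
  have hBc : ∀ k, ContDiff ℝ (⊤ : ℕ∞) (B k) := fun k =>
    ContDiff.sum fun i _ => contDiff_const.smul (hG _ _ _)
  obtain ⟨hA1, hA2⟩ := pw4 A hAc (by
    intro j
    obtain ⟨C, hC, H⟩ := hGb j
    refine ⟨C * Real.exp 2, fun k y => ?_⟩
    have h1 := H (k + 1) k 0 y (by omega) (by omega)
    have h2 := pw7 k
    simp only [A]
    rw [hGs, abs_of_nonneg (by positivity)]
    calc _ ≤ (Real.exp 2 * ((k : ℝ) + 2) ^ 2 * Real.exp (-(1 / 4) * ((k : ℝ) + 2))) *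
          (C * (((k + 1 : ℕ) : ℝ) + 1) ^ (2 * j) * (3 / 4) ^ 0) := by gcongr
      _ = _ := by
        push_cast
        rw [show (k : ℝ) + 1 + 1 = k + 2 by ring, pow_add]
        ring)
  obtain ⟨hB1, hB2⟩ := pw4 B hBc (by
    intro j
    obtain ⟨C, hC, H⟩ := hGb j
    refine ⟨C * Real.exp 2, fun k y => ?_⟩
    have h2 := pw6 k
    simp only [B]
    rw [iteratedFDeriv_sum (f := fun i => (((((k + 1)! : ℝ) / ((i - 1)! : ℝ)) /
        ((k : ℝ) + 1) ^ (k + 1 - i)) • pG phi psi (k + 1) (k + 1 - i) i))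
        (fun i _ => (contDiff_const.smul (hG _ _ _)).of_le (hjle j)),
      Finset.sum_apply]
    refine (norm_sum_le _ _).trans ?_
    calc _ ≤ ∑ i ∈ Finset.Icc 1 (k + 1),
            (C * (((k + 1 : ℕ) : ℝ) + 1) ^ (2 * j)) *
            ((((k + 1)! : ℝ) / ((i - 1)! : ℝ)) / ((k : ℝ) + 1) ^ (k + 1 - i) * (3 / 4) ^ i) := by
          refine Finset.sum_le_sum fun i hi => ?_
          have h1 := H (k + 1) (k + 1 - i) i y (by omega) (Finset.mem_Icc.1 hi).2
          rw [hGs, abs_of_nonneg (by positivity)]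
          refine (mul_le_mul_of_nonneg_left h1 (by positivity)).trans (le_of_eq ?_)
          ring
      _ ≤ (C * (((k + 1 : ℕ) : ℝ) + 1) ^ (2 * j)) *
          (Real.exp 2 * ((k : ℝ) + 2) ^ 2 * Real.exp (-(1 / 4) * ((k : ℝ) + 2))) := by
          rw [← Finset.mul_sum]
          gcongr
      _ = _ := by
        push_cast
        rw [show (k : ℝ) + 1 + 1 = k + 2 by ring, pow_add]
        ring)
  have key : ∀ y : ℝ × ℝ × ℝ, |y.2.1| < 1 / 2 → ∀ k, piTerm phi k y = y.2.2 * A k y - B k y := by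
    intro y hy k
    simp only [piTerm, A, B, pG, Pi.smul_apply, smul_eq_mul, hpsi1 _ hy]
    push_cast
    rw [mul_sub, Finset.mul_sum]
    congr 1
    · rw [mul_pow]
      field_simp
    · refine Finset.sum_congr rfl fun i hi => ?_
      rw [mul_pow]
      field_simp
  have hS : ∀ y : ℝ × ℝ × ℝ, |y.2.1| < 1 / 2 →
      ∑' k, piTerm phi k y = y.2.2 * ∑' k, A k y - ∑' k, B k y := by
    intro y hy
    rw [tsum_congr (key y hy), ((hA2 y).mul_left _).tsum_sub (hB2 y), tsum_mul_left]
  have hsm : ContDiffOn ℝ (⊤ : ℕ∞) (fun y => ∑' k : ℕ, piTerm phi k y)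
      {y : ℝ × ℝ × ℝ | |y.2.1| < 1 / 2} := by
    have : ContDiff ℝ (⊤ : ℕ∞) (fun y : ℝ × ℝ × ℝ => y.2.2 * ∑' k, A k y - ∑' k, B k y) :=
      (contDiff_snd.snd.mul hA1).sub hB1
    exact this.contDiffOn.congr fun y hy => hS y hy
  refine ⟨fun y hy => ?_, hsm, ?_⟩
  · simp only [key y hy]
    exact ((hA2 y).mul_left _).sub (hB2 y)
  · have hm : ContDiff ℝ (⊤ : ℕ∞)
        (fun z : ℝ × ℝ × ℝ × ℝ => ((z.1, z.2.1, z.2.2.1) : ℝ × ℝ × ℝ)) := by fun_prop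
    have hl : ContDiff ℝ (⊤ : ℕ∞) (fun z : ℝ × ℝ × ℝ × ℝ => z.2.2.2) := by fun_prop
    exact hl.contDiffOn.sub (hsm.comp hm.contDiffOn fun z hz => hz)
end
end

section
/- Let φ : ℝ → ℝ be a C^∞ function such that φ = 1 on [−1/2, 1/2] and φ = 0 outside [−1, 1]. Define τ₄ : ℝ × (−1/2, 1/2) → ℝ by τ₄(x₁,x₂) = Σ_{k=1}^{∞} (1 − φ(k·x₁)) · Σ_{i=0}^{∞} (k!/(k+i)!) · x₂^{k+i+1} / x₁^{i+1} for x₁ ≠ 0, and τ₄(0, x₂) = 0. Then the double series converges for every x₁ ≠ 0 and |x₂| < 1/2, and τ₄ is C^∞ on ℝ × (−1/2, 1/2). -/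
open scoped Nat

noncomputable section

/-- The summand of index `k+1` (so `k+1` runs over `1, 2, …`) of the outer series
defining `τ₄`. -/
def tauTerm (phi : ℝ → ℝ) (k : ℕ) (x : ℝ × ℝ) : ℝ :=
  (1 - phi (((k : ℝ) + 1) * x.1)) *
    ∑' i : ℕ, (((k + 1)! : ℝ) / ((k + 1 + i)! : ℝ)) * x.2 ^ (k + 1 + i + 1) / x.1 ^ (i + 1)

/-- `τ₄(x₁,x₂) = Σ_{k=1}^∞ (1 − phi(k x₁)) Σ_{i=0}^∞ (k!/(k+i)!) x₂^{k+i+1}/x₁^{i+1}` for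
`x₁ ≠ 0`, and `τ₄(0,x₂) = 0`. -/
def tau4 (phi : ℝ → ℝ) (x : ℝ × ℝ) : ℝ :=
  if x.1 = 0 then 0 else ∑' k : ℕ, tauTerm phi k x

/-- cutoffs -/
def GoodChi (χ : ℝ → ℝ) : Prop :=
  ContDiff ℝ (⊤ : ℕ∞) χ ∧ (∀ t, |t| < 1 / 2 → χ t = 0) ∧ ∃ c, ∀ t, 1 < |t| → χ t = c

/-- coefficients of polynomial growth -/
def GoodCoef (a : ℕ × ℕ → ℝ) : Prop :=
  ∃ C : ℝ, 0 ≤ C ∧ ∃ r q : ℕ, ∀ p, |a p| ≤ C * ((p.1 : ℝ) + 1) ^ r * ((p.2 : ℝ) + 1) ^ q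

/-- general term -/
def GT (χ : ℝ → ℝ) (a : ℕ × ℕ → ℝ) (l m : ℕ) (p : ℕ × ℕ) (x : ℝ × ℝ) : ℝ :=
  (a p * (((p.1 + 1)! : ℝ) / ((p.1 + 1 + p.2)! : ℝ))) *
    ((χ (((p.1 : ℝ) + 1) * x.1) / x.1 ^ (p.2 + 1 + l)) * x.2 ^ (p.1 + 1 + p.2 + 1 - m))

lemma GoodChi.deriv {χ : ℝ → ℝ} (h : GoodChi χ) : GoodChi (deriv χ) := by
  obtain ⟨h1, h2, c, h3⟩ := h
  refine ⟨?_, ?_, 0, ?_⟩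
  · exact (contDiff_infty_iff_deriv.1 h1).2
  · intro t ht
    have : χ =ᶠ[nhds t] fun _ => 0 := by
      filter_upwards [(isOpen_lt continuous_abs continuous_const).mem_nhds ht] with s hs
      exact h2 s hs
    rw [this.deriv_eq]; simp
  · intro t ht
    have : χ =ᶠ[nhds t] fun _ => c := by
      filter_upwards [(isOpen_lt continuous_const continuous_abs).mem_nhds ht] with s hs
      exact h3 s hs
    rw [this.deriv_eq]; simp

lemma GoodChi.bound {χ : ℝ → ℝ} (h : GoodChi χ) : ∃ C, 0 ≤ C ∧ ∀ t, |χ t| ≤ C := by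
  obtain ⟨h1, h2, c, h3⟩ := h
  obtain ⟨C, hC⟩ := (isCompact_Icc (a := (-1 : ℝ)) (b := 1)).exists_bound_of_continuousOn
    h1.continuous.continuousOn
  refine ⟨max |c| C, le_max_of_le_left (abs_nonneg _), fun t => ?_⟩
  by_cases ht : 1 < |t|
  · rw [h3 t ht]; exact le_max_left _ _
  · exact le_max_of_le_right (hC t (abs_le.1 (not_lt.1 ht)))

lemma GT_bound {χ : ℝ → ℝ} {a : ℕ × ℕ → ℝ} (hχ : GoodChi χ) (ha : GoodCoef a) (l m : ℕ)
    {ρ : ℝ} (h0 : 0 < ρ) (h1 : ρ < 1 / 2) :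
    ∃ u : ℕ × ℕ → ℝ, Summable u ∧ ∀ p x, |x.2| < ρ → |GT χ a l m p x| ≤ u p := by
  obtain ⟨C, hC0, hC⟩ := hχ.bound
  obtain ⟨A, hA0, r, q, hA⟩ := ha
  refine ⟨fun p => (A * C * 2 ^ l * ρ⁻¹ ^ m) * ((((p.1 + 1 : ℕ) : ℝ) ^ (r + l + 1) * ρ ^ (p.1 + 1)) *
    (((p.2 + 1 : ℕ) : ℝ) ^ q * (2 * ρ) ^ (p.2 + 1))), ?_, ?_⟩
  · apply Summable.mul_left
    have s1 : Summable (fun k : ℕ => ((k + 1 : ℕ) : ℝ) ^ (r + l + 1) * ρ ^ (k + 1)) :=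
      (summable_nat_add_iff (f := fun k : ℕ => (k : ℝ) ^ (r + l + 1) * ρ ^ k) 1).2
        (summable_pow_mul_geometric_of_norm_lt_one _ (by
          rw [Real.norm_of_nonneg h0.le]; linarith))
    have s2 : Summable (fun k : ℕ => ((k + 1 : ℕ) : ℝ) ^ q * (2 * ρ) ^ (k + 1)) :=
      (summable_nat_add_iff (f := fun k : ℕ => (k : ℝ) ^ q * (2 * ρ) ^ k) 1).2
        (summable_pow_mul_geometric_of_norm_lt_one _ (by
          rw [Real.norm_of_nonneg (by positivity)]; linarith))
    exact s1.mul_of_nonneg s2 (fun k => by positivity) (fun k => by positivity)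
  · rintro ⟨k, i⟩ ⟨x, y⟩ hy
    simp only [GT] at hy ⊢
    push_cast
    set K : ℝ := (k : ℝ) + 1 with hK
    have hKpos : 0 < K := by positivity
    by_cases ht : |K * x| < 1 / 2
    · rw [hχ.2.1 _ ht]
      simp only [zero_div, zero_mul, mul_zero, abs_zero]
      positivity
    · push Not at ht
      have hxpos : 1 / (2 * K) ≤ |x| := by
        rw [abs_mul, abs_of_pos hKpos] at ht
        rw [div_le_iff₀ (by positivity)]; linarith
      have hxp : 0 < |x| := lt_of_lt_of_le (by positivity) hxpos
      have e1 : |χ (K * x) / x ^ (i + 1 + l)| ≤ C * (2 * K) ^ (i + 1 + l) := by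
        rw [abs_div, abs_pow, div_eq_mul_inv, ← inv_pow]
        have : |x|⁻¹ ≤ 2 * K := by
          rw [inv_le_comm₀ hxp (by positivity)]
          simpa using hxpos
        gcongr
        exact hC _
      have e2 : |y ^ (k + 1 + i + 1 - m)| ≤ ρ⁻¹ ^ m * (ρ ^ (k + 1) * ρ ^ (i + 1)) := by
        rw [abs_pow]
        calc |y| ^ (k + 1 + i + 1 - m) ≤ ρ ^ (k + 1 + i + 1 - m) := by gcongr
          _ = ρ⁻¹ ^ m * (ρ ^ (k + 1 + i + 1 - m) * ρ ^ m) := by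
            rw [inv_pow]; field_simp
          _ ≤ ρ⁻¹ ^ m * (ρ ^ (k + 1) * ρ ^ (i + 1)) := by
            rw [← pow_add, ← pow_add]
            apply mul_le_mul_of_nonneg_left _ (by positivity)
            apply pow_le_pow_of_le_one h0.le (by linarith)
            omega
      have e3 : (((k + 1)! : ℝ) / ((k + 1 + i)! : ℝ)) * K ^ i ≤ 1 := by
        rw [div_mul_eq_mul_div, div_le_one (by positivity)]
        have := @Nat.factorial_mul_pow_le_factorial (k + 1) i
        calc ((k + 1)! : ℝ) * K ^ i ≤ ((k + 1)! : ℝ) * ((k + 1 : ℕ) + 1 : ℝ) ^ i := by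
              gcongr; rw [hK]; push_cast; linarith
          _ ≤ _ := by exact_mod_cast this
      have e4 := hA (k, i)
      simp only at e4
      rw [abs_mul, abs_mul, abs_mul, abs_of_nonneg (show 0 ≤ ((k + 1)! : ℝ) / ((k + 1 + i)! : ℝ) by positivity)]
      set c := ((k + 1)! : ℝ) / ((k + 1 + i)! : ℝ) with hc
      have hc0 : 0 ≤ c := by positivity
      calc |a (k, i)| * c * (|χ (K * x) / x ^ (i + 1 + l)| * |y ^ (k + 1 + i + 1 - m)|)
          ≤ (A * K ^ r * ((i : ℝ) + 1) ^ q) * c * ((C * (2 * K) ^ (i + 1 + l)) *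
            (ρ⁻¹ ^ m * (ρ ^ (k + 1) * ρ ^ (i + 1)))) := by gcongr
        _ = (c * K ^ i) * (A * C * 2 ^ l * ρ⁻¹ ^ m * (K ^ (r + l + 1) * ρ ^ (k + 1) * (((i : ℝ) + 1) ^ q * (2 * ρ) ^ (i + 1)))) := by
          simp only [mul_pow, pow_add]; ring
        _ ≤ 1 * _ := by gcongr
        _ = _ := one_mul _

lemma hasDerivAt_H {χ : ℝ → ℝ} (hχ : GoodChi χ) {K : ℝ} (j : ℕ) (t : ℝ) :
    HasDerivAt (fun t => χ (K * t) / t ^ j)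
      (K * deriv χ (K * t) / t ^ j - j * χ (K * t) / t ^ (j + 1)) t := by
  by_cases h : t = 0
  · subst h
    have : (fun t => χ (K * t) / t ^ j) =ᶠ[nhds 0] fun _ => 0 := by
      have : ∀ᶠ t in nhds (0 : ℝ), |K * t| < 1 / 2 :=
        (isOpen_lt (by fun_prop) continuous_const).mem_nhds (by simp)
      filter_upwards [this] with s hs
      rw [hχ.2.1 _ hs, zero_div]
    have e := (hasDerivAt_const (0 : ℝ) (0 : ℝ)).congr_of_eventuallyEq this
    refine e.congr_deriv ?_
    rw [hχ.2.1 _ (by simp), hχ.deriv.2.1 _ (by simp)]; simp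
  · have d1 : HasDerivAt χ (deriv χ (K * t)) (K * t) :=
      ((hχ.1.differentiable (by simp)) _).hasDerivAt
    have d2 : HasDerivAt (fun t => χ (K * t)) (deriv χ (K * t) * (K * 1)) t :=
      d1.comp t ((hasDerivAt_id t).const_mul K)
    have d3 := d2.div (hasDerivAt_pow j t) (pow_ne_zero _ h)
    refine HasDerivAt.congr_deriv d3 ?_
    rcases j with _ | j
    · simp; ring
    · simp only [Nat.add_sub_cancel]; field_simp; ring

lemma GT_hasFDerivAt {χ : ℝ → ℝ} {a : ℕ × ℕ → ℝ} (hχ : GoodChi χ) (l m : ℕ)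
    (p : ℕ × ℕ) (x : ℝ × ℝ) :
    HasFDerivAt (GT χ a l m p)
      ((GT (deriv χ) (fun p => a p * ((p.1 : ℝ) + 1)) l m p x -
        GT χ (fun p => a p * ((p.2 + 1 + l : ℕ) : ℝ)) (l + 1) m p x) • ContinuousLinearMap.fst ℝ ℝ ℝ +
       GT χ (fun p => a p * ((p.1 + 1 + p.2 + 1 - m : ℕ) : ℝ)) l (m + 1) p x •
        ContinuousLinearMap.snd ℝ ℝ ℝ) x := by
  have d1 := (hasDerivAt_H hχ (K := (p.1 : ℝ) + 1) (p.2 + 1 + l) x.1).comp_hasFDerivAt x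
    (hasFDerivAt_fst (𝕜 := ℝ) (p := x))
  have d2 := (hasDerivAt_pow (p.1 + 1 + p.2 + 1 - m) x.2).comp_hasFDerivAt x
    (hasFDerivAt_snd (𝕜 := ℝ) (p := x))
  have d3 := (d1.mul d2).const_mul (a p * (((p.1 + 1)! : ℝ) / ((p.1 + 1 + p.2)! : ℝ)))
  refine HasFDerivAt.congr_fderiv d3 ?_
  ext
  · simp [GT, Nat.sub_sub]; ring
  · simp [GT, Nat.sub_sub]; ring

lemma GoodCoef.mul {a b : ℕ × ℕ → ℝ} (ha : GoodCoef a) (hb : GoodCoef b) :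
    GoodCoef (fun p => a p * b p) := by
  obtain ⟨A, hA0, r, q, hA⟩ := ha
  obtain ⟨B, hB0, r', q', hB⟩ := hb
  refine ⟨A * B, by positivity, r + r', q + q', fun p => ?_⟩
  rw [abs_mul]
  calc _ ≤ _ := mul_le_mul (hA p) (hB p) (abs_nonneg _) (by positivity)
    _ = _ := by ring

lemma goodCoef1 : GoodCoef (fun p => (p.1 : ℝ) + 1) :=
  ⟨1, by norm_num, 1, 0, fun p => by rw [abs_of_nonneg (by positivity)]; simp⟩

lemma goodCoef2 (l : ℕ) : GoodCoef (fun p => ((p.2 + 1 + l : ℕ) : ℝ)) :=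
  ⟨l + 1, by positivity, 0, 1, fun p => by
    rw [abs_of_nonneg (by positivity)]; push_cast
    have : (0 : ℝ) ≤ l * p.2 := by positivity
    nlinarith⟩

lemma goodCoef3 (m : ℕ) : GoodCoef (fun p => ((p.1 + 1 + p.2 + 1 - m : ℕ) : ℝ)) :=
  ⟨2, by positivity, 1, 1, fun p => by
    rw [abs_of_nonneg (by positivity)]
    have h : ((p.1 + 1 + p.2 + 1 - m : ℕ) : ℝ) ≤ ((p.1 + 1 + p.2 + 1 : ℕ) : ℝ) := by
      exact_mod_cast Nat.sub_le _ _
    push_cast at h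
    have : (0 : ℝ) ≤ p.1 * p.2 := by positivity
    have : (0 : ℝ) ≤ p.1 := by positivity
    have : (0 : ℝ) ≤ p.2 := by positivity
    nlinarith⟩

lemma GT_summable {χ : ℝ → ℝ} {a : ℕ × ℕ → ℝ} (hχ : GoodChi χ) (ha : GoodCoef a) (l m : ℕ)
    {x : ℝ × ℝ} (hx : |x.2| < 1 / 2) : Summable (fun p => GT χ a l m p x) := by
  obtain ⟨ρ, h1, h2⟩ := exists_between hx
  obtain ⟨u, hu, hb⟩ := GT_bound hχ ha l m (lt_of_le_of_lt (abs_nonneg _) h1) h2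
  exact Summable.of_norm_bounded hu (fun p => hb p x h1)

lemma tsum_hasFDerivAt {χ : ℝ → ℝ} {a : ℕ × ℕ → ℝ} (hχ : GoodChi χ) (ha : GoodCoef a) (l m : ℕ)
    {x : ℝ × ℝ} (hx : |x.2| < 1 / 2) :
    HasFDerivAt (fun x => ∑' p, GT χ a l m p x)
      ((∑' p, GT (deriv χ) (fun p => a p * ((p.1 : ℝ) + 1)) l m p x -
        ∑' p, GT χ (fun p => a p * ((p.2 + 1 + l : ℕ) : ℝ)) (l + 1) m p x) •
          ContinuousLinearMap.fst ℝ ℝ ℝ +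
       (∑' p, GT χ (fun p => a p * ((p.1 + 1 + p.2 + 1 - m : ℕ) : ℝ)) l (m + 1) p x) •
        ContinuousLinearMap.snd ℝ ℝ ℝ) x := by
  obtain ⟨ρ, h1, h2⟩ := exists_between hx
  have h0 := lt_of_le_of_lt (abs_nonneg _) h1
  have a1 := ha.mul goodCoef1
  have a2 := ha.mul (goodCoef2 l)
  have a3 := ha.mul (goodCoef3 m)
  obtain ⟨u1, hu1, hb1⟩ := GT_bound hχ.deriv a1 l m h0 h2
  obtain ⟨u2, hu2, hb2⟩ := GT_bound hχ a2 (l + 1) m h0 h2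
  obtain ⟨u3, hu3, hb3⟩ := GT_bound hχ a3 l (m + 1) h0 h2
  have hopen : IsOpen {x : ℝ × ℝ | |x.2| < ρ} :=
    isOpen_lt (by fun_prop) continuous_const
  have hconn : IsPreconnected {x : ℝ × ℝ | |x.2| < ρ} := by
    have : {x : ℝ × ℝ | |x.2| < ρ} = Set.univ ×ˢ Set.Ioo (-ρ) ρ := by
      ext y; simp [abs_lt]
    rw [this]
    exact isPreconnected_univ.prod isPreconnected_Ioo
  have key := hasFDerivAt_tsum_of_isPreconnected ((hu1.add hu2).add hu3) hopen hconn
    (fun p y _ => GT_hasFDerivAt (a := a) hχ l m p y) (fun p y hy => ?_) h1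
    (GT_summable hχ ha l m hx) h1
  · refine key.congr_fderiv ?_
    have s1 := GT_summable hχ.deriv a1 l m hx
    have s2 := GT_summable hχ a2 (l + 1) m hx
    have s3 := GT_summable hχ a3 l (m + 1) hx
    exact ((((s1.hasSum.sub s2.hasSum).smul_const _).add (s3.hasSum.smul_const _)).tsum_eq)
  · refine (norm_add_le _ _).trans ?_
    rw [norm_smul, norm_smul]
    have b1 := hb1 p y hy
    have b2 := hb2 p y hy
    have b3 := hb3 p y hy
    have n1 := ContinuousLinearMap.norm_fst_le ℝ ℝ ℝ
    have n2 := ContinuousLinearMap.norm_snd_le ℝ ℝ ℝ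
    refine add_le_add ((mul_le_of_le_one_right (norm_nonneg _) n1).trans ?_)
      ((mul_le_of_le_one_right (norm_nonneg _) n2).trans b3)
    exact (norm_sub_le _ _).trans (add_le_add b1 b2)

lemma tsum_contDiffOn (n : ℕ) : ∀ {χ : ℝ → ℝ} {a : ℕ × ℕ → ℝ} (_ : GoodChi χ) (_ : GoodCoef a)
    (l m : ℕ), ContDiffOn ℝ n (fun x => ∑' p, GT χ a l m p x) {x : ℝ × ℝ | |x.2| < 1 / 2} := by
  have hopen : IsOpen {x : ℝ × ℝ | |x.2| < 1 / 2} :=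
    isOpen_lt (by fun_prop) continuous_const
  induction n with
  | zero =>
    intro χ a hχ ha l m
    rw [Nat.cast_zero, contDiffOn_zero]
    exact fun x hx => (tsum_hasFDerivAt hχ ha l m hx).continuousAt.continuousWithinAt
  | succ n ih =>
    intro χ a hχ ha l m
    rw [Nat.cast_succ, contDiffOn_succ_iff_hasFDerivWithinAt_of_uniqueDiffOn hopen.uniqueDiffOn]
    refine ⟨by simp, _, ?_, fun x hx => (tsum_hasFDerivAt hχ ha l m hx).hasFDerivWithinAt⟩
    exact (((ih hχ.deriv (ha.mul goodCoef1) l m).sub (ih hχ (ha.mul (goodCoef2 l)) (l + 1) m)).smul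
      contDiffOn_const).add ((ih hχ (ha.mul (goodCoef3 m)) l (m + 1)).smul contDiffOn_const)

/-- Let `phi` be `C^∞`, `phi = 1` on `[−1/2, 1/2]` and `phi = 0` outside `[−1, 1]`.  Then the
double series defining `τ₄` converges for `x₁ ≠ 0`, `|x₂| < 1/2`, and `τ₄` is `C^∞` on
`ℝ × (−1/2, 1/2)`. -/
theorem tau4_smooth (phi : ℝ → ℝ) (hphi : ContDiff ℝ (⊤ : ℕ∞) phi)
    (hphi1 : ∀ t ∈ Set.Icc (-(1 / 2) : ℝ) (1 / 2), phi t = 1)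
    (hphi0 : ∀ t : ℝ, t ∉ Set.Icc (-1 : ℝ) 1 → phi t = 0) :
    (∀ x : ℝ × ℝ, x.1 ≠ 0 → |x.2| < 1 / 2 →
      (∀ k : ℕ, Summable (fun i : ℕ =>
        (((k + 1)! : ℝ) / ((k + 1 + i)! : ℝ)) * x.2 ^ (k + 1 + i + 1) / x.1 ^ (i + 1))) ∧
      Summable (fun k : ℕ => tauTerm phi k x)) ∧
    ContDiffOn ℝ (⊤ : ℕ∞) (tau4 phi) {x : ℝ × ℝ | |x.2| < 1 / 2} := by
  have hχ : GoodChi (fun t => 1 - phi t) := by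
    refine ⟨contDiff_const.sub hphi, fun t ht => ?_, 1, fun t ht => ?_⟩
    · have := abs_lt.1 ht
      show 1 - phi t = 0
      rw [hphi1 t ⟨this.1.le, this.2.le⟩, sub_self]
    · show 1 - phi t = 1
      rw [hphi0 t (fun h => not_lt.2 (abs_le.2 h) ht), sub_zero]
  have ha : GoodCoef (fun _ => 1) := ⟨1, by norm_num, 0, 0, fun p => by simp⟩
  have inner : ∀ x : ℝ × ℝ, ∀ k, ∑' i, GT (fun t => 1 - phi t) (fun _ => 1) 0 0 (k, i) x
      = tauTerm phi k x := by
    intro x k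
    rw [tauTerm, ← tsum_mul_left]
    congr 1; ext i
    simp only [GT, Nat.sub_zero, add_zero]; ring
  refine ⟨fun x hx1 hx2 => ⟨fun k => ?_, ?_⟩, ?_⟩
  · have hs := (Real.summable_pow_div_factorial (|x.2| / |x.1|)).mul_left
      (((k + 1)! : ℝ) * |x.2| ^ (k + 2) / |x.1|)
    refine Summable.of_norm_bounded hs (fun i => ?_)
    have hxp : 0 < |x.1| := abs_pos.2 hx1
    rw [Real.norm_eq_abs, abs_div, abs_mul, abs_pow, abs_pow, abs_of_nonneg (show
      0 ≤ ((k + 1)! : ℝ) / ((k + 1 + i)! : ℝ) by positivity)]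
    have hf : ((i)! : ℝ) ≤ ((k + 1 + i)! : ℝ) := by
      exact_mod_cast Nat.factorial_le (by omega)
    calc _ ≤ ((k + 1)! : ℝ) / (i ! : ℝ) * |x.2| ^ (k + 1 + i + 1) / |x.1| ^ (i + 1) := by gcongr
      _ = _ := by rw [div_pow]; field_simp; ring
  · have := (GT_summable hχ ha 0 0 hx2).prod
    simpa only [inner] using this
  · refine ContDiffOn.congr (f := fun x => ∑' p, GT (fun t => 1 - phi t) (fun _ => 1) 0 0 p x)
      (contDiffOn_infty.2 fun n => tsum_contDiffOn n hχ ha 0 0) (fun x hx => ?_)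
    rw [(GT_summable hχ ha 0 0 hx).tsum_prod]
    simp only [inner]
    rw [tau4]
    split_ifs with h
    · have : ∀ k, tauTerm phi k x = 0 := fun k => by
        rw [tauTerm, h, mul_zero, hphi1 0 (by norm_num)]; simp
      simp [this]
    · rfl
end
end
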